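/- arXiv:1707.08997 — 3 statements merged into one kernel-verified Lean document; each statement's English description precedes it below -/
import Mathlib

section
/- Let A be a unital ring that is finitely generated and torsion-free as a ℤ-module (i.e., A is an order in the finite-dimensional ℚ-algebra A ⊗ ℚ). Then there are only finitely many isomorphism classes of cyclic projective right A-modules, i.e., of right A-modules that are projective and generated by one element. -/
/-!
Modulo its Jacobson radical, the Artinian algebra `ℚ ⊗ A` is semisimple, so `A` has a nilpotent
two-sided ideal `J` for which `A ⧸ J` is an order in a semisimple `ℚ`-algebra. A projective
`A`-module `M` is determined up to isomorphism by `M ⧸ J M`: isomorphisms lift by projectivity, and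
the lifts are surjective by Nakayama. As `M ⧸ J M` is a lattice over `A ⧸ J` whose rank is bounded
by the rank of `A` times the number of generators of `M`, the Jordan–Zassenhaus theorem applies.

For that theorem, over an order `R` in a semisimple algebra, a lattice is an extension of a
rationally simple lattice by one of smaller rank, and each extension of `X` by `Y` lies between a
copy of `Y × X` and a fixed integral multiple of it. A rationally simple lattice receives a nonzero
map from one of finitely many left ideals `L`, and by a pigeonhole argument in the domain `End L`
it likewise lies, up to isomorphism, between `L` and a fixed integral fraction of `L`.
-/

open CategoryTheory Module

universe u v w

section IsoClasses

variable {R : Type u} [Ring R]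

/-- The set of isomorphism classes of the `R`-modules satisfying `P`. -/
def isoClasses (P : ModuleCat.{v} R → Prop) :
    Set (Quotient (isIsomorphicSetoid (ModuleCat.{v} R))) :=
  Quotient.mk _ '' {M | P M}

theorem isoClasses_mono {P P' : ModuleCat.{v} R → Prop} (h : ∀ M, P M → P' M) :
    isoClasses P ⊆ isoClasses P' :=
  Set.image_mono h

theorem finite_isoClasses_of_finite_invariant {P : ModuleCat.{v} R → Prop} {ι : Type*} [Finite ι]
    (Q : ι → ModuleCat.{v} R → Prop) (exists_inv : ∀ M, P M → ∃ i, Q i M)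
    (iso_of_inv : ∀ i M M', P M → P M' → Q i M → Q i M' → Nonempty (M ≃ₗ[R] M')) :
    (isoClasses P).Finite := by
  refine (Set.finite_iUnion fun i ↦
    Set.Subsingleton.finite (s := isoClasses fun M ↦ P M ∧ Q i M) ?_).subset ?_
  · rintro _ ⟨M, ⟨hM, hiM⟩, rfl⟩ _ ⟨M', ⟨hM', hiM'⟩, rfl⟩
    obtain ⟨e⟩ := iso_of_inv i M M' hM hM' hiM hiM'
    exact Quotient.sound ⟨e.toModuleIso⟩
  · rintro _ ⟨M, hM, rfl⟩
    obtain ⟨i, hi⟩ := exists_inv M hM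
    exact Set.mem_iUnion.2 ⟨i, M, ⟨hM, hi⟩, rfl⟩

theorem exists_finite_representatives {P : ModuleCat.{v} R → Prop} (h : (isoClasses P).Finite) :
    ∃ S : Set (ModuleCat.{v} R), S.Finite ∧ (∀ N ∈ S, P N) ∧
      ∀ M, P M → ∃ N ∈ S, Nonempty (M ≅ N) := by
  obtain ⟨S, hSP, hS, hcover⟩ :=
    Set.exists_subset_image_finite_and.1 ⟨_, subset_rfl, h, subset_rfl⟩
  refine ⟨S, hS, hSP, fun M hM ↦ ?_⟩
  obtain ⟨N, hN, hNM⟩ := hcover ⟨M, hM, rfl⟩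
  exact ⟨N, hN, Quotient.exact hNM.symm⟩

end IsoClasses

section IntegralLattices

variable {R : Type u} [Ring R] {M : Type v} [AddCommGroup M] [Module R M]
  {N : Type w} [AddCommGroup N] [Module R N]

theorem finite_int_of_injective [Module.Finite ℤ N] (f : M →ₗ[R] N)
    (hf : Function.Injective f) : Module.Finite ℤ M :=
  .of_injective (f.restrictScalars ℤ) hf

theorem isTorsionFree_int_of_injective [IsTorsionFree ℤ N] (f : M →ₗ[R] N)
    (hf : Function.Injective f) : IsTorsionFree ℤ M :=
  hf.moduleIsTorsionFree f fun n x ↦ map_zsmul f n x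

instance (K : Submodule R M) [Module.Finite ℤ M] : Module.Finite ℤ K :=
  finite_int_of_injective K.subtype K.injective_subtype

instance (K : Submodule R M) [IsTorsionFree ℤ M] : IsTorsionFree ℤ K :=
  isTorsionFree_int_of_injective K.subtype K.injective_subtype

instance [Module.Finite ℤ M] [Module.Finite ℤ N] : Module.Finite ℤ (M →ₗ[R] N) :=
  .of_injective (LinearMap.restrictScalarsₗ ℤ R M N ℤ) (LinearMap.restrictScalars_injective ℤ)

theorem exists_int_smul_mem_range {M N : Type*} [AddCommGroup M] [AddCommGroup N]
    [Module.Finite ℤ M] [IsTorsionFree ℤ M] (f : N →ₗ[ℤ] M) (hf : Function.Injective f)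
    (hrank : finrank ℤ M ≤ finrank ℤ N) : ∃ m : ℤ, m ≠ 0 ∧ ∀ x, m • x ∈ LinearMap.range f := by
  have : Finite (M ⧸ LinearMap.range f) := Submodule.finiteQuotientOfFreeOfRankEq _ <|
    (Submodule.finrank_le _).antisymm (by rwa [LinearMap.finrank_range_of_inj hf])
  refine ⟨Nat.card (M ⧸ LinearMap.range f), mod_cast Nat.card_pos.ne', fun x ↦ ?_⟩
  rw [natCast_zsmul]
  exact (LinearMap.range f).toAddSubgroup.nsmul_index_mem x

theorem finite_quotient_smul_range [Module.Finite ℤ M] {c : ℤ} (hc : c ≠ 0) :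
    Finite (M ⧸ LinearMap.range (c • LinearMap.id : M →ₗ[R] M)) := by
  refine Module.finite_of_fg_torsion _ ?_
  intro x
  obtain ⟨x, rfl⟩ := Submodule.Quotient.mk_surjective _ x
  exact ⟨⟨c, mem_nonZeroDivisors_of_ne_zero hc⟩, (Submodule.Quotient.mk_eq_zero _).2 ⟨x, rfl⟩⟩

theorem exists_injective_comp_eq_smul [IsTorsionFree ℤ M] {f : N →ₗ[R] M}
    (hf : Function.Injective f) {c : ℤ} (hc : c ≠ 0) (hcf : ∀ x, c • x ∈ LinearMap.range f) :
    ∃ g : M →ₗ[R] N, Function.Injective g ∧ ∀ x, f (g x) = c • x := by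
  let g : M →ₗ[R] N := (LinearEquiv.ofInjective f hf).symm.toLinearMap ∘ₗ
    (c • LinearMap.id : M →ₗ[R] M).codRestrict (LinearMap.range f) hcf
  have hfg x : f (g x) = c • x :=
    congrArg Subtype.val ((LinearEquiv.ofInjective f hf).apply_symm_apply ⟨c • x, hcf x⟩)
  refine ⟨g, (injective_iff_map_eq_zero g).2 fun x hx ↦ ?_, hfg⟩
  have hcx : c • x = 0 := by rw [← hfg, hx, map_zero]
  exact (smul_eq_zero.1 hcx).resolve_left hc

theorem finite_isoClasses_of_smul_mem_range (L : Type w) [AddCommGroup L] [Module R L]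
    [Module.Finite ℤ L] {c : ℤ} (hc : c ≠ 0) :
    (isoClasses fun M : ModuleCat.{v} R ↦ IsTorsionFree ℤ M ∧
      ∃ f : L →ₗ[R] M, Function.Injective f ∧ ∀ x : M, c • x ∈ LinearMap.range f).Finite := by
  let cL : Submodule R L := LinearMap.range (c • LinearMap.id)
  have : Finite (L ⧸ cL) := finite_quotient_smul_range hc
  have : Finite (Set.Ici cL) := .of_equiv _ cL.comapMkQRelIso.toEquiv
  refine finite_isoClasses_of_finite_invariant
    (fun (K : Set.Ici cL) M ↦ Nonempty (M ≃ₗ[R] K.1)) ?_ fun _ _ _ _ _ ⟨e⟩ ⟨e'⟩ ↦ ⟨e.trans e'.symm⟩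
  rintro M ⟨_, f, hf, hcf⟩
  obtain ⟨g, hg, hfg⟩ := exists_injective_comp_eq_smul hf hc hcf
  refine ⟨⟨LinearMap.range g, ?_⟩, ⟨LinearEquiv.ofInjective g hg⟩⟩
  rintro _ ⟨y, rfl⟩
  exact ⟨f y, hf (by simp [hfg])⟩

end IntegralLattices

section RationallySimple

variable {R : Type u} [Ring R] {M : Type v} [AddCommGroup M] [Module R M]
  {N : Type w} [AddCommGroup N] [Module R N]

variable (R M) in
/-- A nonzero module is *rationally simple* if each of its nonzero submodules contains a nonzero
integral multiple of it. For a torsion-free module `M` this says that `ℚ ⊗ M` is a simple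
`ℚ ⊗ R`-module. -/
structure IsRationallySimple : Prop where
  nontrivial : Nontrivial M
  exists_smul_mem : ∀ K : Submodule R M, K ≠ ⊥ → ∃ m : ℤ, m ≠ 0 ∧ ∀ x, m • x ∈ K

theorem exists_isRationallySimple_le [Module.Finite ℤ M] [IsTorsionFree ℤ M] {K : Submodule R M}
    (hK : K ≠ ⊥) : ∃ L ≤ K, IsRationallySimple R L := by
  obtain ⟨L, ⟨hLK, hL⟩, hmin⟩ := exists_minimalFor_of_wellFoundedLT
    (fun L : Submodule R M ↦ L ≤ K ∧ L ≠ ⊥) (fun L ↦ finrank ℤ L) ⟨K, le_rfl, hK⟩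
  refine ⟨L, hLK, Submodule.nontrivial_iff_ne_bot.2 hL, fun Z hZ ↦ ?_⟩
  have hrank : finrank ℤ L ≤ finrank ℤ Z := by
    let e := Z.equivMapOfInjective L.subtype L.injective_subtype
    rw [(e.restrictScalars ℤ).finrank_eq]
    have hZL : Z.map L.subtype ≤ L := Submodule.map_subtype_le L Z
    refine (le_total _ _).elim id (hmin ⟨hZL.trans hLK, ?_⟩)
    exact ((Submodule.map_injective_of_injective L.injective_subtype).ne_iff'
      (Submodule.map_bot _)).2 hZ
  obtain ⟨m, hm, h⟩ :=
    exists_int_smul_mem_range (Z.subtype.restrictScalars ℤ) Z.injective_subtype hrank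
  exact ⟨m, hm, fun x ↦ by simpa using h x⟩

namespace IsRationallySimple

theorem injective_of_ne_zero (hM : IsRationallySimple R M) [IsTorsionFree ℤ N] {f : M →ₗ[R] N}
    (hf : f ≠ 0) : Function.Injective f := by
  rw [← LinearMap.ker_eq_bot]
  by_contra hker
  obtain ⟨m, hm, h⟩ := hM.exists_smul_mem _ hker
  refine hf (LinearMap.ext fun x ↦ (smul_eq_zero.1 (?_ : m • f x = 0)).resolve_left hm)
  rw [← map_zsmul, LinearMap.mem_ker.1 (h x)]

theorem of_injective (hM : IsRationallySimple R M) [Nontrivial N] (f : N →ₗ[R] M)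
    (hf : Function.Injective f) : IsRationallySimple R N where
  nontrivial := ‹_›
  exists_smul_mem K hK := by
    obtain ⟨m, hm, h⟩ := hM.exists_smul_mem (K.map f)
      (((Submodule.map_injective_of_injective hf).ne_iff' (Submodule.map_bot f)).2 hK)
    refine ⟨m, hm, fun x ↦ hf.mem_set_image.1 ?_⟩
    rw [map_zsmul]
    exact h (f x)

theorem isDomain_end (hM : IsRationallySimple R M) [IsTorsionFree ℤ M] :
    IsDomain (Module.End R M) := by
  have := hM.nontrivial
  have : NoZeroDivisors (Module.End R M) := ⟨fun {f g} hfg ↦ by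
    refine or_iff_not_imp_left.2 fun hf ↦ LinearMap.ext fun x ↦ hM.injective_of_ne_zero hf ?_
    simpa using LinearMap.congr_fun hfg x⟩
  exact NoZeroDivisors.to_isDomain _

end IsRationallySimple

end RationallySimple

section RationallySemisimple

variable {R : Type u} [Ring R] {M : Type v} [AddCommGroup M] [Module R M]
  {N : Type w} [AddCommGroup N] [Module R N]

theorem exists_comp_eq_of_ker_le {P : Type*} [AddCommGroup P] [Module R P] {f : M →ₗ[R] N}
    (hf : Function.Surjective f) {g : M →ₗ[R] P} (hker : LinearMap.ker f ≤ LinearMap.ker g) :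
    ∃ h : N →ₗ[R] P, ∀ x, h (f x) = g x :=
  ⟨(LinearMap.ker f).liftQ g hker ∘ₗ (f.quotKerEquivOfSurjective hf).symm.toLinearMap,
    fun x ↦ by simp⟩

variable (R M) in
/-- A module is *rationally semisimple* if each of its submodules `K` is the target of a rational
projection: an endomorphism with values in `K` that acts on `K` as a nonzero integer. For a
torsion-free module `M` this says that `ℚ ⊗ M` is a semisimple `ℚ ⊗ R`-module. -/
def IsRationallySemisimple : Prop :=
  ∀ K : Submodule R M, ∃ m : ℤ, m ≠ 0 ∧
    ∃ π : Module.End R M, (∀ x, π x ∈ K) ∧ ∀ x ∈ K, π x = m • x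

namespace IsRationallySemisimple

theorem of_surjective (hM : IsRationallySemisimple R M) (f : M →ₗ[R] N)
    (hf : Function.Surjective f) : IsRationallySemisimple R N := by
  intro K
  obtain ⟨m, hm, π, hπ_mem, hπ⟩ := hM (K.comap f)
  obtain ⟨ρ, hρ⟩ : ∃ ρ : Module.End R N, ∀ x, ρ (f x) = f (π x) :=
    exists_comp_eq_of_ker_le (g := f ∘ₗ π) hf fun x hx ↦ by
      have hxK : x ∈ K.comap f := LinearMap.ker_le_comap f hx
      simp [hπ x hxK, LinearMap.mem_ker.1 hx]
  refine ⟨m, hm, ρ, hf.forall.2 fun x ↦ ?_, hf.forall.2 fun x hx ↦ ?_⟩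
  · rw [hρ]
    exact hπ_mem x
  · rw [hρ, hπ x hx, map_zsmul]

theorem prod (hM : IsRationallySemisimple R M) (hN : IsRationallySemisimple R N) :
    IsRationallySemisimple R (M × N) := by
  intro K
  obtain ⟨m, hm, π, hπ_mem, hπ⟩ := hM (K.comap (LinearMap.inl R M N))
  obtain ⟨n, hn, ρ, hρ_mem, hρ⟩ := hN (K.map (LinearMap.snd R M N))
  -- The map `k ↦ m • k - π k.1` on `K` kills `K ∩ M`, so it factors through the projection to `N`.
  obtain ⟨s, hs⟩ : ∃ s : K.map (LinearMap.snd R M N) →ₗ[R] K,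
      ∀ k, s ((LinearMap.snd R M N).submoduleMap K k) =
        m • k - ⟨LinearMap.inl R M N (π k.1.1), hπ_mem _⟩ := by
    let g : K →ₗ[R] K := m • LinearMap.id -
      (LinearMap.inl R M N ∘ₗ π ∘ₗ LinearMap.fst R M N ∘ₗ K.subtype).codRestrict K
        fun k ↦ hπ_mem _
    refine exists_comp_eq_of_ker_le (g := g) (LinearMap.submoduleMap_surjective _ K) fun k hk ↦ ?_
    obtain ⟨⟨a, b⟩, hab⟩ := k
    obtain rfl : b = 0 := congrArg Subtype.val hk
    have := hπ a hab
    ext <;> simp [g, this]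
  obtain ⟨τ, hτ⟩ : ∃ τ : N →ₗ[R] K, ∀ k : K, (τ k.1.2 : M × N) = n • (m • k.1 - (π k.1.1, 0)) := by
    refine ⟨s ∘ₗ ρ.codRestrict _ hρ_mem, fun k ↦ ?_⟩
    have hk : ρ.codRestrict _ hρ_mem k.1.2 = n • (LinearMap.snd R M N).submoduleMap K k :=
      Subtype.ext (hρ k.1.2 ⟨k, k.2, rfl⟩)
    rw [LinearMap.comp_apply, hk, map_zsmul, hs]
    rfl
  refine ⟨n * m, mul_ne_zero hn hm, n • (LinearMap.inl R M N ∘ₗ π ∘ₗ LinearMap.fst R M N) +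
    K.subtype ∘ₗ τ ∘ₗ LinearMap.snd R M N, fun x ↦ ?_, fun x hx ↦ ?_⟩
  · exact K.add_mem (K.smul_of_tower_mem n (hπ_mem x.1)) (τ x.2).2
  · have hτx := hτ ⟨x, hx⟩
    simp [hτx, mul_smul, smul_sub]

theorem of_finite (hR : IsRationallySemisimple R R) [Module.Finite R M] :
    IsRationallySemisimple R M := by
  suffices h : ∀ K : Submodule R M, K.FG → IsRationallySemisimple R K from
    (h ⊤ Module.Finite.fg_top).of_surjective Submodule.topEquiv.toLinearMap
      Submodule.topEquiv.surjective
  intro K hK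
  induction K, hK using Submodule.fg_induction with
  | singleton x =>
    rw [← LinearMap.range_toSpanSingleton]
    exact hR.of_surjective _ (LinearMap.surjective_rangeRestrict _)
  | sup K L _ _ hK hL =>
    refine (hK.prod hL).of_surjective
      ((Submodule.inclusion le_sup_left).coprod (Submodule.inclusion le_sup_right)) ?_
    rintro ⟨x, hx⟩
    obtain ⟨y, hy, z, hz, rfl⟩ := Submodule.mem_sup.1 hx
    exact ⟨(⟨y, hy⟩, ⟨z, hz⟩), Subtype.ext rfl⟩

theorem exists_smul_mem_sSup [Module.Finite ℤ M] [IsTorsionFree ℤ M]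
    (hM : IsRationallySemisimple R M) :
    ∃ m : ℤ, m ≠ 0 ∧ ∀ x : M, m • x ∈ sSup {L : Submodule R M | IsRationallySimple R L} := by
  obtain ⟨m, hm, π, hπ_mem, hπ⟩ := hM (sSup {L | IsRationallySimple R L})
  have hker : LinearMap.ker π = ⊥ := by
    by_contra hker
    obtain ⟨L, hLπ, hL⟩ := exists_isRationallySimple_le hker
    refine Submodule.nontrivial_iff_ne_bot.1 hL.nontrivial
      ((Submodule.eq_bot_iff L).2 fun x hx ↦ ?_)
    have hmx : m • x = 0 := by
      rw [← hπ x (Submodule.mem_sSup_of_mem hL hx), LinearMap.mem_ker.1 (hLπ hx)]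
    exact (smul_eq_zero.1 hmx).resolve_left hm
  refine ⟨m, hm, fun x ↦ ?_⟩
  rw [← LinearMap.ker_eq_bot.1 hker (hπ _ (hπ_mem x) |>.trans (map_zsmul π m x).symm)]
  exact hπ_mem x

theorem exists_quasiSection (hR : IsRationallySemisimple R R) [Module.Finite R M] :
    ∃ c : ℤ, c ≠ 0 ∧ ∀ (E : Type w) [AddCommGroup E] [Module R E] (p : E →ₗ[R] M),
      Function.Surjective p → ∃ σ : M →ₗ[R] E, ∀ x, p (σ x) = c • x := by
  obtain ⟨n, π, hπ⟩ := Module.Finite.exists_fin' R M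
  obtain ⟨c, hc, ρ, hρ_mem, hρ⟩ := hR.of_finite (M := Fin n → R) (LinearMap.ker π)
  refine ⟨c, hc, fun E _ _ p hp ↦ ?_⟩
  obtain ⟨q, hq⟩ := Module.projective_lifting_property p π hp
  obtain ⟨σ, hσ⟩ : ∃ σ : M →ₗ[R] E, ∀ v, σ (π v) = q (c • v - ρ v) :=
    exists_comp_eq_of_ker_le (g := q ∘ₗ (c • LinearMap.id - ρ)) hπ fun v hv ↦ by simp [hρ v hv]
  refine ⟨σ, hπ.forall.2 fun v ↦ ?_⟩
  have hpq v : p (q v) = π v := LinearMap.congr_fun hq v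
  rw [hσ, hpq, map_sub, LinearMap.mem_ker.1 (hρ_mem v), sub_zero, map_zsmul]

end IsRationallySemisimple

end RationallySemisimple

section RightIdeals

theorem exists_natAbs_norm_le {E : Type*} [Ring E] {ι : Type*} [Fintype ι] (b : Basis ι ℤ E) :
    ∃ C : ℕ, ∀ (T : ℕ) (x : E), (∀ i, |b.repr x i| ≤ T) →
      (Algebra.norm ℤ x).natAbs ≤ C * T ^ Fintype.card ι := by
  classical
  obtain ⟨y, hy⟩ := Finite.exists_le fun k : ι × ι × ι ↦
    (Algebra.leftMulMatrix b (b k.1) k.2.1 k.2.2).natAbs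
  refine ⟨(Fintype.card ι).factorial * (Fintype.card ι * y) ^ Fintype.card ι, fun T x hx ↦ ?_⟩
  have entry_le k i j : |Algebra.leftMulMatrix b (b k) i j| ≤ y :=
    (Int.abs_eq_natAbs _).trans_le (mod_cast hy (k, i, j))
  have hdet := Matrix.det_sum_smul_le (abv := AbsoluteValue.abs) Finset.univ entry_le hx
  zify
  calc |Algebra.norm ℤ x|
    _ = |(∑ i, b.repr x i • Algebra.leftMulMatrix b (b i)).det| := by
      conv_lhs => rw [Algebra.norm_eq_matrix_det b, ← b.sum_repr x, map_sum]
      simp only [map_zsmul]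
    _ ≤ _ := hdet
    _ = _ := by
      simp only [Finset.card_univ, nsmul_eq_mul, mul_pow]
      ring

theorem exists_mem_abs_repr_le {G : Type*} [AddCommGroup G] {ι : Type*} [Fintype ι] [Nonempty ι]
    (b : Basis ι ℤ G) (H : AddSubgroup G) [H.FiniteIndex] :
    ∃ x ∈ H, x ≠ 0 ∧ ∃ T : ℕ, T ^ Fintype.card ι ≤ H.index ∧ ∀ i, |b.repr x i| ≤ T := by
  classical
  have hι : Fintype.card ι ≠ 0 := Fintype.card_ne_zero
  let T := (Fintype.card ι).nthRoot H.index
  have := Fintype.ofFinite (G ⧸ H)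
  have hbox : Fintype.card (G ⧸ H) < Fintype.card (ι → Fin (T + 1)) := by
    rw [Fintype.card_fun, Fintype.card_fin, ← Nat.card_eq_fintype_card]
    exact Nat.lt_pow_nthRoot_add_one hι H.index
  obtain ⟨c, c', hne, heq⟩ := Fintype.exists_ne_map_eq_of_card_lt
    (fun c : ι → Fin (T + 1) ↦ (b.equivFun.symm fun i ↦ (c i : ℤ) : G ⧸ H)) hbox
  have hrepr i : b.repr (-b.equivFun.symm (fun i ↦ (c i : ℤ)) +
      b.equivFun.symm fun i ↦ (c' i : ℤ)) i = c' i - c i := by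
    have repr_symm (f : ι → ℤ) : ⇑(b.repr (b.equivFun.symm f)) = f :=
      b.equivFun.apply_symm_apply f
    rw [map_add, map_neg, Finsupp.add_apply, Finsupp.neg_apply, repr_symm, repr_symm]
    ring
  refine ⟨_, QuotientAddGroup.eq.1 heq, fun h ↦ hne ?_, T, Nat.pow_nthRoot_le (.inl hι), ?_⟩
  · ext i
    have := hrepr i
    simp only [h, map_zero, Finsupp.zero_apply] at this
    omega
  · intro i
    rw [hrepr, abs_le]
    omega

theorem index_range_mulLeft {E : Type*} [Ring E] [NoZeroDivisors E] [Module.Free ℤ E]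
    [Module.Finite ℤ E] {x : E} (hx : x ≠ 0) :
    (AddMonoidHom.mulLeft x).range.index = (Algebra.norm ℤ x).natAbs := by
  have hinj : Function.Injective (LinearMap.mulLeft ℤ x) := mul_right_injective₀ hx
  exact (Submodule.natAbs_det_equiv _ (LinearEquiv.ofInjective _ hinj)).symm

/- Right ideals of `E` are almost principal with a bounded error: a right ideal `H` contains by
pigeonhole some `ψ ≠ 0` whose coordinates are small compared to its index, so the index of `ψ E`,
the norm of `ψ`, is at most a constant times the index of `H`. -/
theorem exists_common_right_ideal_multiple {E : Type*} [Ring E] [IsDomain E] [Module.Free ℤ E]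
    [Module.Finite ℤ E] :
    ∃ N : ℤ, N ≠ 0 ∧ ∀ H : AddSubgroup E, (∀ h ∈ H, ∀ e, h * e ∈ H) → H ≠ ⊥ →
      ∃ ψ ∈ H, ψ ≠ 0 ∧ ∀ h ∈ H, ∃ ε, N • h = ψ * ε := by
  let b := finBasis ℤ E
  have : Nonempty (Fin (finrank ℤ E)) := b.index_nonempty
  obtain ⟨C, hC⟩ := exists_natAbs_norm_le b
  have norm_ne_zero {x : E} (hx : x ≠ 0) : (AddMonoidHom.mulLeft x).range.index ≠ 0 := by
    rw [index_range_mulLeft hx]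
    exact Int.natAbs_ne_zero.2 (Algebra.norm_ne_zero_iff.2 hx)
  refine ⟨C.factorial, mod_cast C.factorial_ne_zero, fun H hH_mul hH ↦ ?_⟩
  have range_le {x : E} (hx : x ∈ H) : (AddMonoidHom.mulLeft x).range ≤ H := by
    rintro _ ⟨e, rfl⟩
    exact hH_mul x hx e
  obtain ⟨x, hxH, hx⟩ := H.bot_or_exists_ne_zero.resolve_left hH
  have : H.FiniteIndex := ⟨ne_zero_of_dvd_ne_zero (norm_ne_zero hx)
    (AddSubgroup.index_dvd_of_le (range_le hxH))⟩
  obtain ⟨ψ, hψH, hψ, T, hT, hψT⟩ := exists_mem_abs_repr_le b H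
  have hindex := AddSubgroup.relIndex_mul_index (range_le hψH)
  have relIndex_le : (AddMonoidHom.mulLeft ψ).range.relIndex H ≤ C := by
    have index_pos : 0 < H.index := Nat.pos_of_ne_zero AddSubgroup.FiniteIndex.index_ne_zero
    refine Nat.le_of_mul_le_mul_right ?_ index_pos
    rw [hindex, index_range_mulLeft hψ]
    exact (hC T ψ hψT).trans (Nat.mul_le_mul_left C hT)
  have relIndex_pos : 0 < (AddMonoidHom.mulLeft ψ).range.relIndex H :=
    Nat.pos_of_ne_zero (left_ne_zero_of_mul (hindex ▸ norm_ne_zero hψ))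
  obtain ⟨q, hq⟩ := Nat.dvd_factorial relIndex_pos relIndex_le
  refine ⟨ψ, hψH, hψ, fun h hh ↦ ?_⟩
  obtain ⟨ε, hε⟩ := ((AddMonoidHom.mulLeft ψ).range.addSubgroupOf H).nsmul_index_mem ⟨h, hh⟩
  refine ⟨q • ε, ?_⟩
  rw [mul_smul_comm, show ψ * ε = _ from hε, hq]
  simp [AddSubgroup.relIndex, mul_comm, mul_smul]

end RightIdeals

section RationallySimpleLattices

variable {R : Type u} [Ring R]

namespace IsRationallySimple

theorem exists_common_image {L : Type w} [AddCommGroup L] [Module R L] [Module.Finite ℤ L]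
    [IsTorsionFree ℤ L] (hL : IsRationallySimple R L) :
    ∃ N : ℤ, N ≠ 0 ∧ ∀ (M : Type v) [AddCommGroup M] [Module R M] [IsTorsionFree ℤ M],
      IsRationallySimple R M → Nontrivial (L →ₗ[R] M) →
        ∃ ψ : L →ₗ[R] M, Function.Injective ψ ∧
          ∀ (φ : L →ₗ[R] M) (x : L), N • φ x ∈ LinearMap.range ψ := by
  have := hL.isDomain_end
  obtain ⟨N, hN, hideal⟩ := exists_common_right_ideal_multiple (E := Module.End R L)
  refine ⟨N, hN, fun M _ _ _ hM _ ↦ ?_⟩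
  -- Composing with an embedding `j : M → L` turns `Hom(L, M)` into a right ideal of `End L`.
  obtain ⟨φ₀, hφ₀⟩ := exists_ne (0 : L →ₗ[R] M)
  obtain ⟨n, hn, hnM⟩ := hM.exists_smul_mem (LinearMap.range φ₀) (LinearMap.range_eq_bot.not.2 hφ₀)
  obtain ⟨j, hj, -⟩ := exists_injective_comp_eq_smul (hL.injective_of_ne_zero hφ₀) hn hnM
  let J : (L →ₗ[R] M) →+ Module.End R L := .mk' (j ∘ₗ ·) fun φ φ' ↦ LinearMap.comp_add φ φ' j
  have hJ : J.range ≠ ⊥ := by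
    refine fun h ↦ hφ₀ (LinearMap.ext fun x ↦ hj ?_)
    simpa [J] using LinearMap.congr_fun ((AddSubgroup.eq_bot_iff_forall _).1 h (J φ₀) ⟨φ₀, rfl⟩) x
  have hJ_mul : ∀ h ∈ J.range, ∀ e, h * e ∈ J.range := by
    rintro _ ⟨φ, rfl⟩ e
    exact ⟨φ ∘ₗ e, rfl⟩
  obtain ⟨_, ⟨ψ, rfl⟩, hψ, hNψ⟩ := hideal J.range hJ_mul hJ
  refine ⟨ψ, hL.injective_of_ne_zero fun h ↦ hψ (by rw [h, map_zero]), fun φ x ↦ ?_⟩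
  obtain ⟨ε, hε⟩ := hNψ (J φ) ⟨φ, rfl⟩
  exact ⟨ε x, hj (by simpa [J] using (LinearMap.congr_fun hε x).symm)⟩

end IsRationallySimple

namespace IsRationallySemisimple

theorem exists_smul_mem_ideal_smul (hR : IsRationallySemisimple R R) (L : Ideal R) :
    ∃ k : ℤ, k ≠ 0 ∧ ∀ (M : Type v) [AddCommGroup M] [Module R M] [IsTorsionFree ℤ M],
      IsRationallySimple R M → L • (⊤ : Submodule R M) ≠ ⊥ →
        ∀ y : M, k • y ∈ L • (⊤ : Submodule R M) := by
  obtain ⟨k, hk, π, hπ_mem, hπ⟩ := hR (L * ⊤)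
  refine ⟨k, hk, fun M _ _ _ hM hLM y ↦ ?_⟩
  have smul_top : (L * ⊤ : Ideal R) • (⊤ : Submodule R M) = L • ⊤ := by
    rw [Submodule.mul_smul, Submodule.top_smul]
  rw [← smul_top] at hLM ⊢
  suffices h : k • y = π 1 • y by
    rw [h]
    exact Submodule.smul_mem_smul (hπ_mem 1) trivial
  by_contra hne
  obtain ⟨t, ht, htM⟩ :=
    hM.exists_smul_mem (R ∙ (k • y - π 1 • y)) (by simpa [sub_eq_zero] using hne)
  refine hLM (le_bot_iff.1 (Submodule.smul_le.2 fun x hx z _ ↦ ?_))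
  obtain ⟨r, hr⟩ := Submodule.mem_span_singleton.1 (htM z)
  have hπ_one : x * r * π 1 = k • (x * r) := by
    rw [← smul_eq_mul, ← map_smul, smul_eq_mul, mul_one, hπ _ (Ideal.mul_mem_right r _ hx)]
  have htxz : t • x • z = 0 := by
    rw [smul_comm, ← hr, ← mul_smul, smul_sub, ← mul_smul, hπ_one, smul_comm, smul_assoc, sub_self]
  exact (smul_eq_zero.1 htxz).resolve_left ht

theorem finite_isoClasses_of_ideal_smul_ne_bot [Module.Finite ℤ R] [IsTorsionFree ℤ R]
    (hR : IsRationallySemisimple R R) {L : Ideal R} (hL : IsRationallySimple R L) :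
    (isoClasses fun M : ModuleCat.{v} R ↦ IsTorsionFree ℤ M ∧ IsRationallySimple R M ∧
      L • (⊤ : Submodule R M) ≠ ⊥).Finite := by
  obtain ⟨N, hN, hcommon⟩ := hL.exists_common_image
  obtain ⟨k, hk, hLM⟩ := hR.exists_smul_mem_ideal_smul L
  refine (finite_isoClasses_of_smul_mem_range L (mul_ne_zero hN hk)).subset
    (isoClasses_mono fun M ⟨_, hM, hM_smul⟩ ↦ ⟨‹_›, ?_⟩)
  have hhom : Nontrivial (L →ₗ[R] M) := by
    by_contra h
    rw [not_nontrivial_iff_subsingleton] at h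
    refine hM_smul (le_bot_iff.1 (Submodule.smul_le.2 fun l hl y _ ↦ ?_))
    exact LinearMap.congr_fun
      (Subsingleton.elim (LinearMap.toSpanSingleton R M y ∘ₗ L.subtype) 0) ⟨l, hl⟩
  obtain ⟨ψ, hψ, hNψ⟩ := hcommon M hM hhom
  refine ⟨ψ, hψ, fun y ↦ ?_⟩
  have smul_top_le : L • ⊤ ≤ (LinearMap.range ψ).comap (N • LinearMap.id) :=
    Submodule.smul_le.2 fun l hl z _ ↦ hNψ (LinearMap.toSpanSingleton R M z ∘ₗ L.subtype) ⟨l, hl⟩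
  rw [mul_smul]
  exact smul_top_le (hLM M hM hM_smul y)

theorem finite_isoClasses_isRationallySimple [Module.Finite ℤ R] [IsTorsionFree ℤ R]
    (hR : IsRationallySemisimple R R) :
    (isoClasses fun M : ModuleCat.{v} R ↦ IsTorsionFree ℤ M ∧ IsRationallySimple R M).Finite := by
  obtain ⟨m, hm, hsSup⟩ := hR.exists_smul_mem_sSup
  obtain ⟨S, hS, hmS⟩ := Submodule.mem_sSup_iff_exists_finset.1 (hsSup 1)
  refine (S.finite_toSet.biUnion fun L hL ↦
    hR.finite_isoClasses_of_ideal_smul_ne_bot (hS hL)).subset ?_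
  rintro _ ⟨M, ⟨_, hM⟩, rfl⟩
  obtain ⟨L, hL, hLM⟩ : ∃ L ∈ S, L • (⊤ : Submodule R M) ≠ ⊥ := by
    by_contra! h
    have := hM.nontrivial
    obtain ⟨y, hy⟩ := exists_ne (0 : M)
    have hle : ⨆ L ∈ S, L ≤ LinearMap.ker (LinearMap.toSpanSingleton R M y) :=
      iSup₂_le fun L hL x hx ↦ (Submodule.mem_bot R).1 (h L hL ▸ Submodule.smul_mem_smul hx trivial)
    have hmy : m • y = 0 := by
      rw [← one_smul R y, ← smul_assoc]
      exact hle hmS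
    exact hy ((smul_eq_zero.1 hmy).resolve_left hm)
  exact Set.mem_biUnion hL ⟨M, ⟨‹_›, hM, hLM⟩, rfl⟩

end IsRationallySemisimple

end RationallySimpleLattices

section JordanZassenhaus

variable {R : Type u} [Ring R]

variable (R) in
/-- `M` is an extension of `X` by `Y`, that is, the middle term of a short exact sequence
`0 → Y → M → X → 0`. -/
def IsExtension (X Y M : Type*) [AddCommGroup X] [Module R X] [AddCommGroup Y] [Module R Y]
    [AddCommGroup M] [Module R M] : Prop :=
  ∃ (i : Y →ₗ[R] M) (p : M →ₗ[R] X),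
    Function.Injective i ∧ Function.Surjective p ∧ Function.Exact i p

theorem isExtension_of_range_of_ker {X Y M N : Type*} [AddCommGroup X] [Module R X]
    [AddCommGroup Y] [Module R Y] [AddCommGroup M] [Module R M] [AddCommGroup N] [Module R N]
    (f : M →ₗ[R] N) (eX : LinearMap.range f ≃ₗ[R] X) (eY : LinearMap.ker f ≃ₗ[R] Y) :
    IsExtension R X Y M := by
  refine ⟨(LinearMap.ker f).subtype ∘ₗ eY.symm.toLinearMap, eX.toLinearMap ∘ₗ f.rangeRestrict,
    (Submodule.injective_subtype _).comp eY.symm.injective,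
    eX.surjective.comp f.surjective_rangeRestrict, LinearMap.exact_iff.2 ?_⟩
  rw [LinearMap.range_comp_of_range_eq_top _ (LinearEquiv.range _), LinearEquiv.ker_comp,
    Submodule.range_subtype, LinearMap.ker_rangeRestrict]

namespace IsRationallySemisimple

theorem finite_isoClasses_extension (hR : IsRationallySemisimple R R)
    (X Y : Type v) [AddCommGroup X] [Module R X] [Module.Finite R X] [Module.Finite ℤ X]
    [IsTorsionFree ℤ X] [AddCommGroup Y] [Module R Y] [Module.Finite ℤ Y] :
    (isoClasses fun M : ModuleCat.{v} R ↦ IsTorsionFree ℤ M ∧ IsExtension R X Y M).Finite := by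
  obtain ⟨c, hc, hsection⟩ := hR.exists_quasiSection (M := X)
  refine (finite_isoClasses_of_smul_mem_range (Y × X) hc).subset (isoClasses_mono ?_)
  rintro M ⟨_, i, p, hi, hp, hip⟩
  obtain ⟨σ, hσ⟩ := hsection M p hp
  refine ⟨‹_›, i.coprod σ, (injective_iff_map_eq_zero _).2 fun ⟨y, x⟩ h ↦ ?_, fun z ↦ ?_⟩
  · replace h : i y + σ x = 0 := h
    have hcx : c • x = 0 := by simpa [hip.apply_apply_eq_zero, hσ] using congrArg p h
    have hx : x = 0 := (smul_eq_zero.1 hcx).resolve_left hc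
    have hy : y = 0 := hi (by simpa [hx] using h)
    rw [hx, hy, Prod.mk_zero_zero]
  · obtain ⟨y, hy⟩ : c • z - σ (p z) ∈ Set.range i := by
      rw [← hip, map_sub, hσ, map_zsmul, sub_self]
    exact ⟨(y, p z), by simp [hy]⟩

theorem exists_end_isRationallySimple_range {M : Type v} [AddCommGroup M] [Module R M]
    [Module.Finite ℤ M] [IsTorsionFree ℤ M] [Nontrivial M] (hM : IsRationallySemisimple R M) :
    ∃ π : Module.End R M, IsRationallySimple R (LinearMap.range π) ∧
      finrank ℤ (LinearMap.ker π) < finrank ℤ M := by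
  obtain ⟨L, -, hL⟩ := exists_isRationallySimple_le (R := R) (M := M) top_ne_bot
  obtain ⟨m, hm, π, hπ_mem, hπ⟩ := hM L
  have hrange : LinearMap.range π ≤ L := by
    rintro _ ⟨x, rfl⟩
    exact hπ_mem x
  have : Nontrivial (LinearMap.range π) := by
    obtain ⟨x, hx, hx0⟩ := L.ne_bot_iff.1 (Submodule.nontrivial_iff_ne_bot.1 hL.nontrivial)
    refine nontrivial_of_ne ⟨π x, x, rfl⟩ 0 fun h ↦ smul_ne_zero hm hx0 ?_
    rw [← hπ x hx]
    exact congrArg Subtype.val h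
  refine ⟨π, hL.of_injective _ (Submodule.inclusion_injective hrange), ?_⟩
  have hrank : finrank ℤ (LinearMap.range π) + finrank ℤ (LinearMap.ker π) = finrank ℤ M := by
    rw [← (LinearMap.ker (π.restrictScalars ℤ)).finrank_quotient_add_finrank,
      (π.restrictScalars ℤ).quotKerEquivRange.finrank_eq]
    rfl
  have hpos : 0 < finrank ℤ (LinearMap.range π) := finrank_pos
  omega

theorem finite_isoClasses_finrank_le [Module.Finite ℤ R] [IsTorsionFree ℤ R]
    (hR : IsRationallySemisimple R R) (n : ℕ) :
    (isoClasses fun M : ModuleCat.{v} R ↦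
      Module.Finite ℤ M ∧ IsTorsionFree ℤ M ∧ finrank ℤ M ≤ n).Finite := by
  induction n with
  | zero =>
    refine finite_isoClasses_of_finite_invariant (fun (_ : Unit) M ↦ Subsingleton M) ?_ ?_
    · rintro M ⟨_, _, hM⟩
      exact ⟨(), finrank_zero_iff.1 (Nat.le_zero.1 hM)⟩
    · rintro - M M' - - (_ : Subsingleton M) (_ : Subsingleton M')
      exact ⟨0⟩
  | succ n ih =>
    obtain ⟨S, hS, hSP, hScover⟩ := exists_finite_representatives ih
    obtain ⟨T, hT, hTP, hTcover⟩ := exists_finite_representatives <|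
      hR.finite_isoClasses_isRationallySimple.{u, v}.subset <| isoClasses_mono
        (P := fun M ↦ Module.Finite ℤ M ∧ IsTorsionFree ℤ M ∧ IsRationallySimple R M)
        fun M hM ↦ hM.2
    have hext : (⋃ Y ∈ S, ⋃ X ∈ T, isoClasses fun M : ModuleCat.{v} R ↦
        IsTorsionFree ℤ M ∧ IsExtension R X Y M).Finite := by
      refine hS.biUnion fun Y hY ↦ hT.biUnion fun X hX ↦ ?_
      obtain ⟨_, _, -⟩ := hSP Y hY
      obtain ⟨_, _, -⟩ := hTP X hX
      have : Module.Finite R X := .of_restrictScalars_finite ℤ R X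
      exact hR.finite_isoClasses_extension X Y
    refine (ih.union hext).subset ?_
    rintro _ ⟨M, ⟨_, _, hMn⟩, rfl⟩
    obtain hMn | hMn := Nat.le_or_eq_of_le_succ hMn
    · exact .inl ⟨M, ⟨‹_›, ‹_›, hMn⟩, rfl⟩
    have : Nontrivial M := nontrivial_of_finrank_pos (R := ℤ) (by omega)
    have : Module.Finite R M := .of_restrictScalars_finite ℤ R M
    obtain ⟨π, hX, hY⟩ := (hR.of_finite (M := M)).exists_end_isRationallySimple_range
    obtain ⟨Y, hYS, ⟨eY⟩⟩ := hScover (.of R (LinearMap.ker π))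
      ⟨inferInstanceAs (Module.Finite ℤ (LinearMap.ker π)),
        inferInstanceAs (IsTorsionFree ℤ (LinearMap.ker π)), Nat.le_of_lt_succ (hMn ▸ hY)⟩
    obtain ⟨X, hXT, ⟨eX⟩⟩ := hTcover (.of R (LinearMap.range π))
      ⟨inferInstanceAs (Module.Finite ℤ (LinearMap.range π)),
        inferInstanceAs (IsTorsionFree ℤ (LinearMap.range π)), hX⟩
    exact .inr (Set.mem_biUnion hYS (Set.mem_biUnion hXT
      ⟨M, ⟨‹_›, isExtension_of_range_of_ker π eX.toLinearEquiv eY.toLinearEquiv⟩, rfl⟩))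

end IsRationallySemisimple

end JordanZassenhaus

section NilpotentIdeal

variable {R : Type u} [Ring R]

theorem exists_smul_eq_of_mem_map {S : Type*} [Ring S] (f : R →+* S)
    (hden : ∀ s, ∃ m : ℤ, m ≠ 0 ∧ m • s ∈ f.range) (K : Ideal R) {s : S} (hs : s ∈ K.map f) :
    ∃ m : ℤ, m ≠ 0 ∧ ∃ k ∈ K, f k = m • s := by
  induction hs using Submodule.span_induction with
  | mem s hs =>
    obtain ⟨k, hk, rfl⟩ := hs
    exact ⟨1, one_ne_zero, k, hk, (one_smul ℤ _).symm⟩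
  | zero => exact ⟨1, one_ne_zero, 0, K.zero_mem, by simp⟩
  | add s t _ _ hs ht =>
    obtain ⟨m, hm, k, hk, hks⟩ := hs
    obtain ⟨n, hn, l, hl, hlt⟩ := ht
    refine ⟨m * n, mul_ne_zero hm hn, n • k + m • l,
      K.add_mem (K.smul_of_tower_mem n hk) (K.smul_of_tower_mem m hl), ?_⟩
    rw [map_add, map_zsmul, map_zsmul, hks, hlt, smul_add, mul_smul, mul_smul, smul_comm n m s]
  | smul a s _ hs =>
    obtain ⟨m, hm, k, hk, hks⟩ := hs
    obtain ⟨n, hn, r, hr⟩ := hden a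
    refine ⟨n * m, mul_ne_zero hn hm, r * k, K.mul_mem_left r hk, ?_⟩
    rw [map_mul, hr, hks, smul_mul_smul_comm, smul_eq_mul]

theorem isRationallySemisimple_of_injective {S : Type*} [Ring S] [IsSemisimpleRing S]
    (f : R →+* S) (hf : Function.Injective f)
    (hden : ∀ s, ∃ m : ℤ, m ≠ 0 ∧ m • s ∈ f.range) : IsRationallySemisimple R R := by
  intro (K : Ideal R)
  obtain ⟨e, he, hKe⟩ := IsSemisimpleRing.ideal_eq_span_idempotent (K.map f)
  obtain ⟨m, hm, k, hk, hke⟩ :=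
    exists_smul_eq_of_mem_map f hden K (hKe ▸ Ideal.mem_span_singleton_self e)
  refine ⟨m, hm, LinearMap.toSpanSingleton R R k, fun x ↦ K.mul_mem_left x hk, fun x hx ↦ hf ?_⟩
  obtain ⟨a, ha⟩ := Ideal.mem_span_singleton'.1 (hKe ▸ Ideal.mem_map_of_mem f hx)
  calc f (x * k) = m • (a * (e * e)) := by rw [map_mul, hke, ← ha, mul_smul_comm, mul_assoc]
    _ = f (m • x) := by rw [he.eq, ha, map_zsmul]

theorem pow_comap_le_comap_pow {S : Type*} [Ring S] (f : R →+* S) (I : Ideal S) (n : ℕ) :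
    I.comap f ^ n ≤ (I ^ n).comap f := by
  induction n with
  | zero => simp [Submodule.pow_zero, Ideal.one_eq_top]
  | succ n ih =>
    rw [Submodule.pow_succ, Submodule.pow_succ, Ideal.mul_le]
    intro x hx y hy
    rw [Ideal.mem_comap, map_mul]
    exact Ideal.mul_mem_mul (ih hx) hy

open TensorProduct in
theorem exists_smul_tmul_eq_one_tmul (s : ℚ ⊗[ℤ] R) :
    ∃ m : ℤ, m ≠ 0 ∧ ∃ r : R, m • s = 1 ⊗ₜ r := by
  induction s with
  | zero => exact ⟨1, one_ne_zero, 0, by simp⟩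
  | tmul q r =>
    refine ⟨q.den, mod_cast q.den_ne_zero, q.num • r, ?_⟩
    rw [TensorProduct.smul_tmul', TensorProduct.tmul_smul, TensorProduct.smul_tmul']
    simp
  | add s t hs ht =>
    obtain ⟨m, hm, r, hr⟩ := hs
    obtain ⟨n, hn, r', hr'⟩ := ht
    refine ⟨m * n, mul_ne_zero hm hn, n • r + m • r', ?_⟩
    rw [smul_add, mul_smul, mul_smul, hr', smul_comm, hr, tmul_add, tmul_smul, tmul_smul]

theorem exists_nilpotent_ideal_isRationallySemisimple_quotient_of_injective {B : Type*} [Ring B]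
    [Algebra ℚ B] [IsArtinianRing B] (ι : R →+* B) (hι : Function.Injective ι)
    (hden : ∀ b, ∃ m : ℤ, m ≠ 0 ∧ m • b ∈ ι.range) :
    ∃ (J : Ideal R) (_ : J.IsTwoSided), IsNilpotent J ∧
      IsTorsionFree ℤ (R ⧸ J) ∧ IsRationallySemisimple (R ⧸ J) (R ⧸ J) := by
  let N : Ideal B := Ring.jacobson B
  let f : R →+* B ⧸ N := (Ideal.Quotient.mk N).comp ι
  refine ⟨RingHom.ker f, inferInstance, ?_, ?_, ?_⟩
  · obtain ⟨n, hn⟩ : IsNilpotent N := IsSemiprimaryRing.isNilpotent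
    refine ⟨n, eq_bot_iff.2 ?_⟩
    calc RingHom.ker f ^ n = N.comap ι ^ n := by rw [← RingHom.comap_ker, Ideal.mk_ker]
      _ ≤ (N ^ n).comap ι := pow_comap_le_comap_pow ι N n
      _ = ⊥ := by rw [hn]; exact (RingHom.injective_iff_ker_eq_bot ι).1 hι
  · have : IsTorsionFree ℤ (B ⧸ N) := .trans_faithfulSMul ℤ ℚ _
    exact (RingHom.kerLift_injective f).moduleIsTorsionFree _ fun n x ↦ map_zsmul _ n x
  · refine isRationallySemisimple_of_injective _ (RingHom.kerLift_injective f)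
      (Ideal.Quotient.mk_surjective.forall.2 fun b ↦ ?_)
    obtain ⟨m, hm, r, hr⟩ := hden b
    exact ⟨m, hm, Ideal.Quotient.mk _ r, by simp [f, hr]⟩

open TensorProduct in
variable (R) in
theorem exists_nilpotent_ideal_isRationallySemisimple_quotient [Module.Finite ℤ R]
    [IsTorsionFree ℤ R] : ∃ (J : Ideal R) (_ : J.IsTwoSided), IsNilpotent J ∧
      IsTorsionFree ℤ (R ⧸ J) ∧ IsRationallySemisimple (R ⧸ J) (R ⧸ J) := by
  have : IsArtinianRing (ℚ ⊗[ℤ] R) := .of_finite ℚ _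
  refine exists_nilpotent_ideal_isRationallySemisimple_quotient_of_injective
    (Algebra.TensorProduct.includeRight : R →ₐ[ℤ] ℚ ⊗[ℤ] R).toRingHom
    (Algebra.TensorProduct.includeRight_injective (algebraMap ℤ ℚ).injective_int) fun b ↦ ?_
  obtain ⟨m, hm, r, hr⟩ := exists_smul_tmul_eq_one_tmul b
  exact ⟨m, hm, r, hr.symm⟩

end NilpotentIdeal

section ReductionModuloNilpotent

variable {R : Type u} [Ring R] {J : Ideal R} {M : Type v} [AddCommGroup M] [Module R M]
  {N : Type w} [AddCommGroup N] [Module R N]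

theorem eq_top_of_sup_smul_eq_top (hJ : IsNilpotent J) {K : Submodule R M}
    (hK : K ⊔ J • ⊤ = ⊤) : K = ⊤ := by
  have hpow (n : ℕ) : K ⊔ J ^ n • ⊤ = ⊤ := by
    induction n with
    | zero => rw [Submodule.pow_zero, Ideal.one_eq_top, Submodule.top_smul, sup_top_eq]
    | succ n ih =>
      refine top_le_iff.1 ?_
      calc ⊤ = K ⊔ J ^ n • (K ⊔ J • ⊤) := by rw [hK, ih]
        _ = K ⊔ (J ^ n • K ⊔ J ^ (n + 1) • ⊤) := by
          rw [Submodule.smul_sup, Submodule.pow_succ, Submodule.mul_smul]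
        _ ≤ K ⊔ J ^ (n + 1) • ⊤ :=
          sup_le le_sup_left (sup_le_sup_right Submodule.smul_le_right _)
  obtain ⟨n, hn⟩ := hJ
  rw [← hpow n, hn, Submodule.zero_eq_bot, Submodule.bot_smul, sup_bot_eq]

theorem exists_surjective_of_quotient [Module.Projective R M] (hJ : IsNilpotent J)
    (e : (M ⧸ J • (⊤ : Submodule R M)) →ₗ[R] N ⧸ J • (⊤ : Submodule R N))
    (he : Function.Surjective e) : ∃ f : M →ₗ[R] N, Function.Surjective f := by
  obtain ⟨f, hf⟩ := Module.projective_lifting_property (J • ⊤ : Submodule R N).mkQ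
    (e ∘ₗ (J • ⊤ : Submodule R M).mkQ) (Submodule.mkQ_surjective _)
  refine ⟨f, LinearMap.range_eq_top.1 (eq_top_of_sup_smul_eq_top hJ ?_)⟩
  have hrange : (LinearMap.range f).map (J • ⊤ : Submodule R N).mkQ = ⊤ := by
    rw [← LinearMap.range_comp, hf]
    exact LinearMap.range_eq_top.2 (he.comp (Submodule.mkQ_surjective _))
  rw [sup_comm, ← Submodule.comap_map_mkQ, hrange, Submodule.comap_top]

theorem nonempty_linearEquiv_of_quotient [IsNoetherianRing R] [Module.Projective R M]
    [Module.Projective R N] [Module.Finite R M] (hJ : IsNilpotent J)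
    (e : (M ⧸ J • (⊤ : Submodule R M)) ≃ₗ[R] N ⧸ J • (⊤ : Submodule R N)) :
    Nonempty (M ≃ₗ[R] N) := by
  obtain ⟨f, hf⟩ := exists_surjective_of_quotient hJ e.toLinearMap e.surjective
  obtain ⟨g, hg⟩ := exists_surjective_of_quotient hJ e.symm.toLinearMap e.symm.surjective
  have hgf : Function.Injective (g ∘ₗ f) :=
    IsNoetherian.injective_of_surjective_endomorphism _ (hg.comp hf)
  exact ⟨.ofBijective f ⟨.of_comp hgf, hf⟩⟩

theorem isTorsionFree_quotient_smul_top [J.IsTwoSided] [IsTorsionFree ℤ (R ⧸ J)]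
    [Module.Projective R M] : IsTorsionFree ℤ (M ⧸ J • (⊤ : Submodule R M)) := by
  obtain ⟨s, hs⟩ := Module.projective_def.1 ‹Module.Projective R M›
  let φ : M →ₗ[R] M →₀ R ⧸ J := Finsupp.mapRange.linearMap J.mkQ ∘ₗ s
  have hφ x : φ x = 0 ↔ ∀ i, s x i ∈ J := by
    simp [φ, Finsupp.ext_iff, Ideal.Quotient.eq_zero_iff_mem]
  have hle : J • ⊤ ≤ LinearMap.ker φ := by
    refine Submodule.smul_le.2 fun r hr x _ ↦ (hφ _).2 fun i ↦ ?_
    rw [map_smul]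
    exact J.mul_mem_right _ hr
  have hge : LinearMap.ker φ ≤ J • ⊤ := by
    intro x hx
    rw [← hs x, Finsupp.linearCombination_apply]
    exact Submodule.sum_mem _ fun i _ ↦
      Submodule.smul_mem_smul ((hφ x).1 hx i) Submodule.mem_top
  exact isTorsionFree_int_of_injective ((J • ⊤ : Submodule R M).liftQ φ hle)
    (LinearMap.ker_eq_bot.1 (Submodule.ker_liftQ_eq_bot _ _ _ hge))

theorem finrank_int_le_mul_of_span_range_eq_top [Module.Finite ℤ R] [IsTorsionFree ℤ R]
    {k : ℕ} {x : Fin k → M} (hx : Submodule.span R (Set.range x) = ⊤) :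
    finrank ℤ M ≤ k * finrank ℤ R := by
  calc finrank ℤ M ≤ finrank ℤ (Fin k → R) :=
        LinearMap.finrank_le_finrank_of_surjective
          (f := (Fintype.linearCombination R x).restrictScalars ℤ) <| by
            rwa [LinearMap.coe_restrictScalars, ← LinearMap.range_eq_top,
              Fintype.range_linearCombination]
    _ = k * finrank ℤ R := by simp [finrank_pi_fintype]

end ReductionModuloNilpotent

section FiniteProjective

variable {R : Type u} [Ring R]

theorem finite_isoClasses_projective_span_range [Module.Finite ℤ R] [IsTorsionFree ℤ R] (k : ℕ) :
    (isoClasses fun M : ModuleCat.{v} R ↦ Module.Projective R M ∧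
      ∃ x : Fin k → M, Submodule.span R (Set.range x) = ⊤).Finite := by
  obtain ⟨J, _, hJ, _, hRJ⟩ := exists_nilpotent_ideal_isRationallySemisimple_quotient R
  have : Module.Finite ℤ (R ⧸ J) := .of_surjective (J.mkQ.restrictScalars ℤ) J.mkQ_surjective
  obtain ⟨S, hS, -, hcover⟩ :=
    exists_finite_representatives (hRJ.finite_isoClasses_finrank_le.{u, v} (k * finrank ℤ R))
  have := hS.to_subtype
  have : IsNoetherianRing R := .of_finite ℤ R
  have finite_of_span {M : ModuleCat.{v} R} {x : Fin k → M}
      (hx : Submodule.span R (Set.range x) = ⊤) : Module.Finite R M :=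
    ⟨Submodule.fg_def.2 ⟨_, Set.finite_range x, hx⟩⟩
  refine finite_isoClasses_of_finite_invariant
    (fun (X : S) M ↦ Nonempty ((M ⧸ J • (⊤ : Submodule R M)) ≃ₗ[R ⧸ J] X.1)) ?_ ?_
  · rintro M ⟨_, x, hx⟩
    have := finite_of_span hx
    have : Module.Finite ℤ M := .trans R M
    have hspan : Submodule.span R (Set.range ((J • ⊤ : Submodule R M).mkQ ∘ x)) = ⊤ := by
      rw [Set.range_comp, ← Submodule.map_span, hx, Submodule.map_top, Submodule.range_mkQ]
    obtain ⟨X, hX, ⟨e⟩⟩ := hcover (.of (R ⧸ J) (M ⧸ J • (⊤ : Submodule R M)))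
      ⟨Module.Finite.quotient ℤ _, isTorsionFree_quotient_smul_top,
        finrank_int_le_mul_of_span_range_eq_top hspan⟩
    exact ⟨⟨X, hX⟩, ⟨e.toLinearEquiv⟩⟩
  · rintro X M M' ⟨_, x, hx⟩ ⟨_, -⟩ ⟨e⟩ ⟨e'⟩
    have := finite_of_span hx
    let E := e.trans e'.symm
    exact nonempty_linearEquiv_of_quotient hJ
      { E with map_smul' := fun r ↦ E.map_smul (Ideal.Quotient.mk J r) }

end FiniteProjective

theorem stmt_10_general (A : Type u) [Ring A] (hfg : AddGroup.FG A)
    (htf : ∀ (n : ℤ) (a : A), n • a = 0 → n = 0 ∨ a = 0) (k : ℕ) :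
    ∃ (n : ℕ) (N : Fin n → ModuleCat.{v} Aᵐᵒᵖ),
      ∀ M : ModuleCat.{v} Aᵐᵒᵖ, Module.Projective Aᵐᵒᵖ M →
        (∃ x : Fin k → M, Submodule.span Aᵐᵒᵖ (Set.range x) = ⊤) →
        ∃ i, Nonempty (M ≅ N i) := by
  have : Module.Finite ℤ A := Module.Finite.iff_addGroup_fg.2 hfg
  have : IsTorsionFree ℤ A := .of_smul_eq_zero htf
  have : Module.Finite ℤ Aᵐᵒᵖ := .equiv (MulOpposite.opLinearEquiv ℤ)
  have : IsTorsionFree ℤ Aᵐᵒᵖ := MulOpposite.unop_injective.moduleIsTorsionFree _ fun _ _ ↦ rfl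
  obtain ⟨S, hS, -, hcover⟩ :=
    exists_finite_representatives (finite_isoClasses_projective_span_range.{u, v} (R := Aᵐᵒᵖ) k)
  obtain ⟨n, N, -, rfl⟩ := Set.Finite.fin_param hS
  refine ⟨n, N, fun M hM hspan ↦ ?_⟩
  obtain ⟨_, ⟨i, rfl⟩, e⟩ := hcover M ⟨hM, hspan⟩
  exact ⟨i, e⟩

/-- Let `A` be a unital ring which is finitely generated and torsion-free as a
`ℤ`-module.  Then there are only finitely many isomorphism classes of cyclic
projective right `A`-modules (right `A`-modules = left `Aᵐᵒᵖ`-modules). -/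
theorem stmt_10 (A : Type) [Ring A] (hfg : AddGroup.FG A)
    (htf : ∀ (n : ℤ) (a : A), n • a = 0 → n = 0 ∨ a = 0) :
    ∃ (n : ℕ) (N : Fin n → ModuleCat.{0} Aᵐᵒᵖ),
      ∀ M : ModuleCat.{0} Aᵐᵒᵖ, Module.Projective Aᵐᵒᵖ M →
        (∃ m : M, Submodule.span Aᵐᵒᵖ ({m} : Set M) = ⊤) →
        ∃ i, Nonempty (M ≅ N i) := by
  obtain ⟨n, N, hN⟩ := stmt_10_general A hfg htf 1
  exact ⟨n, N, fun M hM ⟨m, hm⟩ ↦ hN M hM ⟨fun _ ↦ m, by rwa [Set.range_const]⟩⟩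
end

section
/- Let A be a unital ring that is finitely generated as an abelian group. Then for every n > 0 there are only finitely many isomorphism classes of right A-modules that are projective and generated by n elements. -/
/-!
Let `R` be a ring which is finite over `ℤ`, and call an `R`-module that is finite and torsion-free
over `ℤ` a lattice. The ideal `I` killing all irreducible lattices is nilpotent up to torsion:
`m I ^ k = 0` for some `m ≠ 0`.

Over `R ⧸ I`, lattices of bounded rank fall into finitely many isomorphism classes
(Jordan–Zassenhaus). Every irreducible lattice receives a nonzero map from one of finitely many
irreducible left ideals, and evaluating at a short vector, as in the geometry of numbers, makes its
cokernel bounded. Dévissage gives the same for all lattices of bounded rank, so each of them is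
isomorphic to a submodule of bounded exponent in one of finitely many lattices.

If `P` and `M` are projective and `P ⧸ I P ≃ M ⧸ I M`, then lifts `P → M` and `M → P` of the
isomorphism and of its inverse have composites congruent to `1` modulo `I`, hence are isomorphisms
up to `m`. So if `e` kills the torsion of `R`, then `e M` is isogenous to `e P` with a bounded
exponent, and `M` embeds in `e P × M ⧸ e M` with bounded exponent. There are finitely many choices
for this product: `P ⧸ I P` is a lattice of bounded rank over `R ⧸ I`, and `M ⧸ e M` is a quotient
of the finite module `Rⁿ ⧸ e Rⁿ`.
-/

open Module

universe u v w

section FiniteIndex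

variable {G H : Type*} [AddCommGroup G] [AddCommGroup H] [Module.Finite ℤ G]

theorem finiteIndex_of_forall_exists_zsmul_mem {N : AddSubgroup G}
    (h : ∀ x, ∃ q : ℤ, q ≠ 0 ∧ q • x ∈ N) : N.FiniteIndex := by
  rw [AddSubgroup.finiteIndex_iff_finite_quotient]
  have : Module.Finite ℤ (G ⧸ N) :=
    .of_surjective (QuotientAddGroup.mk' N).toIntLinearMap (QuotientAddGroup.mk'_surjective N)
  refine Module.finite_of_fg_torsion (G ⧸ N) fun y => ?_
  obtain ⟨x, rfl⟩ := QuotientAddGroup.mk_surjective y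
  obtain ⟨q, hq, hx⟩ := h x
  exact ⟨⟨q, mem_nonZeroDivisors_of_ne_zero hq⟩, (QuotientAddGroup.eq_zero_iff _).2 hx⟩

theorem exists_zsmul_mem_of_finiteIndex {G : Type*} [AddCommGroup G] (N : AddSubgroup G)
    [N.FiniteIndex] : ∃ q : ℤ, q ≠ 0 ∧ ∀ x, q • x ∈ N :=
  ⟨N.index, mod_cast AddSubgroup.FiniteIndex.index_ne_zero, fun x => by
    simpa using AddSubgroup.nsmul_index_mem N x⟩

theorem finiteIndex_range_iff_finrank_le {f : H →+ G} (hf : Function.Injective f) :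
    f.range.FiniteIndex ↔ finrank ℤ G ≤ finrank ℤ H := by
  have hadd := Submodule.finrank_quotient_add_finrank (R := ℤ) (LinearMap.range f.toIntLinearMap)
  rw [LinearMap.finrank_range_of_inj (f := f.toIntLinearMap) hf] at hadd
  have htors : finrank ℤ G ≤ finrank ℤ H ↔
      Module.IsTorsion ℤ (G ⧸ LinearMap.range f.toIntLinearMap) := by
    rw [← Module.finrank_eq_zero_iff_isTorsion]
    lia
  rw [htors]
  constructor
  · intro hfin y
    obtain ⟨x, rfl⟩ := Submodule.Quotient.mk_surjective _ y
    obtain ⟨q, hq, hx⟩ := exists_zsmul_mem_of_finiteIndex f.range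
    exact ⟨⟨q, mem_nonZeroDivisors_of_ne_zero hq⟩, (Submodule.Quotient.mk_eq_zero _).2 (hx x)⟩
  · refine fun h => finiteIndex_of_forall_exists_zsmul_mem fun x => ?_
    obtain ⟨q, hx⟩ := @h (Submodule.Quotient.mk x)
    exact ⟨q, nonZeroDivisors.ne_zero q.2, (Submodule.Quotient.mk_eq_zero _).1 hx⟩

theorem finrank_int_le_of_injective {f : H →+ G} (hf : Function.Injective f) :
    finrank ℤ H ≤ finrank ℤ G :=
  LinearMap.finrank_le_finrank_of_injective (f := f.toIntLinearMap) hf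

end FiniteIndex

section IntFinite

variable {R : Type*} [Ring R] {L : Type*} [AddCommGroup L] [Module R L]

theorem finite_int_submodule [Module.Finite ℤ L] (N : Submodule R L) : Module.Finite ℤ N :=
  .of_injective N.subtype.toAddMonoidHom.toIntLinearMap N.injective_subtype

theorem finiteIndex_submodule_iff_finrank_le [Module.Finite ℤ L] {N : Submodule R L} :
    N.toAddSubgroup.FiniteIndex ↔ finrank ℤ L ≤ finrank ℤ N := by
  have hrange : N.subtype.toAddMonoidHom.range = N.toAddSubgroup := by
    ext; simp
  rw [← finiteIndex_range_iff_finrank_le (f := N.subtype.toAddMonoidHom) N.injective_subtype,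
    hrange]

theorem isTorsionFree_int_quotient_iff {N : Submodule R L} :
    IsTorsionFree ℤ (L ⧸ N) ↔ ∀ (q : ℤ) (x : L), q ≠ 0 → q • x ∈ N → x ∈ N := by
  rw [Module.isTorsionFree_iff_smul_eq_zero]
  constructor
  · intro h q x hq hx
    have hmk : q • (Submodule.Quotient.mk x : L ⧸ N) = 0 := by
      rwa [← Submodule.Quotient.mk_smul, Submodule.Quotient.mk_eq_zero]
    exact (Submodule.Quotient.mk_eq_zero N).1 ((h _ _ hmk).resolve_left hq)
  · intro h q y hy
    obtain ⟨x, rfl⟩ := Submodule.Quotient.mk_surjective _ y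
    rw [← Submodule.Quotient.mk_smul, Submodule.Quotient.mk_eq_zero] at hy
    rw [Submodule.Quotient.mk_eq_zero]
    exact or_iff_not_imp_left.2 fun hq => h q x hq hy

end IntFinite

/-- An irreducible `R`-lattice: a nonzero `R`-module `X`, free of finite rank over `ℤ`, all of
whose nonzero submodules have finite index. Equivalently, `ℚ ⊗ X` is a simple `ℚ ⊗ R`-module;
the definition avoids extending scalars. -/
structure IsIrreducibleLattice (R : Type u) (X : Type v) [Ring R] [AddCommGroup X]
    [Module R X] : Prop where
  finite : Module.Finite ℤ X
  isTorsionFree : IsTorsionFree ℤ X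
  nontrivial : Nontrivial X
  finiteIndex : ∀ N : Submodule R X, N ≠ ⊥ → N.toAddSubgroup.FiniteIndex

namespace IsIrreducibleLattice

variable {R : Type u} [Ring R] {X : Type v} {Y : Type w} [AddCommGroup X] [AddCommGroup Y]
  [Module R X] [Module R Y]

theorem injective_of_ne_zero [IsTorsionFree ℤ Y] (hX : IsIrreducibleLattice R X) {f : X →ₗ[R] Y}
    (hf : f ≠ 0) : Function.Injective f := by
  rw [← LinearMap.ker_eq_bot]
  by_contra hker
  have := hX.finiteIndex _ hker
  obtain ⟨q, hq, hmem⟩ := exists_zsmul_mem_of_finiteIndex (LinearMap.ker f).toAddSubgroup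
  refine hf (LinearMap.ext fun x => ?_)
  have hqx : q • f x = 0 := by
    rw [← map_zsmul]
    exact hmem x
  exact (smul_eq_zero.1 hqx).resolve_left hq

theorem of_injective [Nontrivial Y] (hX : IsIrreducibleLattice R X) {f : Y →ₗ[R] X}
    (hf : Function.Injective f) : IsIrreducibleLattice R Y := by
  have := hX.finite
  have := hX.isTorsionFree
  have hfin : Module.Finite ℤ Y := .of_injective f.toAddMonoidHom.toIntLinearMap hf
  refine ⟨hfin, hf.moduleIsTorsionFree f fun q x => map_zsmul f q x, ‹_›, fun N hN => ?_⟩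
  have hmap : N.map f ≠ ⊥ := fun h =>
    hN (Submodule.map_injective_of_injective hf (h.trans (Submodule.map_bot f).symm))
  have := hX.finiteIndex _ hmap
  obtain ⟨q, hq, hmem⟩ := exists_zsmul_mem_of_finiteIndex (N.map f).toAddSubgroup
  refine finiteIndex_of_forall_exists_zsmul_mem fun y => ⟨q, hq, ?_⟩
  obtain ⟨z, hz, hzy⟩ := hmem (f y)
  rw [← map_zsmul, hf.eq_iff] at hzy
  exact hzy ▸ hz

theorem finiteIndex_range (hX : IsIrreducibleLattice R X) {f : Y →ₗ[R] X} (hf : f ≠ 0) :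
    (LinearMap.range f).toAddSubgroup.FiniteIndex :=
  hX.finiteIndex _ (LinearMap.range_eq_bot.not.2 hf)

theorem of_isScalarTower (S : Type*) [Ring S] [Module S X] [SMul R S] [IsScalarTower R S X]
    (hX : IsIrreducibleLattice R X) : IsIrreducibleLattice S X where
  finite := hX.finite
  isTorsionFree := hX.isTorsionFree
  nontrivial := hX.nontrivial
  finiteIndex N hN := hX.finiteIndex (N.restrictScalars R) (by simpa using hN)

end IsIrreducibleLattice

section Existence

variable (R : Type u) [Ring R] {L : Type v} [AddCommGroup L] [Module R L] [Module.Finite ℤ L]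

theorem exists_isIrreducibleLattice_quotient [Infinite L] :
    ∃ N : Submodule R L, IsIrreducibleLattice R (L ⧸ N) ∧ finrank ℤ N < finrank ℤ L := by
  have hbot : ¬ (⊥ : Submodule R L).toAddSubgroup.FiniteIndex := by
    simp [AddSubgroup.finiteIndex_iff]
  obtain ⟨N, hN, hmax⟩ := set_has_maximal_iff_noetherian.2
    (isNoetherian_of_tower ℤ inferInstance : IsNoetherian R L)
    {N : Submodule R L | ¬ N.toAddSubgroup.FiniteIndex} ⟨⊥, hbot⟩
  have hlt (K : Submodule R L) (hK : N < K) : K.toAddSubgroup.FiniteIndex :=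
    not_not.1 fun h => hmax K h hK
  refine ⟨N, ⟨inferInstance, isTorsionFree_int_quotient_iff.2 fun q x hq hx => ?_, ?_,
    fun K hK => ?_⟩, not_le.1 (finiteIndex_submodule_iff_finrank_le.not.1 hN)⟩
  · by_contra hxN
    have := hlt _ (Submodule.lt_sup_iff_notMem.2 hxN)
    obtain ⟨q', hq', hmem⟩ :=
      exists_zsmul_mem_of_finiteIndex (N ⊔ Submodule.span R {x}).toAddSubgroup
    have hle : N ⊔ Submodule.span R {x} ≤ N.comap (DistribSMul.toLinearMap R L q) :=
      sup_le (fun y hy => N.toAddSubgroup.zsmul_mem hy q)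
        ((Submodule.span_singleton_le_iff_mem _ _).2 hx)
    exact hN <| finiteIndex_of_forall_exists_zsmul_mem fun y =>
      ⟨q * q', mul_ne_zero hq hq', by rw [mul_smul]; exact hle (hmem y)⟩
  · rw [Submodule.Quotient.nontrivial_iff]
    rintro rfl
    exact hN (inferInstanceAs (⊤ : AddSubgroup L).FiniteIndex)
  · have hcomap : N < K.comap N.mkQ := by
      refine (Submodule.le_comap_mkQ N K).lt_of_ne fun h => hK ?_
      rw [← Submodule.map_comap_eq_of_surjective N.mkQ_surjective K, ← h, Submodule.mkQ_map_self]
    exact ⟨AddSubgroup.index_comap_of_surjective K.toAddSubgroup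
      (f := N.mkQ.toAddMonoidHom) N.mkQ_surjective ▸ (hlt _ hcomap).index_ne_zero⟩

variable {R}

theorem exists_isIrreducibleLattice_le [IsTorsionFree ℤ L] {K : Submodule R L} (hK : K ≠ ⊥) :
    ∃ S ≤ K, IsIrreducibleLattice R S := by
  obtain ⟨S, ⟨hSK, hS⟩, hmin⟩ := WellFounded.has_min
    (InvImage.wf (fun S : Submodule R L => finrank ℤ S) Nat.lt_wfRel.wf)
    {S : Submodule R L | S ≤ K ∧ S ≠ ⊥} ⟨K, le_rfl, hK⟩
  have := finite_int_submodule S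
  refine ⟨S, hSK, inferInstance, ?_, (Submodule.nontrivial_iff_ne_bot).2 hS, fun N hN => ?_⟩
  · exact S.injective_subtype.moduleIsTorsionFree _ fun q x => map_zsmul S.subtype q x
  · have hmap : N.map S.subtype ≠ ⊥ := fun h => hN <|
      Submodule.map_injective_of_injective S.injective_subtype (h.trans (Submodule.map_bot _).symm)
    have hle : finrank ℤ S ≤ finrank ℤ (N.map S.subtype) :=
      not_lt.1 (hmin _ ⟨(Submodule.map_subtype_le S N).trans hSK, hmap⟩)
    have hequiv : finrank ℤ (N.map S.subtype) ≤ finrank ℤ N := by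
      have := finite_int_submodule N
      exact finrank_int_le_of_injective
        (f := (Submodule.equivMapOfInjective S.subtype S.injective_subtype N).symm.toAddMonoidHom)
        (LinearEquiv.injective _)
    exact finiteIndex_submodule_iff_finrank_le.2 (hle.trans hequiv)

end Existence

section Radical

variable (R : Type u) [Ring R] (M : Type v) [AddCommGroup M] [Module R M]

/-- The intersection of all submodules of `M` with irreducible lattice quotient, an integral
analogue of the Jacobson radical of `ℚ ⊗ M`. -/
def latticeRadical : Submodule R M :=
  sInf {N | IsIrreducibleLattice R (M ⧸ N)}

instance : IsTorsionFree ℤ (M ⧸ latticeRadical R M) := by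
  refine isTorsionFree_int_quotient_iff.2 fun q x hq hx => ?_
  simp only [latticeRadical, Submodule.mem_sInf, Set.mem_ofPred_eq] at hx ⊢
  exact fun N hN => isTorsionFree_int_quotient_iff.1 hN.isTorsionFree q x hq (hx N hN)

variable {R M}

theorem isTorsionFree_of_latticeRadical_eq_bot (hM : latticeRadical R M = ⊥) :
    IsTorsionFree ℤ M :=
  .of_smul_eq_zero fun q x hx => or_iff_not_imp_left.2 fun hq => by
    have hmem : q • x ∈ latticeRadical R M := hx ▸ zero_mem _
    simpa [hM] using isTorsionFree_int_quotient_iff.1 inferInstance q x hq hmem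

theorem IsIrreducibleLattice.apply_eq_zero_of_mem_latticeRadical {X : Type w} [AddCommGroup X]
    [Module R X] (hX : IsIrreducibleLattice R X) (f : M →ₗ[R] X) {x : M}
    (hx : x ∈ latticeRadical R M) : f x = 0 := by
  by_contra hfx
  have : Nontrivial (M ⧸ LinearMap.ker f) :=
    (Submodule.Quotient.nontrivial_iff).2 fun h => hfx (h ▸ Submodule.mem_top : x ∈ LinearMap.ker f)
  have hquot : IsIrreducibleLattice R (M ⧸ LinearMap.ker f) :=
    hX.of_injective (f := (LinearMap.ker f).liftQ f le_rfl)
      (LinearMap.ker_eq_bot.1 (Submodule.ker_liftQ_eq_bot' _ _ rfl))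
  exact hfx ((Submodule.mem_sInf.1 hx) _ hquot)

variable (R) in
/-- The lattice radical of the left regular module, as an ideal of the ring. -/
abbrev latticeRadicalIdeal : Ideal R := latticeRadical R R

theorem IsIrreducibleLattice.smul_eq_zero_of_mem_latticeRadicalIdeal {X : Type w} [AddCommGroup X]
    [Module R X] (hX : IsIrreducibleLattice R X) {a : R} (ha : a ∈ latticeRadicalIdeal R) (x : X) :
    a • x = 0 :=
  hX.apply_eq_zero_of_mem_latticeRadical (LinearMap.toSpanSingleton R X x) ha

variable (R)

instance : (latticeRadicalIdeal R).IsTwoSided where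
  mul_mem_of_left b ha := Submodule.mem_sInf.2 fun N hN => by
    rw [← Submodule.Quotient.mk_eq_zero, ← smul_eq_mul, Submodule.Quotient.mk_smul]
    exact hN.smul_eq_zero_of_mem_latticeRadicalIdeal ha _

theorem latticeRadicalIdeal_quotient_latticeRadicalIdeal :
    latticeRadicalIdeal (R ⧸ latticeRadicalIdeal R) = ⊥ := by
  refine eq_bot_iff.2 fun a ha => ?_
  obtain ⟨b, rfl⟩ := Ideal.Quotient.mk_surjective a
  rw [Submodule.mem_bot, Ideal.Quotient.eq_zero_iff_mem]
  refine Submodule.mem_sInf.2 fun (N : Ideal R) hN => ?_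
  have hkill : Module.IsTorsionBySet R (R ⧸ N) (latticeRadicalIdeal R) := fun x a =>
    hN.smul_eq_zero_of_mem_latticeRadicalIdeal a.2 x
  let _ := hkill.module
  have := hkill.isScalarTower (S := R)
  have hone : Ideal.Quotient.mk (latticeRadicalIdeal R) b • (Submodule.Quotient.mk 1 : R ⧸ N) = 0 :=
    (hN.of_isScalarTower _).smul_eq_zero_of_mem_latticeRadicalIdeal ha _
  rw [Module.IsTorsionBySet.mk_smul, ← Submodule.Quotient.mk_smul, smul_eq_mul, mul_one] at hone
  exact (Submodule.Quotient.mk_eq_zero N).1 hone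

variable {R}

theorem finite_latticeRadicalIdeal_pow_smul_top (r : ℕ) {M : Type v} [AddCommGroup M] [Module R M]
    [Module.Finite ℤ M] (hr : finrank ℤ M ≤ r) :
    Finite ↥(latticeRadicalIdeal R ^ r • (⊤ : Submodule R M)) := by
  induction r generalizing M with
  | zero =>
    rcases finite_or_infinite M with _ | _
    · infer_instance
    · obtain ⟨N, -, hN⟩ := exists_isIrreducibleLattice_quotient R (L := M)
      lia
  | succ r ih =>
    rcases finite_or_infinite M with _ | _
    · infer_instance
    obtain ⟨N, hirr, hN⟩ := exists_isIrreducibleLattice_quotient R (L := M)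
    have := finite_int_submodule N
    have := ih (M := N) (by lia)
    have hle : latticeRadicalIdeal R • (⊤ : Submodule R M) ≤ N :=
      Submodule.smul_le.2 fun a ha x _ => by
        rw [← Submodule.Quotient.mk_eq_zero, Submodule.Quotient.mk_smul]
        exact hirr.smul_eq_zero_of_mem_latticeRadicalIdeal ha _
    have hpow : latticeRadicalIdeal R ^ (r + 1) • (⊤ : Submodule R M) ≤
        (latticeRadicalIdeal R ^ r • (⊤ : Submodule R N)).map N.subtype := by
      rw [Submodule.pow_succ, ← smul_eq_mul, Submodule.smul_assoc, Submodule.map_smul'',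
        Submodule.map_subtype_top]
      exact smul_mono_right _ hle
    exact ((Set.toFinite _).image N.subtype).subset hpow

variable (R) in
theorem exists_nsmul_latticeRadicalIdeal_pow_eq_zero [Module.Finite ℤ R] :
    ∃ m k : ℕ, m ≠ 0 ∧ ∀ a ∈ latticeRadicalIdeal R ^ k, m • a = 0 := by
  have hfin := finite_latticeRadicalIdeal_pow_smul_top (R := R) (M := R) _ le_rfl
  set J := latticeRadicalIdeal R ^ finrank ℤ R • (⊤ : Submodule R R)
  refine ⟨Nat.card J, finrank ℤ R, Nat.card_pos.ne', fun a ha => ?_⟩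
  have haJ : a ∈ J := mul_one a ▸ Submodule.smul_mem_smul ha (Submodule.mem_top (x := (1 : R)))
  exact congrArg Subtype.val (card_nsmul_eq_zero' (x := (⟨a, haJ⟩ : J)))

end Radical

section Socle

variable (R : Type u) [Ring R] (M : Type v) [AddCommGroup M] [Module R M]

/-- The sum of all irreducible sublattices of `M`, an integral analogue of the socle of
`ℚ ⊗ M`. -/
def latticeSocle : Submodule R M :=
  sSup {S | IsIrreducibleLattice R S}

variable {R M}

theorem finrank_inf_lt_of_notMem [Module.Finite ℤ M] {K N : Submodule R M}
    (hN : IsTorsionFree ℤ (M ⧸ N)) {x : M} (hxK : x ∈ K) (hxN : x ∉ N) :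
    finrank ℤ ↥(K ⊓ N) < finrank ℤ K := by
  have := finite_int_submodule K
  by_contra! hle
  have := (finiteIndex_range_iff_finrank_le
    (f := (Submodule.inclusion (inf_le_left : K ⊓ N ≤ K)).toAddMonoidHom)
    (Submodule.inclusion_injective inf_le_left)).2 hle
  obtain ⟨q, hq, hmem⟩ := exists_zsmul_mem_of_finiteIndex
    (Submodule.inclusion (inf_le_left : K ⊓ N ≤ K)).toAddMonoidHom.range
  obtain ⟨y, hy⟩ := hmem ⟨x, hxK⟩
  have hqx : (y : M) = q • x := congrArg Subtype.val hy
  exact hxN (isTorsionFree_int_quotient_iff.1 hN q x hq (hqx ▸ y.2.2))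

theorem exists_zsmul_mem_latticeSocle [Module.Finite ℤ M] (hM : latticeRadical R M = ⊥)
    (K : Submodule R M) : ∀ x ∈ K, ∃ q : ℤ, q ≠ 0 ∧ q • x ∈ latticeSocle R M := by
  have := isTorsionFree_of_latticeRadical_eq_bot hM
  induction h : finrank ℤ K using Nat.strong_induction_on generalizing K with
  | _ r ih =>
  rcases eq_or_ne K ⊥ with rfl | hK
  · exact fun x hx => ⟨1, one_ne_zero, by simp [(Submodule.mem_bot R).1 hx]⟩
  obtain ⟨S, hSK, hS⟩ := exists_isIrreducibleLattice_le hK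
  obtain ⟨s₀, hs₀⟩ := @exists_ne _ hS.nontrivial 0
  obtain ⟨N, hN, hs₀N⟩ : ∃ N : Submodule R M, IsIrreducibleLattice R (M ⧸ N) ∧ (s₀ : M) ∉ N := by
    by_contra! hall
    have hmem : (s₀ : M) ∈ latticeRadical R M := Submodule.mem_sInf.2 hall
    exact hs₀ (by simpa [hM] using hmem)
  have := hN.isTorsionFree
  have hf : N.mkQ ∘ₗ S.subtype ≠ 0 := fun h =>
    hs₀N ((Submodule.Quotient.mk_eq_zero N).1 (LinearMap.congr_fun h s₀))
  intro x hx
  have := hN.finiteIndex_range hf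
  obtain ⟨q, hq, hmem⟩ := exists_zsmul_mem_of_finiteIndex
    (LinearMap.range (N.mkQ ∘ₗ S.subtype)).toAddSubgroup
  obtain ⟨s, hs⟩ := hmem (N.mkQ x)
  have hdiff : q • x - s ∈ K ⊓ N := by
    refine ⟨K.sub_mem (K.toAddSubgroup.zsmul_mem hx q) (hSK s.2), ?_⟩
    rw [SetLike.mem_coe, ← Submodule.Quotient.mk_eq_zero]
    exact sub_eq_zero.2 hs.symm
  obtain ⟨q', hq', hmem'⟩ := ih _ (h ▸ finrank_inf_lt_of_notMem hN.isTorsionFree (hSK s₀.2) hs₀N)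
    (K ⊓ N) rfl _ hdiff
  refine ⟨q' * q, mul_ne_zero hq' hq, ?_⟩
  have hs' : (s : M) ∈ latticeSocle R M := le_sSup (a := S) hS s.2
  rw [mul_smul, ← sub_add_cancel (q • x) (s : M), smul_add]
  exact add_mem hmem' ((latticeSocle R M).toAddSubgroup.zsmul_mem hs' q')

theorem finiteIndex_latticeSocle [Module.Finite ℤ M] (hM : latticeRadical R M = ⊥) :
    (latticeSocle R M).toAddSubgroup.FiniteIndex :=
  finiteIndex_of_forall_exists_zsmul_mem fun x =>
    exists_zsmul_mem_latticeSocle hM ⊤ x Submodule.mem_top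

end Socle

section GeometryOfNumbers

variable {G H K ι κ μ : Type*} [AddCommGroup G] [AddCommGroup H] [AddCommGroup K]

/-- A bounded box with more points than the index of `N` contains two points congruent mod `N`. -/
theorem exists_short_vector [Fintype ι] [Nonempty ι] (b : Basis ι ℤ G) (N : AddSubgroup G)
    [N.FiniteIndex] :
    ∃ m : ℕ, m ^ Fintype.card ι ≤ N.index ∧ ∃ v ∈ N, v ≠ 0 ∧ ∀ i, |b.repr v i| ≤ m := by
  set m := Nat.nthRoot (Fintype.card ι) N.index
  refine ⟨m, Nat.pow_nthRoot_le (.inl Fintype.card_ne_zero), ?_⟩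
  let vec (a : ι → Fin (m + 1)) : G := ∑ i, (a i : ℤ) • b i
  have hrepr (a : ι → Fin (m + 1)) (i : ι) : b.repr (vec a) i = a i :=
    congrFun (b.repr_sum_self _) i
  have : Fintype (G ⧸ N) := N.fintypeQuotientOfFiniteIndex
  classical
  obtain ⟨a, a', hne, heq⟩ := Fintype.exists_ne_map_eq_of_card_lt
    (fun a => (vec a : G ⧸ N)) (by
      rw [← Nat.card_eq_fintype_card (α := G ⧸ N), ← AddSubgroup.index_eq_card, Fintype.card_fun,
        Fintype.card_fin]
      exact Nat.lt_pow_nthRoot_add_one Fintype.card_ne_zero N.index)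
  refine ⟨vec a' - vec a, ?_, fun h => hne (funext fun i => ?_), fun i => ?_⟩
  · rw [sub_eq_neg_add]
    exact QuotientAddGroup.eq.1 heq
  · have := hrepr a i
    rw [← sub_eq_zero.1 h, hrepr] at this
    exact Fin.ext (by exact_mod_cast this.symm)
  · rw [map_sub, Finsupp.sub_apply, hrepr, hrepr, abs_le]
    have ha := (a i).is_le
    have ha' := (a' i).is_le
    lia

theorem exists_abs_repr_le_mul [Finite ι] [Finite κ] [Finite μ] (b : Basis ι ℤ G)
    (b' : Basis κ ℤ H) (c : Basis μ ℤ K) (β : G →+ H →+ K) :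
    ∃ C : ℕ, ∀ (m : ℕ) (v : G), (∀ i, |b.repr v i| ≤ m) →
      ∀ j k, |c.repr (β v (b' j)) k| ≤ (C * m : ℕ) := by
  have := Fintype.ofFinite ι
  obtain ⟨C, hC⟩ : ∃ C : ℕ, ∀ p : ι × κ × μ, |c.repr (β (b p.1) (b' p.2.1)) p.2.2| ≤ C := by
    obtain ⟨C, hC⟩ := (Set.finite_range fun p : ι × κ × μ =>
      (c.repr (β (b p.1) (b' p.2.1)) p.2.2).natAbs).bddAbove
    exact ⟨C, fun p => by
      rw [← Int.natCast_natAbs]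
      exact_mod_cast hC ⟨p, rfl⟩⟩
  refine ⟨Fintype.card ι * C, fun m v hv j k => ?_⟩
  have hexpand : c.repr (β v (b' j)) k = ∑ i, b.repr v i * c.repr (β (b i) (b' j)) k := by
    conv_lhs => rw [← b.sum_repr v]
    simp only [map_sum, map_zsmul, AddMonoidHom.finsetSum_apply, AddMonoidHom.zsmul_apply,
      Finsupp.finsetSum_apply, Finsupp.smul_apply, smul_eq_mul]
  calc |c.repr (β v (b' j)) k|
      ≤ ∑ i, |b.repr v i * c.repr (β (b i) (b' j)) k| := hexpand ▸ Finset.abs_sum_le_sum_abs _ _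
    _ ≤ ∑ _i : ι, (m : ℤ) * C := Finset.sum_le_sum fun i _ => by
        rw [abs_mul]
        exact mul_le_mul (hv i) (hC (i, j, k)) (abs_nonneg _) (by positivity)
    _ = (Fintype.card ι * C * m : ℕ) := by
        simp only [Finset.sum_const, Finset.card_univ, nsmul_eq_mul]
        push_cast
        ring

theorem index_range_le_of_abs_repr_le [Fintype ι] (b : Basis ι ℤ G) (b' : Basis ι ℤ H)
    {f : H →+ G} (hf : Function.Injective f) {B : ℕ} (hB : ∀ i j, |b.repr (f (b' j)) i| ≤ B) :
    f.range.index ≤ (Fintype.card ι).factorial * B ^ Fintype.card ι := by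
  classical
  let e : H ≃+ f.range := AddMonoidHom.ofInjective hf
  have hdet := Matrix.det_le (abv := AbsoluteValue.abs) (x := (B : ℤ))
    (A := b.toMatrix fun j => (b'.map e.toIntLinearEquiv j : G)) fun i j => hB i j
  rw [AddSubgroup.index_eq_natAbs_det b f.range (b'.map e.toIntLinearEquiv), Basis.det_apply]
  zify
  simpa using hdet

theorem exists_index_range_le_mul_pow [Fintype ι] [Module.Finite ℤ H] [Module.Free ℤ H]
    (b : Basis ι ℤ G) (β : G →+ H →+ G) :
    ∃ C : ℕ, ∀ (m : ℕ) (v : G), (∀ i, |b.repr v i| ≤ m) → Function.Injective (β v) →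
      (β v).range.index ≤ C * m ^ Fintype.card ι := by
  have : Module.Finite ℤ G := .of_basis b
  rcases eq_or_ne (finrank ℤ H) (Fintype.card ι) with hrank | hrank
  · let b' : Basis ι ℤ H := (finBasisOfFinrankEq ℤ H hrank).reindex (Fintype.equivFin ι).symm
    obtain ⟨C, hC⟩ := exists_abs_repr_le_mul b b' b β
    refine ⟨(Fintype.card ι).factorial * C ^ Fintype.card ι, fun m v hv hinj => ?_⟩
    rw [mul_assoc, ← mul_pow]
    exact index_range_le_of_abs_repr_le b b' hinj fun i j => hC m v hv j i
  · refine ⟨0, fun m v _ hinj => ?_⟩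
    rw [zero_mul, nonpos_iff_eq_zero, ← AddSubgroup.not_finiteIndex_iff,
      finiteIndex_range_iff_finrank_le hinj]
    have hle := finrank_int_le_of_injective hinj
    rw [finrank_eq_card_basis b] at hle ⊢
    lia

theorem exists_mem_forall_index_range_le {J : Type*} [Finite J] {H : J → Type*}
    [∀ j, AddCommGroup (H j)] [∀ j, Module.Finite ℤ (H j)] [∀ j, Module.Free ℤ (H j)]
    [Module.Finite ℤ G] [Module.Free ℤ G] [Nontrivial G] (β : ∀ j, G →+ H j →+ G) :
    ∃ C : ℕ, ∀ N : AddSubgroup G, N.FiniteIndex → ∃ v ∈ N, v ≠ 0 ∧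
      ∀ j, Function.Injective (β j v) → (β j v).range.index ≤ C * N.index := by
  let b := Module.Free.chooseBasis ℤ G
  choose C hC using fun j => exists_index_range_le_mul_pow b (β j)
  obtain ⟨C', hC'⟩ := (Set.finite_range C).bddAbove
  refine ⟨C', fun N hN => ?_⟩
  obtain ⟨m, hm, v, hvN, hv0, hv⟩ := exists_short_vector b N
  exact ⟨v, hvN, hv0, fun j hinj => (hC j m v hv hinj).trans (Nat.mul_le_mul (hC' ⟨j, rfl⟩) hm)⟩

end GeometryOfNumbers

section Isogeny

variable {R : Type u} [Ring R] {M N : Type*} [AddCommGroup M] [AddCommGroup N] [Module R M]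
  [Module R N]

/-- An injective linear map whose cokernel is killed by `q`: an isogeny of lattices, with control
on its cokernel. -/
structure IsIsogeny (q : ℕ) (f : M →ₗ[R] N) : Prop where
  injective : Function.Injective f
  nsmul_mem_range : ∀ y, q • y ∈ LinearMap.range f

theorem IsIsogeny.exists_dual [IsTorsionFree ℤ N] {q : ℕ} (hq : q ≠ 0) {f : M →ₗ[R] N}
    (hf : IsIsogeny q f) : ∃ g : N →ₗ[R] M, IsIsogeny q g := by
  choose g hg using hf.nsmul_mem_range
  refine ⟨⟨⟨g, fun x y => hf.injective ?_⟩, fun r x => hf.injective ?_⟩, fun x y hxy => ?_,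
    fun x => ⟨f x, hf.injective ?_⟩⟩
  · rw [map_add, hg, hg, hg, smul_add]
  · rw [RingHom.id_apply, map_smul, hg, hg, smul_comm]
  · have hfg : q • x = q • y := by
      rw [← hg, ← hg]
      exact congrArg f hxy
    rw [← natCast_zsmul, ← natCast_zsmul] at hfg
    exact smul_right_injective N (Nat.cast_ne_zero.2 hq : (q : ℤ) ≠ 0) hfg
  · rw [map_nsmul]
    exact hg (f x)

theorem IsIsogeny.coprod {L F S : Type*} [AddCommGroup L] [AddCommGroup F] [AddCommGroup S]
    [Module R L] [Module R F] [Module R S] {N : Submodule R L} {p q : ℕ} {f : F →ₗ[R] N}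
    {g : S →ₗ[R] L} (hf : IsIsogeny p f) (hg : IsIsogeny q (N.mkQ ∘ₗ g)) :
    IsIsogeny (p * q) ((N.subtype ∘ₗ f).coprod g) := by
  refine ⟨LinearMap.ker_eq_bot.1 (LinearMap.ker_eq_bot'.2 ?_), fun y => ?_⟩
  · rintro ⟨a, b⟩ hab
    rw [LinearMap.coprod_apply] at hab
    have hb : b = 0 := hg.injective <| by
      rw [map_zero, LinearMap.comp_apply, Submodule.mkQ_apply, Submodule.Quotient.mk_eq_zero,
        ← neg_eq_of_add_eq_zero_right hab]
      exact N.neg_mem (f a).2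
    subst hb
    have ha : a = 0 := hf.injective (Subtype.ext (by simpa using hab))
    rw [ha, Prod.mk_zero_zero]
  · obtain ⟨s, hs⟩ := hg.nsmul_mem_range (N.mkQ y)
    have hmem : q • y - g s ∈ N := by
      rw [← Submodule.Quotient.mk_eq_zero]
      exact sub_eq_zero.2 hs.symm
    obtain ⟨a, ha⟩ := hf.nsmul_mem_range ⟨_, hmem⟩
    refine ⟨(a, p • s), ?_⟩
    have ha' : (f a : L) = p • (q • y - g s) := congrArg Subtype.val ha
    rw [LinearMap.coprod_apply, LinearMap.comp_apply, Submodule.subtype_apply, ha', map_nsmul,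
      ← smul_add, sub_add_cancel, mul_smul]

theorem IsIrreducibleLattice.exists_isIsogeny (hN : IsIrreducibleLattice R N) {f : M →ₗ[R] N}
    (hf : Function.Injective f) (hf0 : f ≠ 0) : ∃ q ≠ 0, IsIsogeny q f := by
  have := hN.finiteIndex_range hf0
  exact ⟨_, AddSubgroup.FiniteIndex.index_ne_zero, hf,
    AddSubgroup.nsmul_index_mem (LinearMap.range f).toAddSubgroup⟩

end Isogeny

section UniformIsogeny

variable {R : Type u} [Ring R]

theorem exists_finset_sup_finiteIndex {M : Type v} [AddCommGroup M] [Module R M]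
    [Module.Finite ℤ M] (hM : latticeRadical R M = ⊥) :
    ∃ t : Finset (Submodule R M), (∀ S ∈ t, IsIrreducibleLattice R S) ∧
      (t.sup id).toAddSubgroup.FiniteIndex := by
  have : IsNoetherian R M := isNoetherian_of_tower ℤ inferInstance
  obtain ⟨t, ht, hsup⟩ := CompleteLattice.WellFoundedGT.isSupFiniteCompact (Submodule R M)
    {S | IsIrreducibleLattice R S}
  exact ⟨t, fun S hS => ht hS, hsup ▸ finiteIndex_latticeSocle hM⟩

theorem IsIrreducibleLattice.exists_mem_injective_domRestrict {X : Type w} [AddCommGroup X]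
    [Module R X] (hX : IsIrreducibleLattice R X) {t : Finset (Ideal R)}
    (ht : ∀ S ∈ t, IsIrreducibleLattice R S) (hsup : (t.sup id).toAddSubgroup.FiniteIndex)
    {x : X} (hx : x ≠ 0) :
    ∃ S ∈ t, Function.Injective ((LinearMap.toSpanSingleton R X x).domRestrict S) := by
  have := hX.isTorsionFree
  by_contra! hall
  have hle : t.sup id ≤ LinearMap.ker (LinearMap.toSpanSingleton R X x) :=
    Finset.sup_le fun S hS s hs => by
      have hzero := not_imp_comm.1 (ht S hS).injective_of_ne_zero (hall S hS)
      exact LinearMap.congr_fun hzero ⟨s, hs⟩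
  obtain ⟨q, hq, hmem⟩ := exists_zsmul_mem_of_finiteIndex (t.sup id).toAddSubgroup
  have hqx : q • x = 0 := by
    simpa only [LinearMap.mem_ker, LinearMap.toSpanSingleton_apply, smul_assoc, one_smul]
      using hle (hmem 1)
  exact hx ((smul_eq_zero.1 hqx).resolve_left hq)

/-- Embed `X` in some `S ∈ t`; a short vector of the image makes the orbit map of `X` have small
index, uniformly in `X`. -/
theorem exists_index_range_domRestrict_le [Module.Finite ℤ R] {t : Finset (Ideal R)}
    (ht : ∀ S ∈ t, IsIrreducibleLattice R S) (hsup : (t.sup id).toAddSubgroup.FiniteIndex) :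
    ∃ C : ℕ, ∀ (X : Type w) [AddCommGroup X] [Module R X], IsIrreducibleLattice R X →
      ∃ S ∈ t, ∃ x : X, Function.Injective ((LinearMap.toSpanSingleton R X x).domRestrict S) ∧
        (LinearMap.range ((LinearMap.toSpanSingleton R X x).domRestrict S)).toAddSubgroup.index
          ≤ C := by
  have hfin (S : t) : Module.Finite ℤ (S : Ideal R) := (ht S S.2).finite
  have htf (S : t) : IsTorsionFree ℤ (S : Ideal R) := (ht S S.2).isTorsionFree
  have hnt (S : t) : Nontrivial (S : Ideal R) := (ht S S.2).nontrivial
  let β (S T : t) : S →+ T →+ S := (smulAddHom R S).flip.compl₂ (T : Ideal R).subtype.toAddMonoidHom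
  choose C hC using fun S => exists_mem_forall_index_range_le (β S)
  obtain ⟨C', hC'⟩ := (Set.finite_range C).bddAbove
  refine ⟨C', fun X _ _ hX => ?_⟩
  have := hX.isTorsionFree
  obtain ⟨x₁, hx₁⟩ := @exists_ne _ hX.nontrivial 0
  obtain ⟨S, hS, hinj⟩ := hX.exists_mem_injective_domRestrict ht hsup hx₁
  have := (ht S hS).nontrivial
  obtain ⟨q, hq, hiso⟩ := hX.exists_isIsogeny hinj (LinearMap.ne_zero_of_injective hinj)
  obtain ⟨ψ, hψ⟩ := hiso.exists_dual hq
  have := hX.nontrivial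
  have hN := (ht S hS).finiteIndex_range (LinearMap.ne_zero_of_injective hψ.injective)
  obtain ⟨v, ⟨x, hxv⟩, hv, hindex⟩ := hC ⟨S, hS⟩ (LinearMap.range ψ).toAddSubgroup hN
  replace hxv : ψ x = v := hxv
  obtain ⟨T, hT, hTinj⟩ := (ht S hS).exists_mem_injective_domRestrict ht hsup hv
  set f := (LinearMap.toSpanSingleton R X x).domRestrict T
  have hcomp : ψ ∘ₗ f = (LinearMap.toSpanSingleton R S v).domRestrict T := by
    ext s
    simp [f, hxv]
  refine ⟨T, hT, x, ?_, ?_⟩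
  · rw [← hcomp, LinearMap.coe_comp] at hTinj
    exact hTinj.of_comp
  · have hβ : (β ⟨S, hS⟩ ⟨T, hT⟩ v).range =
        (LinearMap.range f).toAddSubgroup.map ψ.toAddMonoidHom :=
      (congrArg (fun g : T →ₗ[R] S => g.toAddMonoidHom.range) hcomp.symm).trans
        (AddMonoidHom.map_range ψ.toAddMonoidHom f.toAddMonoidHom).symm
    have hle := hindex ⟨T, hT⟩ hTinj
    rw [hβ, AddSubgroup.index_map_of_injective _ hψ.injective] at hle
    exact (Nat.le_of_mul_le_mul_right hle (Nat.pos_of_ne_zero hN.index_ne_zero)).trans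
      (hC' ⟨_, rfl⟩)

theorem exists_finset_forall_isIsogeny [Module.Finite ℤ R] (hR : latticeRadicalIdeal R = ⊥) :
    ∃ (t : Finset (Ideal R)) (q : ℕ), q ≠ 0 ∧ (∀ S ∈ t, IsIrreducibleLattice R S) ∧
      ∀ (X : Type w) [AddCommGroup X] [Module R X], IsIrreducibleLattice R X →
        ∃ S ∈ t, ∃ x : X, IsIsogeny q ((LinearMap.toSpanSingleton R X x).domRestrict S) := by
  obtain ⟨t, ht, hsup⟩ := exists_finset_sup_finiteIndex hR
  obtain ⟨C, hC⟩ := exists_index_range_domRestrict_le.{u, w} ht hsup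
  refine ⟨t, C.factorial, C.factorial_ne_zero, ht, fun X _ _ hX => ?_⟩
  obtain ⟨S, hS, x, hinj, hle⟩ := hC X hX
  have := (ht S hS).nontrivial
  have := hX.finiteIndex_range (LinearMap.ne_zero_of_injective hinj)
  refine ⟨S, hS, x, hinj, fun y => ?_⟩
  obtain ⟨c, hc⟩ := Nat.dvd_factorial
    (Nat.pos_of_ne_zero AddSubgroup.FiniteIndex.index_ne_zero) hle
  rw [hc, mul_nsmul]
  exact AddSubgroup.nsmul_mem _ (AddSubgroup.nsmul_index_mem (LinearMap.range _).toAddSubgroup y) c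

end UniformIsogeny

section IsoClasses

open CategoryTheory

variable {C : Type u} [Category.{v} C]

/-- The objects in `s` fall into finitely many isomorphism classes. -/
def IsoClassesFinite (s : Set C) : Prop :=
  ∃ t : Set C, t.Finite ∧ ∀ X ∈ s, ∃ Y ∈ t, Nonempty (X ≅ Y)

theorem IsoClassesFinite.mono {s s' : Set C} (h : s ⊆ s') (hs' : IsoClassesFinite s') :
    IsoClassesFinite s :=
  hs'.imp fun _ ht => ⟨ht.1, fun X hX => ht.2 X (h hX)⟩

theorem IsoClassesFinite.exists_finite_subset {D : Type*} {s : Set D} {F : D → C}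
    (h : IsoClassesFinite (F '' s)) :
    ∃ t ⊆ s, t.Finite ∧ ∀ X ∈ s, ∃ Y ∈ t, Nonempty (F X ≅ F Y) := by
  obtain ⟨t, ht, hst⟩ := h
  rcases s.eq_empty_or_nonempty with rfl | ⟨X₀, -⟩
  · exact ⟨∅, subset_rfl, Set.finite_empty, by simp⟩
  have : Nonempty C := ⟨F X₀⟩
  choose! G hG hiso using fun X (hX : X ∈ s) => hst (F X) (Set.mem_image_of_mem F hX)
  have hfin : (G '' s).Finite := ht.subset (Set.image_subset_iff.2 hG)
  obtain ⟨r, hrs, hr⟩ := Set.exists_subset_bijOn s G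
  refine ⟨r, hrs, .of_finite_image (hr.image_eq ▸ hfin) hr.injOn, fun X hX => ?_⟩
  obtain ⟨Y, hY, hYX⟩ := hr.surjOn (Set.mem_image_of_mem G hX)
  exact ⟨Y, hY, ⟨(hiso X hX).some ≪≫ eqToIso hYX.symm ≪≫ (hiso Y (hrs hY)).some.symm⟩⟩

end IsoClasses

section FinitelyManySubmodules

variable {R : Type u} [Ring R] {q : ℕ}

theorem finite_setOf_submodule_forall_nsmul_mem {F : Type*} [AddCommGroup F] [Module R F]
    [Module.Finite ℤ F] (hq : q ≠ 0) : {N : Submodule R F | ∀ x, q • x ∈ N}.Finite := by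
  let Q : Submodule R F := LinearMap.range (DistribSMul.toLinearMap R F q)
  have hQ : Q.toAddSubgroup.FiniteIndex :=
    finiteIndex_of_forall_exists_zsmul_mem fun x => ⟨q, mod_cast hq, x, by simp⟩
  have : Finite (F ⧸ Q) := AddSubgroup.finite_quotient_of_finiteIndex (H := Q.toAddSubgroup)
  refine (Set.toFinite (Set.range (Submodule.comap Q.mkQ))).subset fun N hN =>
    ⟨N.map Q.mkQ, ?_⟩
  rw [Submodule.comap_map_mkQ, sup_eq_right]
  rintro _ ⟨x, rfl⟩
  exact hN x

theorem isoClassesFinite_of_isIsogeny {𝓕 : Set (ModuleCat.{v} R)} (h𝓕 : 𝓕.Finite)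
    (hfin : ∀ F ∈ 𝓕, Module.Finite ℤ F) (hq : q ≠ 0) :
    IsoClassesFinite {M : ModuleCat.{v} R | ∃ F ∈ 𝓕, ∃ f : M →ₗ[R] F, IsIsogeny q f} := by
  let sub (F : ModuleCat.{v} R) : Set (ModuleCat.{v} R) :=
    (fun N : Submodule R F => ModuleCat.of R N) '' {N | ∀ x : F, q • x ∈ N}
  refine ⟨⋃ F ∈ 𝓕, sub F, h𝓕.biUnion fun F hF => ?_, ?_⟩
  · have := hfin F hF
    exact (finite_setOf_submodule_forall_nsmul_mem hq).image _
  · rintro M ⟨F, hF, f, hf⟩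
    exact ⟨ModuleCat.of R (LinearMap.range f),
      Set.mem_biUnion hF ⟨LinearMap.range f, hf.nsmul_mem_range, rfl⟩,
      ⟨(LinearEquiv.ofInjective f hf.injective).toModuleIso⟩⟩

end FinitelyManySubmodules

section JordanZassenhaus

variable {R : Type u} [Ring R]

theorem exists_finite_forall_isIsogeny [Module.Finite ℤ R] (hR : latticeRadicalIdeal R = ⊥)
    (r : ℕ) : ∃ (𝓕 : Set (ModuleCat.{u} R)) (q : ℕ), 𝓕.Finite ∧ q ≠ 0 ∧
      (∀ F ∈ 𝓕, Module.Finite ℤ F) ∧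
      ∀ (L : Type u) [AddCommGroup L] [Module R L] [Module.Finite ℤ L] [IsTorsionFree ℤ L],
        finrank ℤ L < r → ∃ F ∈ 𝓕, ∃ f : F →ₗ[R] L, IsIsogeny q f := by
  induction r with
  | zero =>
    exact ⟨∅, 1, Set.finite_empty, one_ne_zero, by simp, fun L _ _ _ _ hr => by simp at hr⟩
  | succ r ih =>
    obtain ⟨𝓕, p, h𝓕, hp, hfin, hL⟩ := ih
    obtain ⟨t, q, hq, ht, hX⟩ := exists_finset_forall_isIsogeny.{u, u} hR
    refine ⟨insert (ModuleCat.of R PUnit)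
      (Set.image2 (fun (F : ModuleCat.{u} R) (S : Ideal R) => ModuleCat.of R (F × S)) 𝓕 t), p * q,
      (h𝓕.image2 _ t.finite_toSet).insert _, mul_ne_zero hp hq, ?_, ?_⟩
    · rintro _ (rfl | ⟨F, hF, S, hS, rfl⟩)
      · exact inferInstanceAs (Module.Finite ℤ PUnit.{u + 1})
      · have := hfin F hF
        have := (ht S hS).finite
        exact inferInstanceAs (Module.Finite ℤ (F × S))
    · intro L _ _ _ _ hr
      rcases subsingleton_or_nontrivial L with _ | _
      · exact ⟨_, Set.mem_insert _ _, 0, fun _ _ _ => rfl, fun y => ⟨0, Subsingleton.elim _ _⟩⟩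
      obtain ⟨x, hx⟩ := exists_ne (0 : L)
      have : Infinite L := .of_injective _ (smul_left_injective ℤ hx)
      obtain ⟨N, hN, hNr⟩ := exists_isIrreducibleLattice_quotient R (L := L)
      have := finite_int_submodule N
      obtain ⟨F, hF, f, hf⟩ := hL N (by lia)
      obtain ⟨S, hS, x, hx⟩ := hX (L ⧸ N) hN
      obtain ⟨y, rfl⟩ := N.mkQ_surjective x
      have hg : N.mkQ ∘ₗ (LinearMap.toSpanSingleton R L y).domRestrict S =
          (LinearMap.toSpanSingleton R (L ⧸ N) (N.mkQ y)).domRestrict S := by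
        ext s
        simp
      exact ⟨_, Set.mem_insert_of_mem _ ⟨F, hF, S, hS, rfl⟩, _, hf.coprod (hg ▸ hx)⟩

theorem isoClassesFinite_lattice [Module.Finite ℤ R] (hR : latticeRadicalIdeal R = ⊥) (r : ℕ) :
    IsoClassesFinite {L : ModuleCat.{u} R |
      Module.Finite ℤ L ∧ IsTorsionFree ℤ L ∧ finrank ℤ L ≤ r} := by
  obtain ⟨𝓕, q, h𝓕, hq, hfin, hL⟩ := exists_finite_forall_isIsogeny hR (r + 1)
  refine (isoClassesFinite_of_isIsogeny h𝓕 hfin hq).mono ?_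
  rintro L ⟨_, _, hr⟩
  obtain ⟨F, hF, f, hf⟩ := hL L (Nat.lt_succ_of_le hr)
  exact ⟨F, hF, hf.exists_dual hq⟩

end JordanZassenhaus

section Torsion

variable {R : Type u} [Ring R] {P : Type v} [AddCommGroup P] [Module R P]

theorem exists_nsmul_eq_zero_of_mem_torsion (G : Type*) [AddCommGroup G] [Module.Finite ℤ G] :
    ∃ e : ℕ, e ≠ 0 ∧ ∀ x ∈ Submodule.torsion ℤ G, e • x = 0 := by
  have : Finite (Submodule.torsion ℤ G) :=
    Module.finite_of_fg_torsion _ Submodule.torsion_isTorsion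
  exact ⟨Nat.card (Submodule.torsion ℤ G), Nat.card_pos.ne', fun x hx =>
    congrArg Subtype.val (card_nsmul_eq_zero' (x := (⟨x, hx⟩ : Submodule.torsion ℤ G)))⟩

variable [Projective R P]

theorem mem_smul_top_iff_forall_linearMap_apply_mem {I : Ideal R} [I.IsTwoSided] {x : P} :
    x ∈ I • (⊤ : Submodule R P) ↔ ∀ f : P →ₗ[R] R, f x ∈ I := by
  constructor
  · intro hx f
    have hle : I • (⊤ : Submodule R P) ≤ Submodule.comap f I :=
      Submodule.smul_le.2 fun a ha y _ => by
        simpa using I.mul_mem_right (f y) ha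
    exact hle hx
  · intro hx
    obtain ⟨s, hs⟩ := Module.projective_def'.1 (inferInstance : Projective R P)
    rw [← LinearMap.id_apply (R := R) x, ← hs, LinearMap.comp_apply,
      Finsupp.linearCombination_apply]
    exact Submodule.sum_mem _ fun p _ =>
      Submodule.smul_mem_smul (hx (Finsupp.lapply p ∘ₗ s)) Submodule.mem_top

theorem isTorsionFree_int_quotient_smul_top {I : Ideal R} [I.IsTwoSided]
    (hI : IsTorsionFree ℤ (R ⧸ I)) : IsTorsionFree ℤ (P ⧸ I • (⊤ : Submodule R P)) := by
  rw [isTorsionFree_int_quotient_iff] at hI ⊢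
  simp only [mem_smul_top_iff_forall_linearMap_apply_mem, map_zsmul]
  exact fun q x hq hx f => hI q _ hq (hx f)

theorem nsmul_eq_zero_of_mem_torsion_of_projective {e : ℕ}
    (he : ∀ a ∈ Submodule.torsion ℤ R, e • a = 0) {x : P} (hx : x ∈ Submodule.torsion ℤ P) :
    e • x = 0 := by
  obtain ⟨q, hqx⟩ := hx
  have hbot : (⊥ : Ideal R) • (⊤ : Submodule R P) = ⊥ := Submodule.bot_smul _
  rw [← Submodule.mem_bot R, ← hbot, mem_smul_top_iff_forall_linearMap_apply_mem]
  intro f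
  rw [map_nsmul, he _ ⟨q, ?_⟩, Submodule.mem_bot]
  rw [Submonoid.smul_def] at hqx ⊢
  rw [← map_zsmul, hqx, map_zero]

end Torsion

section CongruentModNilpotent

variable {R : Type u} [Ring R] {I : Ideal R} {m k : ℕ} {P P' : Type v} [AddCommGroup P]
  [Module R P] [AddCommGroup P'] [Module R P']

theorem range_pow_le_pow_smul_top {u : Module.End R P}
    (hu : LinearMap.range u ≤ I • (⊤ : Submodule R P)) (j : ℕ) :
    LinearMap.range (u ^ j) ≤ I ^ j • (⊤ : Submodule R P) := by
  induction j with
  | zero => rw [Submodule.pow_zero, Ideal.one_eq_top, Submodule.top_smul]; exact le_top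
  | succ j ih =>
    calc LinearMap.range (u ^ (j + 1)) = (LinearMap.range (u ^ j)).map u := by
          rw [pow_succ', Module.End.mul_eq_comp, LinearMap.range_comp]
      _ ≤ (I ^ j • (⊤ : Submodule R P)).map u := Submodule.map_mono ih
      _ = I ^ j • LinearMap.range u := by rw [Submodule.map_smul'', LinearMap.range_eq_map]
      _ ≤ I ^ j • I • (⊤ : Submodule R P) := smul_mono_right _ hu
      _ = I ^ (j + 1) • (⊤ : Submodule R P) := by
          rw [Submodule.pow_succ, ← smul_eq_mul, Submodule.smul_assoc]

theorem exists_mul_eq_nsmul_one (hI : ∀ a ∈ I ^ k, m • a = 0) {h : Module.End R P}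
    (hh : ∀ x, x - h x ∈ I • (⊤ : Submodule R P)) :
    ∃ w : Module.End R P, w * h = m • 1 ∧ h * w = m • 1 := by
  have hrange : LinearMap.range (1 - h) ≤ I • (⊤ : Submodule R P) := by
    rintro _ ⟨x, rfl⟩
    exact hh x
  have hnil : m • (1 - h) ^ k = 0 := by
    have hle : I ^ k • (⊤ : Submodule R P) ≤ LinearMap.ker (DistribSMul.toLinearMap R P m) :=
      Submodule.smul_le.2 fun a ha x _ => by
        rw [LinearMap.mem_ker, DistribSMul.toLinearMap_apply, ← smul_assoc, hI a ha, zero_smul]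
    ext x
    exact hle (range_pow_le_pow_smul_top hrange k ⟨x, rfl⟩)
  have hleft := geom_sum_mul_neg (1 - h) k
  have hright := mul_neg_geom_sum (1 - h) k
  rw [sub_sub_cancel] at hleft hright
  refine ⟨m • ∑ i ∈ Finset.range k, (1 - h) ^ i, ?_, ?_⟩
  · rw [smul_mul_assoc, hleft, smul_sub, hnil, sub_zero]
  · rw [mul_smul_comm, hright, smul_sub, hnil, sub_zero]

theorem exists_linearMap_mk_eq [Projective R P] [I.IsTwoSided]
    (φ : (P ⧸ I • (⊤ : Submodule R P)) →ₗ[R ⧸ I] (P' ⧸ I • (⊤ : Submodule R P'))) :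
    ∃ f : P →ₗ[R] P', ∀ x, (Submodule.Quotient.mk (f x) : P' ⧸ I • (⊤ : Submodule R P')) =
      φ (Submodule.Quotient.mk x) := by
  let φ' : P →ₗ[R] (P' ⧸ I • (⊤ : Submodule R P')) :=
    { toFun x := φ (Submodule.Quotient.mk x)
      map_add' x y := by rw [Submodule.Quotient.mk_add, map_add]
      map_smul' a x := by
        rw [← Module.Quotient.mk_smul_mk, map_smul]
        exact Module.IsTorsionBySet.mk_smul _ a _ }
  obtain ⟨f, hf⟩ := Module.projective_lifting_property (Submodule.mkQ _) φ'
    (Submodule.mkQ_surjective _)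
  exact ⟨f, LinearMap.congr_fun hf⟩

/-- Lift `φ` and `φ⁻¹`; both composites are congruent to `1` modulo `I`, hence invertible up to
`m`. -/
theorem exists_linearMap_of_quotient_linearEquiv [Projective R P] [Projective R P'] [I.IsTwoSided]
    (hI : ∀ a ∈ I ^ k, m • a = 0)
    (φ : (P ⧸ I • (⊤ : Submodule R P)) ≃ₗ[R ⧸ I] (P' ⧸ I • (⊤ : Submodule R P'))) :
    ∃ f : P →ₗ[R] P', (∀ x, f x = 0 → m • x = 0) ∧ ∀ y, m • y ∈ LinearMap.range f := by
  obtain ⟨f, hf⟩ := exists_linearMap_mk_eq φ.toLinearMap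
  obtain ⟨g, hg⟩ := exists_linearMap_mk_eq φ.symm.toLinearMap
  obtain ⟨w, hw, -⟩ := exists_mul_eq_nsmul_one hI (h := g ∘ₗ f) fun x => by
    rw [← Submodule.Quotient.mk_eq_zero, Submodule.Quotient.mk_sub, LinearMap.comp_apply, hg, hf]
    simp
  obtain ⟨w', -, hw'⟩ := exists_mul_eq_nsmul_one hI (h := f ∘ₗ g) fun x => by
    rw [← Submodule.Quotient.mk_eq_zero, Submodule.Quotient.mk_sub, LinearMap.comp_apply, hf, hg]
    simp
  refine ⟨f, fun x hx => ?_, fun y => ⟨g (w' y), LinearMap.congr_fun hw' y⟩⟩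
  have hwx : w (g (f x)) = m • x := LinearMap.congr_fun hw x
  rw [← hwx, hx, map_zero, map_zero]

end CongruentModNilpotent

section NsmulRange

variable {R : Type u} [Ring R] {M N : Type*} [AddCommGroup M] [Module R M] [AddCommGroup N]
  [Module R N]

variable (R M) in
/-- The multiples of `e` in `M`. When `e` kills the torsion of `M` this is a copy of `M` modulo
torsion. -/
def nsmulRange (e : ℕ) : Submodule R M :=
  LinearMap.range (DistribSMul.toLinearMap R M e)

variable {e m : ℕ}

theorem nsmul_mem_nsmulRange (x : M) : e • x ∈ nsmulRange R M e := ⟨x, rfl⟩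

theorem isTorsionFree_nsmulRange (he : e ≠ 0) (hM : ∀ x ∈ Submodule.torsion ℤ M, e • x = 0) :
    IsTorsionFree ℤ (nsmulRange R M e) := by
  refine IsTorsionFree.of_smul_eq_zero fun q y hqy => or_iff_not_imp_left.2 fun hq => ?_
  obtain ⟨_, x, rfl⟩ := y
  have hqx : (q * e) • x = 0 := by
    rw [mul_smul, natCast_zsmul]
    exact congrArg Subtype.val hqy
  exact Subtype.ext (hM x ⟨⟨q * e, mem_nonZeroDivisors_of_ne_zero
    (mul_ne_zero hq (Nat.cast_ne_zero.2 he))⟩, hqx⟩)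

theorem exists_isIsogeny_nsmulRange (he : e ≠ 0) (hm : m ≠ 0)
    (hM : ∀ x ∈ Submodule.torsion ℤ M, e • x = 0) {f : M →ₗ[R] N}
    (hker : ∀ x, f x = 0 → m • x = 0) (hrange : ∀ y, m • y ∈ LinearMap.range f) :
    ∃ g : nsmulRange R M e →ₗ[R] nsmulRange R N e, IsIsogeny m g := by
  have := isTorsionFree_nsmulRange (R := R) he hM
  have hf : ∀ x ∈ nsmulRange R M e, f x ∈ nsmulRange R N e := by
    rintro _ ⟨x, rfl⟩
    exact ⟨f x, (map_nsmul f e x).symm⟩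
  refine ⟨f.restrict hf, LinearMap.ker_eq_bot.1 (LinearMap.ker_eq_bot'.2 fun x hx => ?_), ?_⟩
  · have hmx : (m : ℤ) • x = 0 := Subtype.ext <| by
      rw [natCast_zsmul]
      exact hker x (congrArg Subtype.val hx)
    exact (smul_eq_zero.1 hmx).resolve_left (Nat.cast_ne_zero.2 hm)
  · rintro ⟨_, y, rfl⟩
    obtain ⟨x, hx⟩ := hrange y
    refine ⟨⟨e • x, nsmul_mem_nsmulRange x⟩, Subtype.ext ?_⟩
    change f (e • x) = m • e • y
    rw [map_nsmul, hx, smul_comm]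

/-- Injectivity holds because `e M` is torsion-free, so multiplication by `e` is injective on the
kernel of `θ`. -/
theorem IsIsogeny.prod_of_ker_eq_nsmulRange {L Q : Type*} [AddCommGroup L] [Module R L]
    [AddCommGroup Q] [Module R Q] (he : e ≠ 0) (hM : ∀ x ∈ Submodule.torsion ℤ M, e • x = 0)
    {g : nsmulRange R M e →ₗ[R] L} (hg : IsIsogeny m g) {θ : M →ₗ[R] Q}
    (hker : LinearMap.ker θ = nsmulRange R M e) (hθ : Function.Surjective θ) :
    IsIsogeny (m * e) ((g ∘ₗ (DistribSMul.toLinearMap R M e).rangeRestrict).prod θ) := by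
  have := isTorsionFree_nsmulRange (R := R) he hM
  have hzero (x : M) : θ (e • x) = 0 :=
    LinearMap.mem_ker.1 (hker ▸ nsmul_mem_nsmulRange x)
  refine ⟨LinearMap.ker_eq_bot.1 (LinearMap.ker_eq_bot'.2 fun x hx => ?_), ?_⟩
  · obtain ⟨hgx, hθx⟩ := Prod.mk.inj hx
    have hex : e • x = 0 := congrArg Subtype.val (hg.injective (hgx.trans (map_zero g).symm))
    have hx' : (e : ℤ) • (⟨x, hker ▸ hθx⟩ : nsmulRange R M e) = 0 :=
      Subtype.ext (by simpa using hex)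
    exact congrArg Subtype.val ((smul_eq_zero.1 hx').resolve_left (Nat.cast_ne_zero.2 he))
  · rintro ⟨z, y⟩
    obtain ⟨y, rfl⟩ := hθ y
    obtain ⟨w, hw⟩ := hg.nsmul_mem_range z
    refine ⟨w, Prod.ext ?_ ?_⟩
    · change g (e • w) = (m * e) • z
      rw [map_nsmul, hw, smul_smul, mul_comm]
    · obtain ⟨_, x, rfl⟩ := w
      change θ (e • x) = (m * e) • θ y
      rw [hzero, mul_smul, ← map_nsmul θ e, hzero, smul_zero]

end NsmulRange

section GeneratedProjectives

variable (R : Type u) [Ring R] (n : ℕ)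

/-- The projective left `R`-modules that can be generated by `n` elements, as a class of objects;
generation is encoded by a surjection from `Rⁿ`. -/
def generatedProjectives : Set (ModuleCat.{u} R) :=
  {M | Projective R M ∧ ∃ π : (Fin n → R) →ₗ[R] M, Function.Surjective π}

variable {R n}

theorem finite_int_of_mem_generatedProjectives [Module.Finite ℤ R] {M : ModuleCat.{u} R}
    (hM : M ∈ generatedProjectives R n) : Module.Finite ℤ M := by
  obtain ⟨-, π, hπ⟩ := hM
  exact .of_surjective π.toAddMonoidHom.toIntLinearMap hπ

theorem isoClassesFinite_quotient_generatedProjectives [Module.Finite ℤ R] :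
    IsoClassesFinite ((fun M : ModuleCat.{u} R => ModuleCat.of (R ⧸ latticeRadicalIdeal R)
      (M ⧸ latticeRadicalIdeal R • (⊤ : Submodule R M))) '' generatedProjectives R n) := by
  refine (isoClassesFinite_lattice (latticeRadicalIdeal_quotient_latticeRadicalIdeal R)
    (finrank ℤ (Fin n → R))).mono ?_
  rintro _ ⟨M, hM, rfl⟩
  have := finite_int_of_mem_generatedProjectives hM
  obtain ⟨_, π, hπ⟩ := hM
  have hI : IsTorsionFree ℤ (R ⧸ latticeRadicalIdeal R) :=
    inferInstanceAs (IsTorsionFree ℤ (R ⧸ latticeRadical R R))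
  let N := latticeRadicalIdeal R • (⊤ : Submodule R M)
  exact ⟨inferInstanceAs (Module.Finite ℤ (M ⧸ N)), isTorsionFree_int_quotient_smul_top hI,
    LinearMap.finrank_le_finrank_of_surjective
      (f := (N.mkQ ∘ₗ π).toAddMonoidHom.toIntLinearMap) (N.mkQ_surjective.comp hπ)⟩

theorem exists_isIsogeny_prod_quotient {P M : ModuleCat.{u} R}
    (hP : P ∈ generatedProjectives R n) (hM : M ∈ generatedProjectives R n) {I : Ideal R}
    [I.IsTwoSided] {e m k : ℕ} (he : e ≠ 0) (hm : m ≠ 0)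
    (hR : ∀ a ∈ Submodule.torsion ℤ R, e • a = 0) (hI : ∀ a ∈ I ^ k, m • a = 0)
    (φ : (P ⧸ I • (⊤ : Submodule R P)) ≃ₗ[R ⧸ I] (M ⧸ I • (⊤ : Submodule R M))) :
    ∃ K : Submodule R (Fin n → R), (∀ x, e • x ∈ K) ∧
      ∃ f : M →ₗ[R] nsmulRange R P e × ((Fin n → R) ⧸ K), IsIsogeny (m * e) f := by
  obtain ⟨_, -⟩ := hP
  obtain ⟨_, π, hπ⟩ := hM
  have htors : ∀ (X : Type u) [AddCommGroup X] [Module R X] [Projective R X],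
      ∀ x ∈ Submodule.torsion ℤ X, e • x = 0 := fun X _ _ _ _ hx =>
    nsmul_eq_zero_of_mem_torsion_of_projective hR hx
  obtain ⟨f, hker, hrange⟩ := exists_linearMap_of_quotient_linearEquiv hI φ
  obtain ⟨g, hg⟩ := exists_isIsogeny_nsmulRange he hm (htors P) hker hrange
  have := isTorsionFree_nsmulRange (R := R) he (htors M)
  obtain ⟨g', hg'⟩ := hg.exists_dual hm
  let ρ := (nsmulRange R M e).mkQ ∘ₗ π
  have hρ : Function.Surjective ρ := (Submodule.mkQ_surjective _).comp hπ
  let ε := ρ.quotKerEquivOfSurjective hρ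
  refine ⟨LinearMap.ker ρ, fun x => ?_, _, hg'.prod_of_ker_eq_nsmulRange he (htors M)
    (θ := ε.symm.toLinearMap ∘ₗ (nsmulRange R M e).mkQ) ?_ ?_⟩
  · rw [LinearMap.mem_ker, LinearMap.comp_apply, map_nsmul]
    exact (Submodule.Quotient.mk_eq_zero _).2 (nsmul_mem_nsmulRange _)
  · rw [LinearEquiv.ker_comp, Submodule.ker_mkQ]
  · exact ε.symm.surjective.comp (Submodule.mkQ_surjective _)

theorem isoClassesFinite_generatedProjectives [Module.Finite ℤ R] :
    IsoClassesFinite (generatedProjectives R n) := by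
  obtain ⟨m, k, hm, hI⟩ := exists_nsmul_latticeRadicalIdeal_pow_eq_zero R
  obtain ⟨e, he, hR⟩ := exists_nsmul_eq_zero_of_mem_torsion R
  obtain ⟨t, htproj, ht, hiso⟩ :=
    (isoClassesFinite_quotient_generatedProjectives (R := R) (n := n)).exists_finite_subset
  let 𝓕 : Set (ModuleCat.{u} R) := Set.image2 (fun (P : ModuleCat.{u} R) K =>
    ModuleCat.of R (nsmulRange R P e × ((Fin n → R) ⧸ K))) t
    {K : Submodule R (Fin n → R) | ∀ x, e • x ∈ K}
  have h𝓕 : 𝓕.Finite := ht.image2 _ (finite_setOf_submodule_forall_nsmul_mem he)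
  have hfin : ∀ F ∈ 𝓕, Module.Finite ℤ F := by
    rintro _ ⟨P, hP, K, -, rfl⟩
    have := finite_int_of_mem_generatedProjectives (htproj hP)
    have := finite_int_submodule (nsmulRange R P e)
    exact inferInstanceAs (Module.Finite ℤ (nsmulRange R P e × ((Fin n → R) ⧸ K)))
  refine (isoClassesFinite_of_isIsogeny h𝓕 hfin (mul_ne_zero hm he)).mono fun M hM => ?_
  obtain ⟨P, hP, ⟨φ⟩⟩ := hiso M hM
  obtain ⟨K, hK, hf⟩ := exists_isIsogeny_prod_quotient (htproj hP) hM he hm hR hI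
    φ.symm.toLinearEquiv
  exact ⟨_, ⟨P, hP, K, hK, rfl⟩, hf⟩

theorem mem_generatedProjectives_of_span_eq_top {M : ModuleCat.{u} R} [Projective R M]
    {s : Finset M} (hs : s.card ≤ n) (hspan : Submodule.span R (s : Set M) = ⊤) :
    M ∈ generatedProjectives R n := by
  let g : Fin n → M := fun i => if h : (i : ℕ) < s.card then s.equivFin.symm ⟨i, h⟩ else 0
  refine ⟨‹_›, Fintype.linearCombination R g, ?_⟩
  rw [← LinearMap.range_eq_top, Fintype.range_linearCombination, eq_top_iff, ← hspan]
  refine Submodule.span_mono fun x hx => ?_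
  exact ⟨⟨s.equivFin ⟨x, hx⟩, (s.equivFin ⟨x, hx⟩).2.trans_le hs⟩, by simp [g]⟩

end GeneratedProjectives

theorem stmt_11_general {A : Type u} [Ring A] (hfg : AddGroup.FG A) (n : ℕ) :
    ∃ (k : ℕ) (N : Fin k → ModuleCat.{u} Aᵐᵒᵖ),
      ∀ M : ModuleCat.{u} Aᵐᵒᵖ, Projective Aᵐᵒᵖ M →
        (∃ s : Finset M, s.card ≤ n ∧ Submodule.span Aᵐᵒᵖ (s : Set M) = ⊤) →
        ∃ i, Nonempty (M ≅ N i) := by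
  have : Module.Finite ℤ A := Module.Finite.iff_addGroup_fg.2 hfg
  have : Module.Finite ℤ Aᵐᵒᵖ :=
    .equiv (MulOpposite.opAddEquiv : A ≃+ Aᵐᵒᵖ).toIntLinearEquiv
  obtain ⟨t, ht, hiso⟩ := isoClassesFinite_generatedProjectives (R := Aᵐᵒᵖ) (n := n)
  obtain ⟨k, N, -, rfl⟩ := ht.fin_param
  refine ⟨k, N, fun M _ ⟨s, hs, hspan⟩ => ?_⟩
  obtain ⟨_, ⟨i, rfl⟩, hMN⟩ := hiso M (mem_generatedProjectives_of_span_eq_top hs hspan)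
  exact ⟨i, hMN⟩

/-- Let `A` be a unital ring which is finitely generated as an abelian group.
Then for every `n > 0` there are only finitely many isomorphism classes of
`n`-generated projective right `A`-modules (right `A`-modules = left
`Aᵐᵒᵖ`-modules). -/
theorem stmt_11 (A : Type) [Ring A] (hfg : AddGroup.FG A) (n : ℕ) (hn : 0 < n) :
    ∃ (k : ℕ) (N : Fin k → ModuleCat.{0} Aᵐᵒᵖ),
      ∀ M : ModuleCat.{0} Aᵐᵒᵖ, Module.Projective Aᵐᵒᵖ M →
        (∃ s : Finset M, s.card ≤ n ∧ Submodule.span Aᵐᵒᵖ (s : Set M) = ⊤) →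
        ∃ i, Nonempty (M ≅ N i) :=
  stmt_11_general hfg n
end

section
/- Let A be an additive category such that for all objects X, Y the abelian group of morphisms Hom(X, Y) is finitely generated. Then for any object X of A, there are only finitely many isomorphism classes of objects Y of A that are stably isomorphic to X, i.e., such that X ⊕ Z ≅ Y ⊕ Z for some object Z. -/
open CategoryTheory CategoryTheory.Limits

attribute [local instance] CategoryTheory.Limits.hasBinaryBiproducts_of_finite_biproducts

/-!
Counting homomorphisms shows that finite modules are cancellable (Lovász), so stably isomorphic
objects are isomorphic modulo every `n`: they lie in the same genus. For `Y` in the genus of `X`,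
composition with a suitable map `X ⟶ Y` sends `Hom(Y, X)` to a left ideal of `End X`, whose image in
the semisimple quotient of `ℚ ⊗ End X` is a full lattice over the image of `End X`. Up to an index
bounded in terms of `X` such a lattice is generated by one element: over a division algebra take an
element of least norm, as in the Euclidean algorithm. Since the kernel of the map from `End X` to
the semisimple quotient is nilpotent up to torsion, this gives `f : Y ⟶ X` and `g : X ⟶ Y` that are
mutually inverse up to a factor `N` depending only on `X`. If `c` kills the torsion of `End X`, then
`Y` is determined up to isomorphism by the endomorphism of `X` modulo `N * c` that is the composite
of `g` and an isomorphism `Y ≅ X` modulo `N * c`, and there are only finitely many of these.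
-/

namespace StableIso

section FiniteModules

variable {R : Type*} [Ring R] {W P Q Z : Type*} [AddCommGroup W] [Module R W]
  [AddCommGroup P] [Module R P] [AddCommGroup Q] [Module R Q] [AddCommGroup Z] [Module R Z]

variable (R W P) in
/-- The number of injective `R`-linear maps from `W` to `P`, in Lovász's counting proof of
cancellation for finite structures. -/
noncomputable def injectiveHomCount : ℕ :=
  Nat.card {f : W →ₗ[R] P // Function.Injective f}

variable (P) in
theorem injectiveHomCount_congr (e : W ≃ₗ[R] Q) :
    injectiveHomCount R W P = injectiveHomCount R Q P :=
  Nat.card_congr <| (e.arrowCongrAddEquiv (LinearEquiv.refl R P)).toEquiv.subtypeEquiv fun f =>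
    (Equiv.injective_comp e.symm.toEquiv f).symm

theorem card_ker_eq (K : Submodule R W) :
    Nat.card {f : W →ₗ[R] P // LinearMap.ker f = K} = injectiveHomCount R (W ⧸ K) P :=
  Nat.card_congr
    { toFun := fun f => ⟨K.liftQ f f.2.ge, by
        rw [← LinearMap.ker_eq_bot]
        exact Submodule.ker_liftQ_eq_bot _ _ _ f.2.le⟩
      invFun := fun g => ⟨g.1 ∘ₗ K.mkQ, by
        rw [LinearMap.ker_comp, LinearMap.ker_eq_bot.2 g.2]
        exact K.ker_mkQ⟩
      left_inv := fun f => by ext; simp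
      right_inv := fun g => by ext; simp }

theorem card_linearMap_eq_sum [Finite W] [Finite P] [Fintype (Submodule R W)] :
    Nat.card (W →ₗ[R] P) = ∑ K : Submodule R W, injectiveHomCount R (W ⧸ K) P := by
  have : Finite (W →ₗ[R] P) := DFunLike.finite _
  rw [← Nat.card_congr (Equiv.sigmaFiberEquiv LinearMap.ker), Nat.card_sigma]
  exact Finset.sum_congr rfl fun K _ => card_ker_eq K

theorem card_quotient_lt [Finite W] {K : Submodule R W} (hK : K ≠ ⊥) :
    Nat.card (W ⧸ K) < Nat.card W := by
  have : Finite (W ⧸ K) := Finite.of_surjective _ K.mkQ_surjective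
  have hK' : 1 < Nat.card K :=
    Finite.one_lt_card_iff_nontrivial.2 (Submodule.nontrivial_iff_ne_bot.2 hK)
  rw [Submodule.card_eq_card_quotient_mul_card K]
  exact lt_mul_of_one_lt_left Nat.card_pos hK'

theorem injectiveHomCount_eq_of_card_linearMap_eq.{w} [Finite P] [Finite Q]
    (h : ∀ (W : Type w) [AddCommGroup W] [Module R W] [Finite W],
      Nat.card (W →ₗ[R] P) = Nat.card (W →ₗ[R] Q))
    (W : Type w) [AddCommGroup W] [Module R W] [Finite W] :
    injectiveHomCount R W P = injectiveHomCount R W Q := by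
  classical
  induction hn : Nat.card W using Nat.strong_induction_on generalizing W with
  | _ n ih =>
    have : Finite (Submodule R W) := Finite.of_injective _ SetLike.coe_injective
    have := Fintype.ofFinite (Submodule R W)
    have sum_eq : ∑ K ∈ ({⊥}ᶜ : Finset (Submodule R W)), injectiveHomCount R (W ⧸ K) P =
        ∑ K ∈ ({⊥}ᶜ : Finset (Submodule R W)), injectiveHomCount R (W ⧸ K) Q := by
      refine Finset.sum_congr rfl fun K hK => ?_
      have : Finite (W ⧸ K) := Finite.of_surjective _ K.mkQ_surjective
      exact ih _ (hn ▸ card_quotient_lt (by simpa using hK)) _ rfl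
    have total_eq := h W
    rw [card_linearMap_eq_sum, card_linearMap_eq_sum, Fintype.sum_eq_add_sum_compl ⊥,
      Fintype.sum_eq_add_sum_compl ⊥, sum_eq] at total_eq
    simpa only [injectiveHomCount_congr _ (Submodule.quotEquivOfEqBot (⊥ : Submodule R W) rfl)]
      using Nat.add_right_cancel total_eq

theorem card_linearMap_eq_of_prod_equiv [Finite W] [Finite Z] (e : (P × Z) ≃ₗ[R] (Q × Z)) :
    Nat.card (W →ₗ[R] P) = Nat.card (W →ₗ[R] Q) := by
  have : Finite (W →ₗ[R] Z) := DFunLike.finite _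
  refine Nat.eq_of_mul_eq_mul_right (Nat.card_pos (α := W →ₗ[R] Z)) ?_
  rw [← Nat.card_prod, ← Nat.card_prod]
  exact Nat.card_congr <| (LinearMap.prodEquiv ℕ).toEquiv.trans <|
    ((LinearEquiv.refl R W).arrowCongrAddEquiv e).toEquiv.trans (LinearMap.prodEquiv ℕ).toEquiv.symm

theorem nonempty_linearEquiv_of_prod_equiv [Finite P] [Finite Q] [Finite Z]
    (e : (P × Z) ≃ₗ[R] (Q × Z)) : Nonempty (P ≃ₗ[R] Q) := by
  have count_pos : 0 < injectiveHomCount R P Q := by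
    rw [← injectiveHomCount_eq_of_card_linearMap_eq
      (fun _ _ _ _ => card_linearMap_eq_of_prod_equiv e)]
    have : Finite (P →ₗ[R] P) := DFunLike.finite _
    have : Nonempty {f : P →ₗ[R] P // Function.Injective f} :=
      ⟨⟨LinearMap.id, Function.injective_id⟩⟩
    exact Nat.card_pos
  obtain ⟨f, hf⟩ := (Nat.card_pos_iff.1 count_pos).1
  have card_eq : Nat.card P = Nat.card Q := by
    refine Nat.eq_of_mul_eq_mul_right (Nat.card_pos (α := Z)) ?_
    rw [← Nat.card_prod, ← Nat.card_prod, Nat.card_congr e.toEquiv]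
  exact ⟨LinearEquiv.ofBijective f (hf.bijective_of_nat_card_le card_eq.ge)⟩

end FiniteModules

section FiniteHoms

variable {C : Type*} [Category C] [Preadditive C]

/-- Precomposition with an isomorphism, as an isomorphism of modules over `End U`. -/
@[simps]
def precompEquiv {X Y : C} (φ : X ≅ Y) (U : C) : (X ⟶ U) ≃ₗ[End U] (Y ⟶ U) where
  toFun a := φ.inv ≫ a
  invFun a := φ.hom ≫ a
  left_inv a := by simp
  right_inv a := by simp
  map_add' a b := by simp
  map_smul' r a := (Category.assoc _ _ _).symm

/-- The isomorphism `Hom(X ⊞ Y, U) ≃ Hom(X, U) × Hom(Y, U)` of modules over `End U`. -/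
@[simps]
noncomputable def biprodHomEquiv (X Y U : C) [HasBinaryBiproduct X Y] :
    (X ⊞ Y ⟶ U) ≃ₗ[End U] (X ⟶ U) × (Y ⟶ U) where
  toFun a := (biprod.inl ≫ a, biprod.inr ≫ a)
  invFun a := biprod.desc a.1 a.2
  left_inv a := by ext <;> simp
  right_inv a := by simp
  map_add' a b := by simp
  map_smul' r a := Prod.ext (Category.assoc _ _ _).symm (Category.assoc _ _ _).symm

-- Yoneda for retracts of `U`: the identity of `X` is replaced by the inclusion `X ⟶ U`.
theorem exists_eq_comp_of_retract {X Y U : C} (ρ : Retract X U)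
    (θ : (X ⟶ U) →ₗ[End U] (Y ⟶ U)) : ∃ k : Y ⟶ X, ∀ a, θ a = k ≫ a := by
  refine ⟨θ ρ.i ≫ ρ.r, fun a => ?_⟩
  let r : End U := ρ.r ≫ a
  calc θ a = θ (r • ρ.i) := by rw [End.smul_right, ρ.retract_assoc]
    _ = (θ ρ.i ≫ ρ.r) ≫ a := by rw [map_smul, End.smul_right, Category.assoc]

theorem nonempty_iso_of_homEquiv {X Y U : C} (ρ : Retract X U) (σ : Retract Y U)
    (θ : (X ⟶ U) ≃ₗ[End U] (Y ⟶ U)) : Nonempty (X ≅ Y) := by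
  obtain ⟨k, hk⟩ := exists_eq_comp_of_retract ρ θ.toLinearMap
  obtain ⟨h, hh⟩ := exists_eq_comp_of_retract σ θ.symm.toLinearMap
  simp only [LinearEquiv.coe_coe] at hk hh
  have hki : h ≫ k ≫ ρ.i = ρ.i := by rw [← hh, ← hk, θ.symm_apply_apply]
  have hhi : k ≫ h ≫ σ.i = σ.i := by rw [← hk, ← hh, θ.apply_symm_apply]
  exact ⟨{ hom := h, inv := k
           hom_inv_id := by simpa using hki =≫ ρ.r
           inv_hom_id := by simpa using hhi =≫ σ.r }⟩

theorem nonempty_iso_of_biprod_iso [HasBinaryBiproducts C] [∀ X Y : C, Finite (X ⟶ Y)]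
    {X Y Z : C} (φ : X ⊞ Z ≅ Y ⊞ Z) : Nonempty (X ≅ Y) := by
  obtain ⟨θ⟩ := nonempty_linearEquiv_of_prod_equiv <|
    (biprodHomEquiv X Z (X ⊞ Y)).symm ≪≫ₗ precompEquiv φ _ ≪≫ₗ biprodHomEquiv Y Z (X ⊞ Y)
  exact nonempty_iso_of_homEquiv ⟨biprod.inl, biprod.fst, biprod.inl_fst⟩
    ⟨biprod.inr, biprod.snd, biprod.inr_snd⟩ θ

end FiniteHoms

section Reduction

variable (A : Type*) [Category A] [Preadditive A] (n : ℕ)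

/-- Congruence of morphisms modulo `n`. -/
def modRel : HomRel A := fun _ _ f g => ∃ z, f = g + n • z

instance : Congruence (modRel A n) where
  equivalence :=
    { refl f := ⟨0, by simp⟩
      symm := by rintro _ g ⟨z, rfl⟩; exact ⟨-z, by simp⟩
      trans := by rintro _ _ h ⟨z, rfl⟩ ⟨w, rfl⟩; exact ⟨w + z, by rw [smul_add, add_assoc]⟩ }
  comp_left := by rintro _ _ _ f _ g ⟨z, rfl⟩; exact ⟨f ≫ z, by simp⟩
  comp_right := by rintro _ _ _ _ f g ⟨z, rfl⟩; exact ⟨z ≫ g, by simp⟩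

variable {A} in
theorem modRel_add ⦃X Y : A⦄ (f₁ f₂ g₁ g₂ : X ⟶ Y) (hf : modRel A n f₁ f₂)
    (hg : modRel A n g₁ g₂) : modRel A n (f₁ + g₁) (f₂ + g₂) := by
  obtain ⟨z, rfl⟩ := hf
  obtain ⟨w, rfl⟩ := hg
  exact ⟨z + w, by rw [smul_add]; abel⟩

/-- The category with the objects of `A` and the groups `Hom(X, Y) / n Hom(X, Y)` as morphisms. -/
abbrev Reduction := CategoryTheory.Quotient (modRel A n)

instance : Preadditive (Reduction A n) := Quotient.preadditive _ (modRel_add n)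

/-- Reduction of morphisms modulo `n`. -/
abbrev reduction : A ⥤ Reduction A n := Quotient.functor (modRel A n)

instance : (reduction A n).Additive := Quotient.functor_additive _ (modRel_add n)

variable {A n}

theorem reduction_map_eq_iff {X Y : A} {f g : X ⟶ Y} :
    (reduction A n).map f = (reduction A n).map g ↔ ∃ z, f = g + n • z :=
  Quotient.functor_map_eq_iff _ f g

instance [HasBinaryBiproducts A] : HasBinaryBiproducts (Reduction A n) where
  has_binary_biproduct X Y :=
    hasBinaryBiproduct_of_total
      ((reduction A n).mapBinaryBicone (BinaryBiproduct.bicone X.as Y.as)) <|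
        congrArg (reduction A n).map (biprod.total (X := X.as) (Y := Y.as))

theorem finite_reduction_hom (hn : 0 < n) (X Y : Reduction A n) [AddGroup.FG (X.as ⟶ Y.as)] :
    Finite (X ⟶ Y) := by
  let π : (X.as ⟶ Y.as) →+ (X ⟶ Y) := (reduction A n).mapAddHom
  have hπ : Function.Surjective π := (reduction A n).map_surjective
  have := AddGroup.fg_of_surjective hπ
  refine AddCommGroup.finite_of_fg_isAddTorsion _ fun x => ?_
  obtain ⟨f, rfl⟩ := hπ x
  refine isOfFinAddOrder_iff_nsmul_eq_zero.2 ⟨n, hn, ?_⟩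
  rw [← map_nsmul, ← map_zero π]
  exact reduction_map_eq_iff.2 ⟨f, (zero_add _).symm⟩

end Reduction

section Genus

variable {A : Type*} [Category A] [Preadditive A]

/-- Two objects lie in the same genus if they become isomorphic modulo every positive integer. -/
def SameGenus (X Y : A) : Prop :=
  ∀ n : ℕ, 0 < n → Nonempty ((reduction A n).obj X ≅ (reduction A n).obj Y)

theorem SameGenus.exists_comp_eq {X Y : A} (h : SameGenus X Y) {n : ℕ} (hn : 0 < n) :
    ∃ (f : X ⟶ Y) (g : Y ⟶ X) (α : X ⟶ X) (β : Y ⟶ Y),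
      f ≫ g = 𝟙 X + n • α ∧ g ≫ f = 𝟙 Y + n • β := by
  obtain ⟨φ⟩ := h n hn
  obtain ⟨f, hf⟩ := (reduction A n).map_surjective φ.hom
  obtain ⟨g, hg⟩ := (reduction A n).map_surjective φ.inv
  have hfg : (reduction A n).map (f ≫ g) = (reduction A n).map (𝟙 X) := by
    rw [Functor.map_comp, hf, hg, φ.hom_inv_id, CategoryTheory.Functor.map_id]
  have hgf : (reduction A n).map (g ≫ f) = (reduction A n).map (𝟙 Y) := by
    rw [Functor.map_comp, hf, hg, φ.inv_hom_id, CategoryTheory.Functor.map_id]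
  obtain ⟨α, hα⟩ := reduction_map_eq_iff.1 hfg
  obtain ⟨β, hβ⟩ := reduction_map_eq_iff.1 hgf
  exact ⟨f, g, α, β, hα, hβ⟩

theorem SameGenus.of_biprod_iso [HasBinaryBiproducts A] [∀ X Y : A, AddGroup.FG (X ⟶ Y)]
    {X Y Z : A} (φ : X ⊞ Z ≅ Y ⊞ Z) : SameGenus X Y := by
  intro n hn
  have (U V : Reduction A n) : Finite (U ⟶ V) := finite_reduction_hom hn U V
  have := preservesBinaryBiproducts_of_preservesBiproducts (reduction A n)
  exact nonempty_iso_of_biprod_iso <| ((reduction A n).mapBiprod X Z).symm ≪≫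
    (reduction A n).mapIso φ ≪≫ (reduction A n).mapBiprod Y Z

end Genus

section Lattices

variable {V : Type*} [AddCommGroup V]

/-- A subgroup is full if some positive multiple of every element lies in it. In a
finite-dimensional rational vector space these are the subgroups that contain a basis. -/
def IsFull (M : AddSubgroup V) : Prop :=
  ∀ x, ∃ n : ℕ, 0 < n ∧ n • x ∈ M

theorem IsFull.exists_forall_nsmul_mem {M : AddSubgroup V} (hM : IsFull M) {ι : Type*} [Finite ι]
    (x : ι → V) : ∃ n : ℕ, 0 < n ∧ ∀ i, n • x i ∈ M := by
  have := Fintype.ofFinite ι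
  choose n n_pos hn using fun i => hM (x i)
  refine ⟨∏ i, n i, Finset.prod_pos fun i _ => n_pos i, fun i => ?_⟩
  obtain ⟨m, hm⟩ := Finset.dvd_prod_of_mem n (Finset.mem_univ i)
  rw [hm, mul_comm, mul_smul]
  exact M.nsmul_mem (hn i) m

theorem IsFull.prod {W : Type*} [AddCommGroup W] {M : AddSubgroup V} {M' : AddSubgroup W}
    (hM : IsFull M) (hM' : IsFull M') : IsFull (M.prod M') := fun (x, y) => by
  obtain ⟨n, n_pos, hn⟩ := hM x
  obtain ⟨m, m_pos, hm⟩ := hM' y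
  refine ⟨m * n, by positivity, ?_, ?_⟩
  · change (m * n) • x ∈ M
    rw [mul_smul]
    exact M.nsmul_mem hn m
  · change (m * n) • y ∈ M'
    rw [mul_comm, mul_smul]
    exact M'.nsmul_mem hm n

theorem IsFull.exists_nsmul_mem_of_fg {Λ : Type*} [Ring Λ] [Module Λ V] {M F : Submodule Λ V}
    (hM : IsFull M.toAddSubgroup) (hF : F.FG) : ∃ n : ℕ, 0 < n ∧ ∀ x ∈ F, n • x ∈ M := by
  obtain ⟨s, rfl⟩ := hF
  obtain ⟨n, n_pos, hn⟩ := hM.exists_forall_nsmul_mem (fun x : s => (x : V))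
  have span_le : Submodule.span Λ s ≤ M.comap (DistribSMul.toLinearMap Λ V n) :=
    Submodule.span_le.2 fun x hx => hn ⟨x, hx⟩
  exact ⟨n, n_pos, span_le⟩

theorem isBaseChange_rat [Module ℚ V] {M : Type*} [AddCommGroup M] {f : M →+ V}
    (hf : Function.Injective f) (hfull : IsFull f.range) :
    IsBaseChange ℚ f.toIntLinearMap := by
  rw [← isLocalizedModule_iff_isBaseChange (nonZeroDivisors ℤ)]
  exact
    { map_units n := by
        have n_ne : ((n : ℤ) : ℚ) ≠ 0 := by simp
        refine (Module.End.isUnit_iff _).2 ?_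
        convert MulAction.bijective (β := V) (Units.mk0 _ n_ne) using 2 with x
        simp [Units.smul_def, Int.cast_smul_eq_zsmul]
      surj x := by
        obtain ⟨n, n_pos, y, hy⟩ := hfull x
        exact ⟨⟨y, n, by simpa using n_pos.ne'⟩, by simpa [Submonoid.smul_def] using hy.symm⟩
      exists_of_eq h := ⟨1, by rw [hf h]⟩ }

end Lattices

section Norm

theorem exists_forall_abs_mul_sub_le {ι : Type*} [Finite ι] {ε : ℝ} (hε : 0 < ε) :
    ∃ R : ℕ, ∀ t : ι → ℝ, ∃ r : ℕ, 0 < r ∧ r ≤ R ∧ ∃ q : ι → ℤ, ∀ i, |r * t i - q i| ≤ ε := by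
  have := Fintype.ofFinite ι
  let μ : MeasureTheory.Measure (ι → UnitAddCircle) := MeasureTheory.volume
  have ball_pos : μ (Metric.closedBall 0 (ε / 2)) ≠ 0 :=
    (Metric.measure_closedBall_pos μ 0 (half_pos hε)).ne'
  obtain ⟨R, hR⟩ := ENNReal.exists_nat_mul_gt ball_pos (MeasureTheory.measure_ne_top μ Set.univ)
  refine ⟨R + 1, fun t => ?_⟩
  obtain ⟨r, ⟨hr, hrR⟩, h⟩ := NormedAddCommGroup.exists_norm_nsmul_le (μ := μ)
    (fun i => (t i : UnitAddCircle)) R.succ_pos ε <| by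
      rw [nsmul_eq_mul]
      refine hR.le.trans ?_
      gcongr
      exact_mod_cast (by omega : R ≤ R + 1 + 1)
  refine ⟨r, hr, hrR, fun i => round (r * t i), fun i => ?_⟩
  simpa only [Pi.smul_apply, ← AddCircle.coe_nsmul, nsmul_eq_mul, UnitAddCircle.norm_eq] using
    (pi_norm_le_iff_of_nonneg hε.le).1 h i

variable {D : Type*} [Ring D] [Algebra ℚ D]

theorem exists_norm_eq_intCast {O : Subring D} [Module.Finite ℤ O]
    (hO : IsFull O.toAddSubgroup) (x : O) : ∃ z : ℤ, Algebra.norm ℚ (x : D) = z := by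
  have : IsAddTorsionFree D := IsAddTorsionFree.of_module_rat D
  have : IsAddTorsionFree O := Subtype.coe_injective.isAddTorsionFree O.subtype.toAddMonoidHom
  have base_change : IsBaseChange ℚ O.subtype.toAddMonoidHom.toIntLinearMap :=
    isBaseChange_rat Subtype.coe_injective fun x =>
      (hO x).imp fun n hn => ⟨hn.1, ⟨_, hn.2⟩, rfl⟩
  refine ⟨Algebra.norm ℤ x, ?_⟩
  have mul_eq : base_change.endHom (Algebra.lmul ℤ O x) = Algebra.lmul ℚ D x :=
    base_change.algHom_ext _ _ fun y => base_change.endHom_comp_apply _ y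
  rw [Algebra.norm_apply, Algebra.norm_apply, ← mul_eq, base_change.det_endHom]
  rfl

variable [Module.Finite ℚ D]

theorem exists_forall_abs_norm_lt_one [Nontrivial D] {ι : Type*} [Fintype ι] (b : ι → D) :
    ∃ ε > 0, ∀ t : ι → ℚ, (∀ i, |(t i : ℝ)| ≤ ε) → |Algebra.norm ℚ (∑ i, t i • b i)| < 1 := by
  let c := Module.finBasis ℚ D
  let N : (ι → ℚ) → ℚ := fun t => Algebra.norm ℚ (∑ i, t i • b i)
  have continuous_N : Continuous N := by
    simp only [N, Algebra.norm_eq_matrix_det c, map_sum, map_smul]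
    exact Continuous.matrix_det (by fun_prop)
  obtain ⟨δ, hδ, h⟩ := Metric.continuous_iff.1 continuous_N 0 1 one_pos
  refine ⟨δ / 2, half_pos hδ, fun t ht => ?_⟩
  have dist_lt : dist t 0 < δ := by
    refine ((dist_pi_le_iff (half_pos hδ).le).2 fun i => ?_).trans_lt (half_lt_self hδ)
    rw [Pi.zero_apply, Rat.dist_eq, Rat.cast_zero, sub_zero]
    exact ht i
  have N_zero : N 0 = 0 := by simp [N, Algebra.norm_zero]
  have := h t dist_lt
  rw [N_zero, Rat.dist_eq, Rat.cast_zero, sub_zero] at this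
  exact_mod_cast this

theorem exists_nsmul_sub_abs_norm_lt_one [Nontrivial D] {O : AddSubgroup D} (hO : IsFull O) :
    ∃ R : ℕ, ∀ x : D, ∃ r : ℕ, 0 < r ∧ r ≤ R ∧ ∃ q ∈ O, |Algebra.norm ℚ (r • x - q)| < 1 := by
  let b := Module.finBasis ℚ D
  obtain ⟨c, c_pos, hc⟩ := hO.exists_forall_nsmul_mem b
  have c_ne : (c : ℚ) ≠ 0 := by positivity
  obtain ⟨ε, ε_pos, hε⟩ := exists_forall_abs_norm_lt_one fun i => c • b i
  obtain ⟨R, hR⟩ := exists_forall_abs_mul_sub_le (ι := Fin (Module.finrank ℚ D)) ε_pos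
  refine ⟨R, fun x => ?_⟩
  obtain ⟨r, r_pos, hrR, q, hq⟩ := hR fun i => ((b.repr x i / c : ℚ) : ℝ)
  refine ⟨r, r_pos, hrR, ∑ i, q i • c • b i, sum_mem fun i _ => O.zsmul_mem (hc i) _, ?_⟩
  have sub_eq : r • x - ∑ i, q i • c • b i = ∑ i, (r * (b.repr x i / c) - q i : ℚ) • c • b i := by
    conv_lhs => rw [← b.sum_repr x]
    rw [Finset.smul_sum, ← Finset.sum_sub_distrib]
    refine Finset.sum_congr rfl fun i _ => ?_
    rw [sub_smul, ← Nat.cast_smul_eq_nsmul ℚ c, smul_smul, mul_assoc, div_mul_cancel₀ _ c_ne,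
      mul_smul, Nat.cast_smul_eq_nsmul, Nat.cast_smul_eq_nsmul, Int.cast_smul_eq_zsmul]
  rw [sub_eq]
  exact hε _ fun i => by exact_mod_cast hq i

theorem exists_minimal_abs_norm {O : Subring D} [Module.Finite ℤ O] (hO : IsFull O.toAddSubgroup)
    {L : AddSubgroup D} (hL : L ≠ ⊥) {c : ℕ} (hc : 0 < c) (hLO : ∀ ψ ∈ L, c • ψ ∈ O) :
    ∃ φ ∈ L, φ ≠ 0 ∧ ∀ ψ ∈ L, ψ ≠ 0 → |Algebra.norm ℚ φ| ≤ |Algebra.norm ℚ ψ| := by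
  choose z hz using fun x : O => exists_norm_eq_intCast hO x
  let size (ψ : L) : ℕ := (z ⟨c • (ψ : D), hLO ψ ψ.2⟩).natAbs
  have size_eq (ψ : L) :
      (size ψ : ℚ) = |(c : ℚ) ^ Module.finrank ℚ D| * |Algebra.norm ℚ (ψ : D)| := by
    rw [Nat.cast_natAbs, Int.cast_abs, ← hz, ← abs_mul, ← Algebra.norm_algebraMap, ← map_mul,
      ← Algebra.smul_def, Nat.cast_smul_eq_nsmul]
  obtain ⟨ψ₀, ψ₀_ne⟩ := L.ne_bot_iff_exists_ne_zero.1 hL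
  obtain ⟨φ, φ_ne, φ_min⟩ := WellFounded.has_min (measure size).wf {ψ | ψ ≠ 0} ⟨ψ₀, ψ₀_ne⟩
  refine ⟨φ, φ.2, by simpa using φ_ne, fun ψ hψ ψ_ne => ?_⟩
  have size_le : size φ ≤ size ⟨ψ, hψ⟩ := not_lt.1 (φ_min ⟨ψ, hψ⟩ (by simpa using ψ_ne))
  have : (size φ : ℚ) ≤ size ⟨ψ, hψ⟩ := by exact_mod_cast size_le
  rw [size_eq, size_eq] at this
  exact le_of_mul_le_mul_left this (by positivity)

end Norm

section DivisionRing

variable {D : Type*} [DivisionRing D] [Algebra ℚ D] [Module.Finite ℚ D]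
  {O : Subring D} [Module.Finite ℤ O]

-- The rational analogue of division with remainder: `φ` is an element of least norm in `L`, and
-- `r • φ⁻¹ * ψ` is close to an element of `O` for some bounded `r`.
theorem exists_forall_nsmul_eq_mul (hO : IsFull O.toAddSubgroup) :
    ∃ R : ℕ, 0 < R ∧ ∀ L : AddSubgroup D, L ≠ ⊥ → (∀ ψ ∈ L, ∀ q ∈ O, ψ * q ∈ L) →
      (∃ c : ℕ, 0 < c ∧ ∀ ψ ∈ L, c • ψ ∈ O) →
      ∃ φ ∈ L, φ ≠ 0 ∧ ∀ ψ ∈ L, ∃ q ∈ O, R • ψ = φ * q := by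
  obtain ⟨R, hR⟩ := exists_nsmul_sub_abs_norm_lt_one hO
  refine ⟨R.factorial, R.factorial_pos, fun L hL mul_mem ⟨c, c_pos, hc⟩ => ?_⟩
  obtain ⟨φ, hφ, φ_ne, φ_min⟩ := exists_minimal_abs_norm hO hL c_pos hc
  refine ⟨φ, hφ, φ_ne, fun ψ hψ => ?_⟩
  obtain ⟨r, r_pos, hrR, q, hq, norm_lt⟩ := hR (φ⁻¹ * ψ)
  have remainder_eq : r • ψ - φ * q = φ * (r • (φ⁻¹ * ψ) - q) := by
    rw [mul_sub, mul_smul_comm, mul_inv_cancel_left₀ φ_ne]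
  have remainder_eq_zero : r • ψ - φ * q = 0 := by
    by_contra ne
    have := φ_min _ (L.sub_mem (L.nsmul_mem hψ r) (mul_mem φ hφ q hq)) ne
    rw [remainder_eq, map_mul, abs_mul] at this
    exact this.not_gt (mul_lt_of_lt_one_right (abs_pos.2 (Algebra.norm_ne_zero_iff.2 φ_ne)) norm_lt)
  obtain ⟨m, hm⟩ := Nat.dvd_factorial r_pos hrR
  refine ⟨m • q, nsmul_mem hq m, ?_⟩
  rw [hm, mul_comm, mul_smul, sub_eq_zero.1 remainder_eq_zero, mul_smul_comm]

end DivisionRing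

section CyclicLattices

variable {S : Type*} [Ring S] {Λ : Subring S} {V : Type*} [AddCommGroup V] [Module S V]

/-- The ring of `S`-linear endomorphisms of `V` that preserve the `Λ`-submodule `M`. -/
def endOrder (M : Submodule Λ V) : Subring (Module.End S V) where
  carrier := {q | ∀ x ∈ M, q x ∈ M}
  mul_mem' hp hq x hx := hp _ (hq x hx)
  one_mem' _ hx := hx
  add_mem' hp hq x hx := M.add_mem (hp x hx) (hq x hx)
  zero_mem' _ _ := M.zero_mem
  neg_mem' hq x hx := M.neg_mem (hq x hx)

theorem map_mem_of_mem_span_singleton {M : Submodule Λ V} {v : V} {q : Module.End S V}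
    (hq : q v ∈ M) {x : V} (hx : x ∈ Submodule.span Λ {v}) : q x ∈ M := by
  obtain ⟨a, rfl⟩ := Submodule.mem_span_singleton.1 hx
  rw [Subring.smul_def, map_smul]
  exact M.smul_mem a hq

theorem mem_endOrder_span_singleton {v : V} {q : Module.End S V} :
    q ∈ endOrder (Submodule.span Λ {v}) ↔ q v ∈ Submodule.span Λ {v} :=
  ⟨fun hq => hq v (Submodule.mem_span_singleton_self v),
    fun hq _ hx => map_mem_of_mem_span_singleton hq hx⟩

theorem isFull_endOrder_span_singleton {v : V}
    (hv : IsFull (Submodule.span Λ {v}).toAddSubgroup) :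
    IsFull (endOrder (Submodule.span Λ {v})).toAddSubgroup := fun q => by
  obtain ⟨n, n_pos, hn⟩ := hv (q v)
  exact ⟨n, n_pos, mem_endOrder_span_singleton.2 hn⟩

variable [IsSimpleModule S V]

theorem isFull_span_singleton (hΛ : IsFull Λ.toAddSubgroup) {v : V} (hv : v ≠ 0) :
    IsFull (Submodule.span Λ {v}).toAddSubgroup := fun x => by
  obtain ⟨a, rfl⟩ := IsSimpleModule.toSpanSingleton_surjective S hv x
  obtain ⟨n, n_pos, hn⟩ := hΛ a
  refine ⟨n, n_pos, Submodule.mem_span_singleton.2 ⟨⟨n • a, hn⟩, ?_⟩⟩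
  rw [Subring.smul_def, LinearMap.toSpanSingleton_apply, smul_assoc]

theorem finite_endOrder_span_singleton [Module.Finite ℤ Λ] {v : V} (hv : v ≠ 0) :
    Module.Finite ℤ (endOrder (Submodule.span Λ {v})) := by
  have := Module.Finite.trans (R := ℤ) Λ (Submodule.span Λ {v})
  let evalAt : endOrder (Submodule.span Λ {v}) →+ Submodule.span Λ {v} :=
    { toFun q := ⟨q.1 v, mem_endOrder_span_singleton.1 q.2⟩
      map_zero' := rfl
      map_add' _ _ := rfl }
  refine Module.Finite.of_injective evalAt.toIntLinearMap fun p q hpq => Subtype.ext ?_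
  refine LinearMap.ext fun x => ?_
  obtain ⟨a, rfl⟩ := IsSimpleModule.toSpanSingleton_surjective S hv x
  have apply_eq : p.1 v = q.1 v := congrArg Subtype.val hpq
  rw [LinearMap.toSpanSingleton_apply, map_smul, map_smul, apply_eq]

-- By the density theorem the coordinates of `x` with respect to a basis of `V` over the division
-- ring `Module.End S V` are given by the action of elements of `S`.
theorem exists_sum_smul_smul_eq [Module.Finite (Module.End S V) V] {v : V} (hv : v ≠ 0) :
    ∃ (k : ℕ) (s t : Fin k → S), (∀ i x, ∃ q : Module.End S V, s i • x = q v) ∧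
      ∀ x : V, ∑ i, t i • s i • x = x := by
  classical
  let b := Module.finBasis (Module.End S V) V
  choose s hs using fun i => Module.Finite.toModuleEnd_moduleEnd_surjective (R := S) (M := V)
    ((LinearMap.toSpanSingleton (Module.End S V) V v).comp (b.coord i))
  choose t ht using fun i => IsSimpleModule.toSpanSingleton_surjective S hv (b i)
  have smul_eq (i) (x : V) : s i • x = (b.repr x i) v := LinearMap.congr_fun (hs i) x
  refine ⟨_, s, t, fun i x => ⟨_, smul_eq i x⟩, fun x => ?_⟩
  calc ∑ i, t i • s i • x = ∑ i, b.repr x i • b i := by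
        refine Finset.sum_congr rfl fun i _ => ?_
        rw [smul_eq, ← map_smul, ← ht i]
        rfl
    _ = x := b.sum_repr x

end CyclicLattices

section UniversalLattices

variable {S : Type*} [Ring S] {Λ : Subring S} {U V W : Type*} [AddCommGroup U]
  [Module S U] [AddCommGroup V] [Module S V] [AddCommGroup W] [Module S W]

variable (Λ V) in
/-- There are a full `Λ`-lattice `M₀` in `V` and an `N > 0` such that every full `Λ`-lattice `M` in
`V` contains an `S`-linear image of `M₀` that contains `N • M`. This is a weak form of the
Jordan–Zassenhaus theorem. -/
def HasUniversalLattice : Prop :=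
  ∃ M₀ : Submodule Λ V, M₀.FG ∧ IsFull M₀.toAddSubgroup ∧ ∃ N : ℕ, 0 < N ∧
    ∀ M : Submodule Λ V, M.FG → IsFull M.toAddSubgroup →
      ∃ φ : V →ₗ[S] V, (∀ x ∈ M₀, φ x ∈ M) ∧ ∀ m ∈ M, ∃ y ∈ M₀, N • m = φ y

theorem HasUniversalLattice.congr (e : V ≃ₗ[S] W) (h : HasUniversalLattice Λ V) :
    HasUniversalLattice Λ W := by
  obtain ⟨M₀, M₀_fg, M₀_full, N, N_pos, h⟩ := h
  let e' : V ≃ₗ[Λ] W := e.restrictScalars Λ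
  refine ⟨M₀.map e'.toLinearMap, M₀_fg.map _, fun x => ?_, N, N_pos, fun M M_fg M_full => ?_⟩
  · obtain ⟨n, n_pos, hn⟩ := M₀_full (e.symm x)
    exact ⟨n, n_pos, _, hn, by simp [e']⟩
  obtain ⟨φ, hφ, φ_div⟩ := h (M.map e'.symm.toLinearMap) (M_fg.map _) fun x => by
    obtain ⟨n, n_pos, hn⟩ := M_full (e x)
    exact ⟨n, n_pos, _, hn, by simp [e']⟩
  refine ⟨e.toLinearMap ∘ₗ φ ∘ₗ e.symm.toLinearMap, ?_, fun m hm => ?_⟩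
  · rintro _ ⟨x, hx, rfl⟩
    obtain ⟨m, hm, m_eq⟩ := hφ x hx
    have : e (φ x) = m := by rw [← m_eq]; exact e.apply_symm_apply m
    simpa [e', this] using hm
  · obtain ⟨y, hy, y_eq⟩ := φ_div _ ⟨m, hm, rfl⟩
    refine ⟨e y, ⟨y, hy, rfl⟩, ?_⟩
    have := congrArg e y_eq
    simpa [e'] using this

variable [Algebra ℚ S]

theorem span_eq_top_of_isFull {M : Submodule Λ V} (hM : IsFull M.toAddSubgroup) :
    Submodule.span S (M : Set V) = ⊤ := by
  refine eq_top_iff.2 fun x _ => ?_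
  obtain ⟨n, n_pos, hn⟩ := hM x
  have x_eq : x = algebraMap ℚ S (n : ℚ)⁻¹ • n • x := by
    rw [← Nat.cast_smul_eq_nsmul S, smul_smul, ← map_natCast (algebraMap ℚ S), ← map_mul,
      inv_mul_cancel₀ (by positivity), map_one, one_smul]
  rw [x_eq]
  exact Submodule.smul_mem _ _ (Submodule.subset_span hn)

-- Since `W` is projective over `S`, a full lattice in `W` is projective up to a bounded index.
theorem exists_forall_lift [IsSemisimpleRing S] (hΛ : IsFull Λ.toAddSubgroup) {W₀ : Submodule Λ W}
    (W₀_fg : W₀.FG) (W₀_full : IsFull W₀.toAddSubgroup) :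
    ∃ c : ℕ, 0 < c ∧ ∀ (p : U →ₗ[S] V) (φ : W →ₗ[S] V) (M : Submodule Λ U),
      (∀ x ∈ W₀, ∃ m ∈ M, p m = φ x) →
        ∃ ψ : W →ₗ[S] U, (∀ x ∈ W₀, ψ x ∈ M) ∧ ∀ x, p (ψ x) = c • φ x := by
  obtain ⟨k, w, rfl⟩ := Submodule.fg_iff_exists_fin_generating_family.1 W₀_fg
  have comb_surj : Function.Surjective (Fintype.linearCombination S w) := by
    rw [← LinearMap.range_eq_top, Fintype.range_linearCombination,
      ← Submodule.span_span_of_tower Λ, span_eq_top_of_isFull W₀_full]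
  have := Module.projective_of_isSemisimpleRing S W
  obtain ⟨σ, hσ⟩ := Module.projective_lifting_property _ LinearMap.id comb_surj
  obtain ⟨c, c_pos, hc⟩ := hΛ.exists_forall_nsmul_mem fun i : Fin k × Fin k => σ (w i.1) i.2
  refine ⟨c, c_pos, fun p φ M hM => ?_⟩
  choose m hm p_m using fun i => hM (w i) (Submodule.subset_span ⟨i, rfl⟩)
  let ψ : W →ₗ[S] U := c • Fintype.linearCombination S m ∘ₗ σ
  have ψ_apply (x : W) : ψ x = ∑ i, (c • σ x i) • m i := by
    simp only [ψ, LinearMap.smul_apply, LinearMap.comp_apply,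
      Fintype.linearCombination_apply, Finset.smul_sum, smul_assoc]
  have span_le : Submodule.span Λ (Set.range w) ≤ M.comap (ψ.restrictScalars Λ) := by
    refine Submodule.span_le.2 ?_
    rintro _ ⟨j, rfl⟩
    change ψ (w j) ∈ M
    rw [ψ_apply]
    exact sum_mem fun i _ => M.smul_mem (⟨_, hc (j, i)⟩ : Λ) (hm i)
  refine ⟨ψ, span_le, fun x => ?_⟩
  calc p (ψ x) = c • φ (Fintype.linearCombination S w (σ x)) := by
        simp only [ψ_apply, Fintype.linearCombination_apply, map_sum, map_nsmul, map_smul, p_m,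
          Finset.smul_sum, smul_assoc]
    _ = c • φ x := congrArg (c • φ ·) (LinearMap.congr_fun hσ x)

variable [Module.Finite ℤ Λ]

theorem HasUniversalLattice.prod [IsSemisimpleRing S] (hΛ : IsFull Λ.toAddSubgroup)
    (hV : HasUniversalLattice Λ V) (hW : HasUniversalLattice Λ W) :
    HasUniversalLattice Λ (V × W) := by
  obtain ⟨V₀, V₀_fg, V₀_full, N₁, N₁_pos, hV⟩ := hV
  obtain ⟨W₀, W₀_fg, W₀_full, N₂, N₂_pos, hW⟩ := hW
  obtain ⟨c, c_pos, hc⟩ := exists_forall_lift (U := V × W) (V := W) hΛ W₀_fg W₀_full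
  refine ⟨V₀.prod W₀, V₀_fg.prod W₀_fg, V₀_full.prod W₀_full, N₁ * (c * N₂), by positivity,
    fun M M_fg M_full => ?_⟩
  have := IsNoetherianRing.of_finite ℤ Λ
  have M_inl_fg : (M.comap (LinearMap.inl Λ V W)).FG :=
    Submodule.fg_of_fg_map_injective _ LinearMap.inl_injective
      (M_fg.of_le (Submodule.map_comap_le _ _))
  obtain ⟨φ₁, hφ₁, φ₁_div⟩ := hV _ M_inl_fg fun x => by
    obtain ⟨n, n_pos, hn⟩ := M_full (x, 0)
    exact ⟨n, n_pos, by simpa using hn⟩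
  obtain ⟨φ₂, hφ₂, φ₂_div⟩ := hW (M.map (LinearMap.snd Λ V W)) (M_fg.map _) fun y => by
    obtain ⟨n, n_pos, hn⟩ := M_full (0, y)
    exact ⟨n, n_pos, _, hn, by simp⟩
  obtain ⟨ψ, hψ, snd_ψ⟩ := hc (LinearMap.snd S V W) φ₂ M hφ₂
  refine ⟨(LinearMap.inl S V W ∘ₗ φ₁).coprod ψ, ?_, ?_⟩
  · rintro ⟨x, y⟩ ⟨hx, hy⟩
    exact M.add_mem (hφ₁ x hx) (hψ y hy)
  · rintro ⟨x, y⟩ hm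
    obtain ⟨z, hz, z_eq⟩ := φ₂_div y ⟨(x, y), hm, rfl⟩
    have sub_eq : (c * N₂) • (x, y) - ψ z = ((c * N₂) • x - (ψ z).1, 0) := by
      ext
      · simp
      · have : (ψ z).2 = (c * N₂) • y := by rw [mul_smul, z_eq]; exact snd_ψ z
        simp [this]
    have sub_mem : (c * N₂) • x - (ψ z).1 ∈ M.comap (LinearMap.inl Λ V W) := by
      have := M.sub_mem (M.nsmul_mem hm (c * N₂)) (hψ z hz)
      rwa [sub_eq] at this
    obtain ⟨t, ht, t_eq⟩ := φ₁_div _ sub_mem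
    refine ⟨(t, N₁ • z), ⟨ht, W₀.nsmul_mem hz _⟩, ?_⟩
    calc (N₁ * (c * N₂)) • (x, y) = N₁ • ((c * N₂) • (x, y) - ψ z) + N₁ • ψ z := by
          rw [smul_sub, sub_add_cancel, mul_smul N₁]
      _ = _ := by rw [sub_eq]; simp [← t_eq]

variable [Module ℚ V] [IsScalarTower ℚ S V] [Module.Finite ℚ V]

theorem exists_forall_nsmul_apply_eq [IsSimpleModule S V] {v : V} (hv : v ≠ 0)
    (hΛv : IsFull (Submodule.span Λ {v}).toAddSubgroup) :
    ∃ R : ℕ, 0 < R ∧ ∀ M : Submodule Λ V, M.FG → IsFull M.toAddSubgroup →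
      ∃ φ : Module.End S V, φ v ∈ M ∧
        ∀ ψ : Module.End S V, ψ v ∈ M → ∃ y ∈ Submodule.span Λ {v}, R • ψ v = φ y := by
  classical
  have : IsAddTorsionFree V := IsAddTorsionFree.of_module_rat V
  have : SMulCommClass S ℚ V := SMulCommClass.symm _ _ _
  have : Module.Finite ℚ (Module.End S V) :=
    Module.Finite.of_injective (LinearMap.restrictScalarsₗ ℚ S V V ℚ)
      (LinearMap.restrictScalars_injective ℚ)
  have := finite_endOrder_span_singleton (Λ := Λ) hv
  obtain ⟨R, R_pos, hR⟩ :=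
    exists_forall_nsmul_eq_mul (D := Module.End S V) (isFull_endOrder_span_singleton hΛv)
  refine ⟨R, R_pos, fun M M_fg M_full => ?_⟩
  let L : AddSubgroup (Module.End S V) := M.toAddSubgroup.comap
    { toFun := fun q => q v
      map_zero' := rfl
      map_add' _ _ := rfl }
  have L_ne_bot : L ≠ ⊥ := by
    obtain ⟨n, n_pos, hn⟩ := M_full v
    have one_mem : n • (1 : Module.End S V) ∈ L := hn
    intro L_eq
    rw [L_eq, AddSubgroup.mem_bot] at one_mem
    exact smul_ne_zero n_pos.ne' hv (LinearMap.congr_fun one_mem v)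
  have L_bounded : ∃ c : ℕ, 0 < c ∧ ∀ ψ ∈ L, c • ψ ∈ endOrder (Submodule.span Λ {v}) := by
    obtain ⟨c, c_pos, hc⟩ := hΛv.exists_nsmul_mem_of_fg M_fg
    exact ⟨c, c_pos, fun ψ hψ => mem_endOrder_span_singleton.2 (hc _ hψ)⟩
  obtain ⟨φ, hφ, -, hdiv⟩ := hR L L_ne_bot
    (fun ψ hψ q hq => map_mem_of_mem_span_singleton hψ (mem_endOrder_span_singleton.1 hq)) L_bounded
  refine ⟨φ, hφ, fun ψ hψ => ?_⟩
  obtain ⟨q, hq, eq⟩ := hdiv ψ hψ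
  exact ⟨q v, mem_endOrder_span_singleton.1 hq, LinearMap.congr_fun eq v⟩

theorem HasUniversalLattice.of_isSimpleModule [IsSimpleModule S V]
    (hΛ : IsFull Λ.toAddSubgroup) : HasUniversalLattice Λ V := by
  have : Nontrivial V := IsSimpleModule.nontrivial S V
  have : IsScalarTower ℚ (Module.End S V) V := ⟨fun _ _ _ => rfl⟩
  have : Module.Finite (Module.End S V) V := Module.Finite.of_restrictScalars_finite ℚ _ V
  obtain ⟨v, hv⟩ := exists_ne (0 : V)
  let M₀ : Submodule Λ V := Submodule.span Λ {v}
  have M₀_full : IsFull M₀.toAddSubgroup := isFull_span_singleton hΛ hv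
  obtain ⟨R, R_pos, hR⟩ := exists_forall_nsmul_apply_eq hv M₀_full
  obtain ⟨k, s, t, hs, sum_eq⟩ := exists_sum_smul_smul_eq (S := S) hv
  obtain ⟨n, n_pos, hn⟩ := hΛ.exists_forall_nsmul_mem (Sum.elim s t)
  refine ⟨M₀, Submodule.fg_span_singleton v, M₀_full, n * (R * n), by positivity,
    fun M M_fg M_full => ?_⟩
  obtain ⟨φ, hφ, φ_div⟩ := hR M M_fg M_full
  refine ⟨φ, fun x hx => map_mem_of_mem_span_singleton hφ hx, fun m hm => ?_⟩
  have coord_eq (i) : ∃ y ∈ M₀, (R * n) • s i • m = φ y := by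
    obtain ⟨q, hq⟩ := hs i m
    have nsmul_mem : (n • q) v ∈ M := by
      rw [LinearMap.smul_apply, ← hq, ← smul_assoc]
      exact M.smul_mem (⟨n • s i, hn (.inl i)⟩ : Λ) hm
    rw [mul_smul, hq]
    exact φ_div _ nsmul_mem
  choose y hy y_eq using coord_eq
  refine ⟨∑ i, (⟨n • t i, hn (.inr i)⟩ : Λ) • y i, sum_mem fun i _ => M₀.smul_mem _ (hy i), ?_⟩
  calc (n * (R * n)) • m = ∑ i, (n • t i) • (R * n) • s i • m := by
        conv_lhs => rw [← sum_eq m, Finset.smul_sum]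
        refine Finset.sum_congr rfl fun i _ => ?_
        rw [mul_smul, smul_assoc, smul_comm (R * n) (t i)]
    _ = φ (∑ i, (⟨n • t i, hn (.inr i)⟩ : Λ) • y i) := by
        rw [map_sum]
        refine Finset.sum_congr rfl fun i _ => ?_
        rw [y_eq, Subring.smul_def, map_smul]

variable (V) in
theorem hasUniversalLattice [IsSemisimpleRing S] (hΛ : IsFull Λ.toAddSubgroup) :
    HasUniversalLattice Λ V := by
  induction hn : Module.finrank ℚ V using Nat.strong_induction_on generalizing V with
  | _ n ih =>
    rcases subsingleton_or_nontrivial V with _ | _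
    · exact ⟨⊤, Module.Finite.fg_top, fun x => ⟨1, one_pos, trivial⟩, 1, one_pos, fun M _ _ =>
        ⟨0, fun x _ => M.zero_mem, fun m _ => ⟨0, trivial, Subsingleton.elim _ _⟩⟩⟩
    obtain ⟨W, _⟩ := IsSemisimpleModule.exists_simple_submodule S V
    obtain ⟨W', hW'⟩ := exists_isCompl W
    let e := Submodule.prodEquivOfIsCompl W W' hW'
    have := IsSimpleModule.nontrivial S W
    have := Module.Finite.of_injective (W.subtype.restrictScalars ℚ) W.injective_subtype
    have := Module.Finite.of_injective (W'.subtype.restrictScalars ℚ) W'.injective_subtype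
    have finrank_eq := (e.restrictScalars ℚ).finrank_eq
    rw [Module.finrank_prod] at finrank_eq
    have finrank_pos : 0 < Module.finrank ℚ W := Module.finrank_pos
    exact ((HasUniversalLattice.of_isSimpleModule hΛ).prod hΛ (ih _ (by omega) W' rfl)).congr e

theorem exists_forall_nsmul_eq_mul_of_fg [Module.Finite ℚ S] [IsSemisimpleRing S]
    (hΛ : IsFull Λ.toAddSubgroup) :
    ∃ N : ℕ, 0 < N ∧ ∀ M : Submodule Λ S, M.FG → IsFull M.toAddSubgroup →
      ∃ s ∈ M, ∀ m ∈ M, ∃ a ∈ Λ, N • m = a * s := by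
  obtain ⟨M₀, M₀_fg, M₀_full, N, N_pos, hN⟩ := hasUniversalLattice S hΛ
  obtain ⟨n, n_pos, hn⟩ := M₀_full 1
  obtain ⟨k, k_pos, hk⟩ := IsFull.exists_nsmul_mem_of_fg (M := Submodule.span Λ {(1 : S)})
    (fun x => (hΛ x).imp fun m hm =>
      ⟨hm.1, Submodule.mem_span_singleton.2 ⟨⟨_, hm.2⟩, mul_one _⟩⟩) M₀_fg
  refine ⟨n * (k * N), by positivity, fun M M_fg M_full => ?_⟩
  obtain ⟨φ, hφ, φ_div⟩ := hN M M_fg M_full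
  refine ⟨φ (n • 1), hφ _ hn, fun m hm => ?_⟩
  obtain ⟨y, hy, y_eq⟩ := φ_div m hm
  obtain ⟨a, ha⟩ := Submodule.mem_span_singleton.1 (hk y hy)
  have a_eq : (a : S) = k • y := by simpa [Subring.smul_def] using ha
  refine ⟨a, a.2, ?_⟩
  calc (n * (k * N)) • m = n • φ (k • y) := by rw [mul_smul, mul_smul, y_eq, map_nsmul φ]
    _ = a * φ (n • 1) := by
      rw [← smul_eq_mul, ← φ.map_smul, smul_eq_mul, mul_smul_comm, mul_one, a_eq, map_nsmul φ n]

end UniversalLattices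

section FiniteRings

theorem exists_forall_nsmul_eq_zero (G : Type*) [AddCommGroup G] [AddGroup.FG G] :
    ∃ c : ℕ, 0 < c ∧ ∀ x : G, IsOfFinAddOrder x → c • x = 0 := by
  let T := AddSubgroup.toIntSubmodule (AddCommGroup.torsion G)
  have : Module.Finite ℤ G := Module.Finite.iff_addGroup_fg.2 inferInstance
  have : AddGroup.FG T := Module.Finite.iff_addGroup_fg.1 inferInstance
  have : Finite T := AddCommGroup.finite_of_fg_isAddTorsion T fun x =>
    (AddSubmonoid.isOfFinAddOrder_coe (x := x)).1 x.2
  exact ⟨Nat.card T, Nat.card_pos, fun x hx =>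
    congrArg Subtype.val (card_nsmul_eq_zero' (x := (⟨x, hx⟩ : T)))⟩

-- The cokernel of `1 + d φ` is equal to `d` times itself, so Nakayama's lemma kills it by an
-- integer congruent to `1` modulo `d`.
theorem exists_forall_nsmul_eq_add_nsmul {G : Type*} [AddCommGroup G] [AddGroup.FG G] {d : ℕ}
    (hd : d ≠ 1) (φ : G →+ G) : ∃ r : ℕ, 0 < r ∧ ∀ x, ∃ y, r • x = y + d • φ y := by
  have : Module.Finite ℤ G := Module.Finite.iff_addGroup_fg.2 inferInstance
  let L := LinearMap.range (LinearMap.id + d • φ.toIntLinearMap)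
  have top_le : (⊤ : Submodule ℤ (G ⧸ L)) ≤ Ideal.span {(d : ℤ)} • ⊤ := by
    intro q _
    obtain ⟨x, rfl⟩ := L.mkQ_surjective q
    have mk_eq : L.mkQ x = (d : ℤ) • L.mkQ (-φ x) := by
      rw [← map_smul, ← sub_eq_zero, ← map_sub]
      exact (Submodule.Quotient.mk_eq_zero L).2 ⟨x, by simp⟩
    rw [mk_eq]
    exact Submodule.smul_mem_smul (Ideal.mem_span_singleton_self _) trivial
  obtain ⟨r, hr, r_smul⟩ :=
    Submodule.exists_sub_one_mem_and_smul_eq_zero_of_fg_of_le_smul _ _ Module.Finite.fg_top top_le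
  have r_ne : r ≠ 0 := by
    rintro rfl
    rw [zero_sub, Ideal.mem_span_singleton, dvd_neg] at hr
    exact hd (by exact_mod_cast Int.eq_one_of_dvd_one (Int.natCast_nonneg d) hr)
  refine ⟨r.natAbs, Int.natAbs_pos.2 r_ne, fun x => ?_⟩
  have smul_mem : r • x ∈ L := (Submodule.Quotient.mk_eq_zero L).1 (r_smul (L.mkQ x) trivial)
  obtain ⟨y, hy⟩ : r.natAbs • x ∈ L := by
    rw [← natCast_zsmul]
    rcases Int.natAbs_eq r with h | h <;> rw [h] at smul_mem <;> simpa using smul_mem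
  exact ⟨y, hy.symm⟩

variable {E : Type*} [Ring E]

theorem exists_mul_eq_nsmul_one {x : E} {c N r : ℕ}
    (h : c • (N • 1 - x) ^ r = 0) : ∃ q, q * x = (c * N ^ r) • 1 := by
  have comm : Commute (N • 1) (N • 1 - x) := (Commute.one_left _).smul_left N
  refine ⟨c • ∑ i ∈ Finset.range r, (N • 1) ^ i * (N • 1 - x) ^ (r - 1 - i), ?_⟩
  calc _ = c • ((N • 1) ^ r - (N • 1 - x) ^ r) := by
        rw [← comm.geom_sum₂_mul, sub_sub_cancel, smul_mul_assoc]
    _ = (c * N ^ r) • 1 := by rw [smul_sub, h, sub_zero, smul_pow, one_pow, smul_smul]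

open TensorProduct

variable (E) in
/-- The rationalization map `E → ℚ ⊗ E`. -/
noncomputable abbrev toRat : E →+* ℚ ⊗[ℤ] E :=
  (Algebra.TensorProduct.includeRight : E →ₐ[ℤ] ℚ ⊗[ℤ] E).toRingHom

theorem isFull_range_toRat : IsFull (toRat E).range.toAddSubgroup := fun x => by
  obtain ⟨⟨e, s⟩, h⟩ := IsLocalizedModule.surj (nonZeroDivisors ℤ) (TensorProduct.mk ℤ ℚ E 1) x
  refine ⟨(s : ℤ).natAbs, Int.natAbs_pos.2 (nonZeroDivisors.ne_zero s.2), ?_⟩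
  have : (s : ℤ) • x ∈ (toRat E).range.toAddSubgroup := ⟨e, h.symm⟩
  rw [← natCast_zsmul]
  rcases Int.natAbs_eq (s : ℤ) with hs | hs <;> rw [hs] at this <;> simpa using this

theorem toRat_eq_zero_iff {e : E} : toRat E e = 0 ↔ IsOfFinAddOrder e := by
  rw [isOfFinAddOrder_iff_zsmul_eq_zero]
  refine (IsLocalizedModule.eq_zero_iff (nonZeroDivisors ℤ) (TensorProduct.mk ℤ ℚ E 1)).trans ?_
  exact ⟨fun ⟨s, hs⟩ => ⟨s, nonZeroDivisors.ne_zero s.2, hs⟩,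
    fun ⟨n, hn, h⟩ => ⟨⟨n, mem_nonZeroDivisors_of_ne_zero hn⟩, h⟩⟩

variable (E) in
/-- The largest semisimple quotient of the `ℚ`-algebra `ℚ ⊗ E`. -/
abbrev SemisimpleQuotient : Type _ :=
  (ℚ ⊗[ℤ] E) ⧸ Ring.jacobson (ℚ ⊗[ℤ] E)

variable (E) in
/-- The natural map from `E` to the largest semisimple quotient of `ℚ ⊗ E`. -/
noncomputable abbrev toSemisimpleQuotient : E →+* SemisimpleQuotient E :=
  (Ideal.Quotient.mk _).comp (toRat E)

theorem isFull_range_toSemisimpleQuotient :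
    IsFull (toSemisimpleQuotient E).range.toAddSubgroup := fun s => by
  obtain ⟨x, rfl⟩ := Ideal.Quotient.mk_surjective s
  obtain ⟨n, n_pos, e, he⟩ := isFull_range_toRat x
  exact ⟨n, n_pos, e, congrArg (Ideal.Quotient.mk _) he⟩

variable [Module.Finite ℤ E]

theorem isOfFinAddOrder_of_mul_eq_zero {m : ℕ} (hm : 0 < m) {u v t : E} (hvu : v * u = m • 1)
    (hvt : v * t = 0) : IsOfFinAddOrder t := by
  have : IsNoetherianRing (ℚ ⊗[ℤ] E) := IsNoetherianRing.of_finite ℚ _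
  have right_inv : toRat E v * ((m : ℚ)⁻¹ • toRat E u) = 1 := by
    rw [mul_smul_comm, ← map_mul, hvu, map_nsmul, map_one, ← Nat.cast_smul_eq_nsmul ℚ,
      inv_smul_smul₀ (by positivity)]
  rw [← toRat_eq_zero_iff, ← one_mul (toRat E t), ← mul_eq_one_comm.1 right_inv, mul_assoc,
    ← map_mul, hvt, map_zero, mul_zero]

instance : IsSemisimpleRing (SemisimpleQuotient E) :=
  have : IsArtinianRing (ℚ ⊗[ℤ] E) := IsArtinianRing.of_finite ℚ _
  inferInstance

variable (E) in
theorem exists_pow_ker_torsion :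
    ∃ r : ℕ, ∀ x ∈ RingHom.ker (toSemisimpleQuotient E) ^ r, IsOfFinAddOrder x := by
  have : IsArtinianRing (ℚ ⊗[ℤ] E) := IsArtinianRing.of_finite ℚ _
  obtain ⟨r, hr⟩ := IsSemiprimaryRing.isNilpotent (R := ℚ ⊗[ℤ] E)
  have toRat_mem (s : ℕ) : ∀ x ∈ RingHom.ker (toSemisimpleQuotient E) ^ s,
      toRat E x ∈ Ring.jacobson (ℚ ⊗[ℤ] E) ^ s := by
    induction s with
    | zero => simp [Submodule.pow_zero]
    | succ s ih =>
      intro x hx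
      rw [Submodule.pow_succ] at hx ⊢
      induction hx using Submodule.mul_induction_on' with
      | mem_mul_mem x hx y hy =>
        rw [map_mul]
        exact Ideal.mul_mem_mul (ih x hx) (Ideal.Quotient.eq_zero_iff_mem.1 hy)
      | add x _ y _ hx hy => rw [map_add]; exact Ideal.add_mem _ hx hy
  refine ⟨r, fun x hx => toRat_eq_zero_iff.1 ?_⟩
  simpa [hr] using toRat_mem r x hx

theorem exists_forall_nsmul_sub_mul_mem_ker {S : Type*} [Ring S] [Algebra ℚ S] [Module.Finite ℚ S]
    [IsSemisimpleRing S] {ρ : E →+* S} (hρ : IsFull ρ.range.toAddSubgroup) :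
    ∃ N : ℕ, 0 < N ∧ ∀ (J : Ideal E) (n : ℕ), 0 < n → n • 1 ∈ J →
      ∃ k ∈ J, ∀ x ∈ J, ∃ e, N • x - e * k ∈ RingHom.ker ρ := by
  have : Module.Finite ℤ ρ.range := Module.Finite.of_surjective
    ρ.rangeRestrict.toAddMonoidHom.toIntLinearMap ρ.rangeRestrict_surjective
  have : IsNoetherianRing ρ.range := IsNoetherianRing.of_finite ℤ _
  obtain ⟨N, N_pos, hN⟩ := exists_forall_nsmul_eq_mul_of_fg hρ
  refine ⟨N, N_pos, fun J n n_pos hn => ?_⟩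
  let M : Submodule ρ.range S :=
    Submodule.map (LinearMap.toSpanSingleton ρ.range S 1) (J.map ρ.rangeRestrict)
  have mem_M {s : S} : s ∈ M ↔ ∃ x ∈ J, ρ x = s := by
    simp only [M, Submodule.mem_map, LinearMap.toSpanSingleton_apply,
      Ideal.mem_map_iff_of_surjective _ ρ.rangeRestrict_surjective, Subring.smul_def, smul_eq_mul,
      mul_one, exists_exists_and_eq_and, RingHom.coe_rangeRestrict]
  have M_full : IsFull M.toAddSubgroup := fun s => by
    obtain ⟨m, m_pos, e, he⟩ := hρ s
    refine ⟨n * m, by positivity, mem_M.2 ⟨e * n • 1, J.mul_mem_left e hn, ?_⟩⟩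
    rw [mul_smul_comm, mul_one, map_nsmul, mul_smul]
    exact congrArg (n • ·) he
  obtain ⟨s, hs, s_div⟩ := hN M ((IsNoetherian.noetherian _).map _) M_full
  obtain ⟨k, hk, rfl⟩ := mem_M.1 hs
  refine ⟨k, hk, fun x hx => ?_⟩
  obtain ⟨_, ⟨e, rfl⟩, eq⟩ := s_div _ (mem_M.2 ⟨x, hx, rfl⟩)
  exact ⟨e, by rw [RingHom.mem_ker, map_sub, map_nsmul, map_mul, eq, sub_self]⟩

end FiniteRings

section GenusClasses

variable {A : Type*} [Category A] [Preadditive A] {X Y Y' : A}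

section

variable {a₁ a₂ : Y ⟶ X} {b₁ b₂ : X ⟶ Y}

theorem eq_zero_of_forall_comp_eq_zero (hab : 𝟙 Y = a₁ ≫ b₁ + a₂ ≫ b₂) {u : Y ⟶ Y}
    (hu : ∀ (b : X ⟶ Y) (a : Y ⟶ X), b ≫ u ≫ a = 0) : u = 0 := by
  rw [← Category.id_comp u, ← Category.comp_id u, hab]
  simp only [Preadditive.add_comp, Preadditive.comp_add, Category.assoc, reassoc_of% hu,
    zero_comp, comp_zero, add_zero]

theorem nsmul_eq_zero_of_forall_isOfFinAddOrder (hab : 𝟙 Y = a₁ ≫ b₁ + a₂ ≫ b₂) {c : ℕ}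
    (hc : ∀ e : X ⟶ X, IsOfFinAddOrder e → c • e = 0) {u : Y ⟶ Y}
    (hu : ∀ (b : X ⟶ Y) (a : Y ⟶ X), IsOfFinAddOrder (b ≫ u ≫ a)) : c • u = 0 :=
  eq_zero_of_forall_comp_eq_zero hab fun b a => by simpa using hc _ (hu b a)

theorem comp_pow_comp_mem (hab : 𝟙 Y = a₁ ≫ b₁ + a₂ ≫ b₂) {I : Ideal (End X)} {w : End Y}
    (hw : ∀ (b : X ⟶ Y) (a : Y ⟶ X), b ≫ w ≫ a ∈ I) (s : ℕ) :
    ∀ (b : X ⟶ Y) (a : Y ⟶ X), b ≫ (w ^ s : End Y) ≫ a ∈ I ^ s := by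
  induction s with
  | zero => simp [Submodule.pow_zero]
  | succ s ih =>
    intro b a
    have comp_eq : b ≫ (w ^ (s + 1) : End Y) ≫ a =
        (b ≫ w ≫ a₁) ≫ b₁ ≫ (w ^ s : End Y) ≫ a + (b ≫ w ≫ a₂) ≫ b₂ ≫ (w ^ s : End Y) ≫ a := by
      calc b ≫ (w ^ (s + 1) : End Y) ≫ a = b ≫ w ≫ 𝟙 Y ≫ (w ^ s : End Y) ≫ a := by
            rw [pow_succ, End.mul_def]; simp
        _ = _ := by rw [hab]; simp
    rw [comp_eq, Submodule.pow_succ]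
    exact (I ^ s * I).add_mem (Ideal.mul_mem_mul (R := End X) (ih b₁ a) (hw b a₁))
      (Ideal.mul_mem_mul (R := End X) (ih b₂ a) (hw b a₂))

theorem exists_forall_comp_sub_comp_mem (hab : 𝟙 Y = a₁ ≫ b₁ + a₂ ≫ b₂) {I : Ideal (End X)}
    {N : ℕ} {k : Y ⟶ X} (hk : ∀ i : Y ⟶ X, ∃ e : X ⟶ X, ∀ b : X ⟶ Y, b ≫ (N • i - k ≫ e) ∈ I) :
    ∃ g : X ⟶ Y, ∀ (b : X ⟶ Y) (a : Y ⟶ X), b ≫ (N • 𝟙 Y - k ≫ g) ≫ a ∈ I := by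
  obtain ⟨e₁, he₁⟩ := hk a₁
  obtain ⟨e₂, he₂⟩ := hk a₂
  refine ⟨e₁ ≫ b₁ + e₂ ≫ b₂, fun b a => ?_⟩
  have comp_eq : b ≫ (N • 𝟙 Y - k ≫ (e₁ ≫ b₁ + e₂ ≫ b₂)) ≫ a =
      (b ≫ (N • a₁ - k ≫ e₁)) ≫ b₁ ≫ a + (b ≫ (N • a₂ - k ≫ e₂)) ≫ b₂ ≫ a := by
    rw [hab]
    simp only [Preadditive.sub_comp, Preadditive.comp_sub, Preadditive.add_comp,
      Preadditive.comp_add, Preadditive.nsmul_comp, Preadditive.comp_nsmul, smul_add,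
      Category.assoc]
    abel
  rw [comp_eq]
  exact I.add_mem (I.mul_mem_left (End.of (b₁ ≫ a)) (he₁ b))
    (I.mul_mem_left (End.of (b₂ ≫ a)) (he₂ b))

end

section

variable {N c : ℕ} {f : Y ⟶ X} {g : X ⟶ Y} {f' : Y' ⟶ X} {g' : X ⟶ Y'}

-- Dividing `f ≫ g'` by `N` uses only that `g'` agrees with `g ≫ t` modulo a multiple of `N`.
theorem exists_nsmul_eq_comp (hfg : f ≫ g = N • 𝟙 Y)
    {θ : (reduction A (N * c)).obj Y ⟶ (reduction A (N * c)).obj Y'}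
    (hθ : (reduction A (N * c)).map g ≫ θ = (reduction A (N * c)).map g') :
    ∃ t w : Y ⟶ Y', (reduction A (N * c)).map t = θ ∧ N • (t + c • w) = f ≫ g' := by
  obtain ⟨t, rfl⟩ := (reduction A (N * c)).map_surjective θ
  rw [← Functor.map_comp] at hθ
  obtain ⟨z, hz⟩ := reduction_map_eq_iff.1 hθ.symm
  refine ⟨t, f ≫ z, rfl, ?_⟩
  simp [hz, reassoc_of% hfg, mul_smul]

theorem comp_eq_id_of_nsmul_eq_comp (N_pos : 0 < N) (c_pos : 0 < c)
    (hc : ∀ e : Y ⟶ Y, IsOfFinAddOrder e → c • e = 0)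
    (hfg : f ≫ g = N • 𝟙 Y) (hgf' : g' ≫ f' = N • 𝟙 X) {t w : Y ⟶ Y'} {t' w' : Y' ⟶ Y}
    (htt' : (reduction A (N * c)).map (t ≫ t') = (reduction A (N * c)).map (𝟙 Y))
    (ht : N • (t + c • w) = f ≫ g') (ht' : N • (t' + c • w') = f' ≫ g) :
    (t + c • w) ≫ (t' + c • w') = 𝟙 Y := by
  obtain ⟨z, hz⟩ := reduction_map_eq_iff.1 htt'
  let u := N • z + t ≫ w' + w ≫ (t' + c • w')
  have comp_eq : (t + c • w) ≫ (t' + c • w') = 𝟙 Y + c • u := by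
    simp only [u, Preadditive.add_comp, Preadditive.comp_add, hz, mul_comm N, mul_smul, smul_add,
      Preadditive.nsmul_comp, Preadditive.comp_nsmul]
    abel
  have smul_comp_eq : (N * N) • ((t + c • w) ≫ (t' + c • w')) = (N * N) • 𝟙 Y := by
    calc _ = (N • (t + c • w)) ≫ (N • (t' + c • w')) := by
          rw [Preadditive.nsmul_comp, Preadditive.comp_nsmul, smul_smul]
      _ = (N * N) • 𝟙 Y := by simp [ht, ht', reassoc_of% hgf', hfg, smul_smul]
  have torsion : IsOfFinAddOrder u := by
    rw [comp_eq, smul_add, add_eq_left, smul_smul] at smul_comp_eq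
    exact isOfFinAddOrder_iff_nsmul_eq_zero.2 ⟨_, by positivity, smul_comp_eq⟩
  rw [comp_eq, hc u torsion, add_zero]

theorem nonempty_iso_of_reduction_iso (N_pos : 0 < N) (c_pos : 0 < c)
    (hc : ∀ e : Y ⟶ Y, IsOfFinAddOrder e → c • e = 0)
    (hc' : ∀ e : Y' ⟶ Y', IsOfFinAddOrder e → c • e = 0)
    (hfg : f ≫ g = N • 𝟙 Y) (hgf : g ≫ f = N • 𝟙 X)
    (hfg' : f' ≫ g' = N • 𝟙 Y') (hgf' : g' ≫ f' = N • 𝟙 X)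
    (θ : (reduction A (N * c)).obj Y ≅ (reduction A (N * c)).obj Y')
    (hθ : (reduction A (N * c)).map g ≫ θ.hom = (reduction A (N * c)).map g') :
    Nonempty (Y ≅ Y') := by
  obtain ⟨t, w, ht, t_eq⟩ := exists_nsmul_eq_comp hfg hθ
  obtain ⟨t', w', ht', t'_eq⟩ := exists_nsmul_eq_comp hfg' (θ.eq_comp_inv.2 hθ).symm
  refine ⟨⟨t + c • w, t' + c • w', ?_, ?_⟩⟩
  · exact comp_eq_id_of_nsmul_eq_comp N_pos c_pos hc hfg hgf' (by simp [ht, ht']) t_eq t'_eq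
  · exact comp_eq_id_of_nsmul_eq_comp N_pos c_pos hc' hfg' hgf (by simp [ht, ht']) t'_eq t_eq

end

variable [∀ X Y : A, AddGroup.FG (X ⟶ Y)]

instance : Module.Finite ℤ (End X) :=
  Module.Finite.iff_addGroup_fg.2 (inferInstanceAs (AddGroup.FG (X ⟶ X)))

theorem SameGenus.exists_comp_eq_nsmul_id (h : SameGenus X Y) :
    ∃ (R : ℕ) (f : X ⟶ Y) (p : Y ⟶ X), 0 < R ∧ f ≫ p = R • 𝟙 X ∧ p ≫ f = R • 𝟙 Y := by
  obtain ⟨f, g, α, β, hfg, hgf⟩ := h.exists_comp_eq two_pos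
  obtain ⟨r, r_pos, hr⟩ :=
    exists_forall_nsmul_eq_add_nsmul (by decide : 2 ≠ 1) (Preadditive.leftComp X α)
  obtain ⟨s, s_pos, hs⟩ :=
    exists_forall_nsmul_eq_add_nsmul (by decide : 2 ≠ 1) (Preadditive.rightComp Y β)
  obtain ⟨b, hb⟩ := hr (𝟙 X)
  obtain ⟨d, hd⟩ := hs (𝟙 Y)
  have right_inv : f ≫ g ≫ b = r • 𝟙 X := by
    simpa [reassoc_of% hfg, Preadditive.leftComp] using hb.symm
  have left_inv : d ≫ g ≫ f = s • 𝟙 Y := by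
    simpa [hgf, Preadditive.rightComp] using hd.symm
  have smul_eq : s • g ≫ b = r • d ≫ g := by
    calc s • g ≫ b = (s • 𝟙 Y) ≫ g ≫ b := by simp
      _ = d ≫ g ≫ f ≫ g ≫ b := by rw [← left_inv]; simp
      _ = r • d ≫ g := by rw [right_inv]; simp
  refine ⟨s * r, f, s • g ≫ b, by positivity, ?_, ?_⟩
  · rw [Preadditive.comp_nsmul, right_inv, mul_smul]
  · rw [smul_eq, Preadditive.nsmul_comp, Category.assoc, left_inv, smul_smul, mul_comm]

theorem SameGenus.exists_id_eq_add (h : SameGenus X Y) :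
    ∃ (a₁ a₂ : Y ⟶ X) (b₁ b₂ : X ⟶ Y), 𝟙 Y = a₁ ≫ b₁ + a₂ ≫ b₂ := by
  obtain ⟨R, f, p, R_pos, -, hpf⟩ := h.exists_comp_eq_nsmul_id
  obtain ⟨f', g', -, β, -, hgf⟩ := h.exists_comp_eq R_pos
  exact ⟨g', -β ≫ p, f', f, by simp [hgf, hpf]⟩

variable (X) in
theorem exists_forall_comp_mem_ker {S : Type*} [Ring S] [Algebra ℚ S] [Module.Finite ℚ S]
    [IsSemisimpleRing S] {ρ : End X →+* S} (hρ : IsFull ρ.range.toAddSubgroup) :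
    ∃ N : ℕ, 0 < N ∧ ∀ Y : A, SameGenus X Y → ∃ k : Y ⟶ X, ∀ i : Y ⟶ X, ∃ e : X ⟶ X,
      ∀ b : X ⟶ Y, b ≫ (N • i - k ≫ e) ∈ RingHom.ker ρ := by
  obtain ⟨N, N_pos, hN⟩ := exists_forall_nsmul_sub_mul_mem_ker hρ
  refine ⟨N, N_pos, fun Y h => ?_⟩
  obtain ⟨R, f, p, R_pos, hfp, hpf⟩ := h.exists_comp_eq_nsmul_id
  let J : Ideal (End X) :=
    { (Preadditive.leftComp X f).range with
      smul_mem' := by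
        rintro e _ ⟨i, rfl⟩
        exact ⟨i ≫ e, (Category.assoc _ _ _).symm⟩ }
  obtain ⟨_, ⟨k, rfl⟩, hk⟩ := hN J R R_pos ⟨p, hfp⟩
  refine ⟨k, fun i => ?_⟩
  obtain ⟨e, he⟩ := hk _ ⟨i, rfl⟩
  have comp_mem : f ≫ (N • i - k ≫ e) ∈ RingHom.ker ρ := by
    have sub_eq : N • (f ≫ i) - (f ≫ k) ≫ e = f ≫ (N • i - k ≫ e) := by simp
    rwa [← sub_eq]
  refine ⟨e, fun b => ?_⟩
  have : IsAddTorsionFree S := IsAddTorsionFree.of_module_rat S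
  have smul_eq : R • b ≫ (N • i - k ≫ e) = (b ≫ p) ≫ f ≫ (N • i - k ≫ e) := by
    rw [Category.assoc, reassoc_of% hpf, Preadditive.nsmul_comp, Category.id_comp,
      Preadditive.comp_nsmul]
  have smul_map_eq : R • ρ (b ≫ (N • i - k ≫ e)) = 0 := by
    refine (map_nsmul ρ _ _).symm.trans ?_
    rw [smul_eq]
    exact Ideal.mul_mem_right (End.of (b ≫ p)) (RingHom.ker ρ) comp_mem
  exact (nsmul_eq_zero_iff_right R_pos.ne').1 smul_map_eq

-- Modulo the kernel of the map to the semisimple quotient, multiplication by `N` on `Y` factors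
-- through `X`. As this kernel is nilpotent up to torsion, `c * N ^ r` factors through `X` as well.
variable (X) in
theorem exists_forall_exists_comp_eq_nsmul_id :
    ∃ N : ℕ, 0 < N ∧ ∀ Y : A, SameGenus X Y →
      ∃ (k : Y ⟶ X) (g : X ⟶ Y), k ≫ g = N • 𝟙 Y := by
  obtain ⟨N, N_pos, hN⟩ := exists_forall_comp_mem_ker X
    (isFull_range_toSemisimpleQuotient (E := End X))
  obtain ⟨r, hr⟩ := exists_pow_ker_torsion (End X)
  obtain ⟨c, c_pos, hc⟩ := exists_forall_nsmul_eq_zero (X ⟶ X)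
  refine ⟨c * N ^ r, by positivity, fun Y h => ?_⟩
  obtain ⟨a₁, a₂, b₁, b₂, hab⟩ := h.exists_id_eq_add
  obtain ⟨k, hk⟩ := hN Y h
  obtain ⟨g, hg⟩ := exists_forall_comp_sub_comp_mem hab hk
  have pow_eq_zero : c • (N • 1 - End.of (k ≫ g)) ^ r = 0 :=
    nsmul_eq_zero_of_forall_isOfFinAddOrder hab hc fun b a => hr _ (comp_pow_comp_mem hab hg r b a)
  obtain ⟨q, hq⟩ := exists_mul_eq_nsmul_one pow_eq_zero
  exact ⟨k, g ≫ q, (Category.assoc _ _ _).symm.trans hq⟩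

variable (X) in
theorem exists_forall_exists_inverses :
    ∃ N : ℕ, 0 < N ∧ ∀ Y : A, SameGenus X Y →
      ∃ (f : Y ⟶ X) (g : X ⟶ Y), f ≫ g = N • 𝟙 Y ∧ g ≫ f = N • 𝟙 X := by
  obtain ⟨N, N_pos, hN⟩ := exists_forall_exists_comp_eq_nsmul_id X
  obtain ⟨c, c_pos, hc⟩ := exists_forall_nsmul_eq_zero (X ⟶ X)
  refine ⟨c * N, by positivity, fun Y h => ?_⟩
  obtain ⟨k, g, hkg⟩ := hN Y h
  obtain ⟨R, f, p, R_pos, hfp, -⟩ := h.exists_comp_eq_nsmul_id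
  have comp_eq : (f ≫ k) ≫ g ≫ p = (N * R) • 𝟙 X := by
    rw [Category.assoc, reassoc_of% hkg]
    simp [hfp, smul_smul]
  have comp_eq_zero : (g ≫ k - N • 𝟙 X) ≫ g ≫ p = 0 := by
    simp [reassoc_of% hkg]
  have torsion : IsOfFinAddOrder (g ≫ k - N • 𝟙 X) :=
    isOfFinAddOrder_of_mul_eq_zero (E := End X) (by positivity) comp_eq comp_eq_zero
  refine ⟨k, c • g, by simp [hkg, smul_smul], ?_⟩
  rw [mul_smul, Preadditive.nsmul_comp, ← sub_eq_zero, ← smul_sub, hc _ torsion]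

variable (X) in
theorem SameGenus.finite_isoClasses :
    ∃ (n : ℕ) (F : Fin n → A), ∀ Y : A, SameGenus X Y → ∃ i, Nonempty (Y ≅ F i) := by
  obtain ⟨N, N_pos, hN⟩ := exists_forall_exists_inverses X
  obtain ⟨c, c_pos, hc⟩ := exists_forall_nsmul_eq_zero (X ⟶ X)
  choose f g hfg hgf using fun Y : {Y // SameGenus X Y} => hN Y Y.2
  let θ (Y : {Y // SameGenus X Y}) := (Y.2 (N * c) (by positivity)).some
  let invariant (Y : {Y // SameGenus X Y}) := (reduction A (N * c)).map (g Y) ≫ (θ Y).inv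
  have torsion_eq_zero {Y : A} (hY : SameGenus X Y) (e : Y ⟶ Y) (he : IsOfFinAddOrder e) :
      c • e = 0 := by
    obtain ⟨a₁, a₂, b₁, b₂, hab⟩ := hY.exists_id_eq_add
    refine nsmul_eq_zero_of_forall_isOfFinAddOrder hab hc fun b a => ?_
    exact (Preadditive.leftComp X b).isOfFinAddOrder <|
      (Preadditive.rightComp Y a).isOfFinAddOrder he
  have nonempty_iso {Y Y'} (h : invariant Y = invariant Y') : Nonempty (Y.1 ≅ Y'.1) :=
    nonempty_iso_of_reduction_iso N_pos c_pos (torsion_eq_zero Y.2) (torsion_eq_zero Y'.2)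
      (hfg Y) (hgf Y) (hfg Y') (hgf Y') ((θ Y).symm ≪≫ θ Y') <| by
        simpa [invariant] using (Iso.eq_comp_inv _).1 h
  have : Finite ((reduction A (N * c)).obj X ⟶ (reduction A (N * c)).obj X) :=
    finite_reduction_hom (by positivity) _ _
  let e := Finite.equivFin (Set.range invariant)
  choose F hF using fun i => (e.symm i).2
  refine ⟨_, fun i => F i, fun Y hY => ⟨e ⟨_, ⟨Y, hY⟩, rfl⟩, nonempty_iso (Y := ⟨Y, hY⟩) ?_⟩⟩
  rw [hF, e.symm_apply_apply]

end GenusClasses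

end StableIso

/-- In an additive category with finitely generated Hom groups, each stable
isomorphism class contains only finitely many isomorphism classes: for any
object `X` there are finitely many objects, up to isomorphism, that are stably
isomorphic to `X`. -/
theorem stmt_12 {A : Type*} [Category A] [Preadditive A] [HasFiniteBiproducts A]
    (hfg : ∀ X Y : A, AddGroup.FG (X ⟶ Y)) (X : A) :
    ∃ (n : ℕ) (f : Fin n → A),
      ∀ Y : A, (∃ Z : A, Nonempty (X ⊞ Z ≅ Y ⊞ Z)) → ∃ i, Nonempty (Y ≅ f i) := by
  have := hfg
  obtain ⟨n, F, hF⟩ := StableIso.SameGenus.finite_isoClasses X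
  exact ⟨n, F, fun Y ⟨_, ⟨φ⟩⟩ => hF Y (StableIso.SameGenus.of_biprod_iso φ)⟩
end
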